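/- arXiv:2411.02190 — 2 statements merged into one kernel-verified Lean document; each statement's English description precedes it below -/
import Mathlib

section
/- (Polynomial-order embedding bounds) Let ε = sup_{(P,q)∈D} max(|∂_P S(P,q)|, |∂_q S(P,q)|). For every integer m with 1 ≤ m < δ/(6ε) − d, setting C_m = 6(m+d)/δ, the following hold: ‖X_m‖_{D₁} ≤ 2ε; there is a Hamiltonian vector field X̂_m = J∇H_m on D₁ with ‖X̂_m‖_{D₁} ≤ 4ε; and ‖Φ_{X_m} − f‖_{D₀} ≤ 3 C_m^m ε^{m+1}, ‖Φ_{X̂_m} − f‖_{D₀} ≤ 5 C_m^m ε^{m+1}, ‖X̂_m − X_m‖_{D₁} ≤ 4 C_m^m ε^{m+1}. -/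
/-- Complex phase space `ℂ^d × ℂ^d ≅ ℂ^{2d}` with the sup norm. -/
abbrev CPhase (d : ℕ) := (Fin d → ℂ) × (Fin d → ℂ)

/-- Partial gradient `∂_P S` of `S` in the first block of `d` variables. -/
noncomputable def pGrad (d : ℕ) (S : CPhase d → ℂ) (x : CPhase d) : Fin d → ℂ :=
  fun i => fderiv ℂ S x (Pi.single i 1, 0)

/-- Partial gradient `∂_q S` of `S` in the second block of `d` variables. -/
noncomputable def qGrad (d : ℕ) (S : CPhase d → ℂ) (x : CPhase d) : Fin d → ℂ :=
  fun i => fderiv ℂ S x (0, Pi.single i 1)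

/-- The Hamiltonian vector field `J ∇H = (−∂_q H, ∂_p H)` of a Hamiltonian `H`. -/
noncomputable def hamVF (d : ℕ) (H : CPhase d → ℂ) (x : CPhase d) : CPhase d :=
  (-(qGrad d H x), pGrad d H x)

/-- Newton finite differences of a map `f`: `Δ₀(x) = x`,
`Δ_k(x) = Δ_{k−1}(f(x)) − Δ_{k−1}(x)`. -/
def finDiff {α : Type*} [AddCommGroup α] (f : α → α) : ℕ → α → α
  | 0, x => x
  | k + 1, x => finDiff f k (f x) - finDiff f k x

/-- The interpolating vector field of order `m`:
`X_m(x) = Σ_{k=1}^m ((−1)^{k−1}/k) Δ_k(x)`. -/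
noncomputable def interpVF (d : ℕ) (f : CPhase d → CPhase d) (m : ℕ) (x : CPhase d) :
    CPhase d :=
  ∑ k ∈ Finset.Icc 1 m, ((-1 : ℂ) ^ (k - 1) / k) • finDiff f k x

section Part1

/-- iterated forward differences of a sequence -/
def nd {E : Type*} [AddCommGroup E] (a : ℕ → E) : ℕ → ℕ → E
  | 0, j => a j
  | k + 1, j => nd a k (j + 1) - nd a k j

theorem finDiff_eq_nd {α : Type*} [AddCommGroup α] (f : α → α) (x : α) (k j : ℕ) :
    finDiff f k (f^[j] x) = nd (fun n => f^[n] x) k j := by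
  induction k generalizing j with
  | zero => rfl
  | succ k ih =>
    simp only [finDiff, nd]
    rw [← Function.iterate_succ_apply' f j x, ih, ih]

theorem nd_eq_fwdDiff {E : Type*} [AddCommGroup E] (a : ℕ → E) (k j : ℕ) :
    nd a k j = (fwdDiff 1)^[k] a j := by
  induction k generalizing j with
  | zero => rfl
  | succ k ih => rw [Function.iterate_succ_apply', fwdDiff, nd, ih, ih]

theorem nd_eq_sum {E : Type*} [AddCommGroup E] [Module ℂ E] (a : ℕ → E) (k : ℕ) :
    nd a k 0 = ∑ n ∈ Finset.range (k + 1), ((-1 : ℂ) ^ (k - n) * (k.choose n : ℂ)) • a n := by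
  rw [nd_eq_fwdDiff, fwdDiff_iter_eq_sum_shift]
  refine Finset.sum_congr rfl fun n _ => ?_
  have : ((-1 : ℂ) ^ (k - n) * (k.choose n : ℂ)) = (((-1 : ℤ) ^ (k - n) * (k.choose n : ℤ) : ℤ) : ℂ) := by
    push_cast; rfl
  rw [this, Int.cast_smul_eq_zsmul]
  simp

theorem nd_eq_sum_le {E : Type*} [AddCommGroup E] [Module ℂ E] (a : ℕ → E) {k m : ℕ} (h : k ≤ m) :
    nd a k 0 = ∑ n ∈ Finset.range (m + 1), ((-1 : ℂ) ^ (k - n) * (k.choose n : ℂ)) • a n := by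
  rw [nd_eq_sum]
  refine Finset.sum_subset (by intro n; simp; omega) fun n _ hn => ?_
  rw [Nat.choose_eq_zero_of_lt (by simpa using hn)]
  simp

theorem newton_eq {E : Type*} [AddCommGroup E] [Module ℂ E] (a : ℕ → E) {n m : ℕ} (h : n ≤ m) :
    a n = ∑ k ∈ Finset.range (m + 1), (n.choose k : ℂ) • nd a k 0 := by
  have := shift_eq_sum_fwdDiff_iter 1 a n 0
  simp only [smul_eq_mul, mul_one, zero_add] at this
  rw [this]
  refine (Finset.sum_subset (s₂ := Finset.range (m + 1)) (by intro n; simp; omega)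
    fun k _ hk => ?_).trans ?_
  · rw [Nat.choose_eq_zero_of_lt (by simpa using hk)]; simp
  · refine Finset.sum_congr rfl fun k _ => ?_
    rw [nd_eq_fwdDiff, Nat.cast_smul_eq_nsmul]

/-- numerical derivative at zero of order `m` -/
noncomputable def Dm {E : Type*} [AddCommGroup E] [Module ℂ E] (m : ℕ) (a : ℕ → E) : E :=
  ∑ k ∈ Finset.Icc 1 m, ((-1 : ℂ) ^ (k - 1) / k) • nd a k 0

noncomputable def kap (m n : ℕ) : ℂ :=
  ∑ k ∈ Finset.Icc 1 m, ((-1 : ℂ) ^ (k - 1) / k) * ((-1 : ℂ) ^ (k - n) * (k.choose n : ℂ))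

theorem Dm_eq_sum {E : Type*} [AddCommGroup E] [Module ℂ E] (m : ℕ) (a : ℕ → E) :
    Dm m a = ∑ n ∈ Finset.range (m + 1), kap m n • a n := by
  unfold Dm kap
  simp_rw [Finset.sum_smul]
  rw [Finset.sum_comm]
  refine Finset.sum_congr rfl fun k hk => ?_
  rw [nd_eq_sum_le a (Finset.mem_Icc.1 hk).2, Finset.smul_sum]
  simp_rw [smul_smul]

/-- binomial polynomial -/
noncomputable def bb (k : ℕ) : Polynomial ℂ :=
  Polynomial.C (1 / (k.factorial : ℂ)) * descPochhammer ℂ k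

theorem bb_eval_nat (k n : ℕ) : (bb k).eval (n : ℂ) = n.choose k := by
  rw [bb, Polynomial.eval_mul, Polynomial.eval_C, descPochhammer_eval_eq_descFactorial,
    Nat.descFactorial_eq_factorial_mul_choose]
  have : (k.factorial : ℂ) ≠ 0 := by exact_mod_cast k.factorial_ne_zero
  push_cast
  field_simp

theorem bb_natDegree (k : ℕ) : (bb k).natDegree ≤ k := by
  refine (Polynomial.natDegree_C_mul_le _ _).trans ?_
  rw [descPochhammer_natDegree]

theorem bb_zero : bb 0 = 1 := by simp [bb]

theorem bb_succ_eval (k : ℕ) (s : ℂ) :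
    (bb (k + 1)).eval s = (bb k).eval s * (s - k) / (k + 1) := by
  have : (k.factorial : ℂ) ≠ 0 := by exact_mod_cast k.factorial_ne_zero
  have h2 : (k : ℂ) + 1 ≠ 0 := by exact_mod_cast k.succ_ne_zero
  simp only [bb, Polynomial.eval_mul, Polynomial.eval_C, descPochhammer_succ_eval,
    Nat.factorial_succ]
  push_cast
  field_simp

theorem bb_succ_derivative (k : ℕ) (s : ℂ) :
    (bb (k + 1)).derivative.eval s
      = ((bb k).derivative.eval s * (s - k) + (bb k).eval s) / (k + 1) := by
  have : (k.factorial : ℂ) ≠ 0 := by exact_mod_cast k.factorial_ne_zero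
  have h2 : (k : ℂ) + 1 ≠ 0 := by exact_mod_cast k.succ_ne_zero
  simp only [bb, descPochhammer_succ_right, Nat.factorial_succ, Polynomial.derivative_mul,
    Polynomial.eval_mul, Polynomial.eval_add, Polynomial.eval_C, Polynomial.derivative_C,
    Polynomial.eval_sub, Polynomial.derivative_sub, Polynomial.derivative_X,
    Polynomial.eval_X, Polynomial.eval_natCast, Polynomial.derivative_natCast]
  push_cast
  simp
  field_simp

theorem bb_shift (k : ℕ) (s : ℂ) :
    (bb (k + 1)).eval (s + 1) - (bb (k + 1)).eval s = (bb k).eval s := by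
  induction k with
  | zero => simp [bb_succ_eval, bb_zero]
  | succ k ih =>
    have h2 : (k : ℂ) + 1 ≠ 0 := by exact_mod_cast k.succ_ne_zero
    have h3 : (k : ℂ) + 1 + 1 ≠ 0 := by exact_mod_cast (k+1).succ_ne_zero
    rw [bb_succ_eval (k + 1) (s + 1), bb_succ_eval (k + 1) s, eq_add_of_sub_eq ih,
      bb_succ_eval k s]
    push_cast
    field_simp
    ring

theorem bb_eval_zero (k : ℕ) (hk : 1 ≤ k) : (bb k).eval 0 = 0 := by
  have := bb_eval_nat k 0
  rw [Nat.choose_eq_zero_of_lt (by omega)] at this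
  simpa using this

theorem bb_derivative_zero (k : ℕ) (hk : 1 ≤ k) :
    (bb k).derivative.eval 0 = (-1 : ℂ) ^ (k - 1) / k := by
  induction k, hk using Nat.le_induction with
  | base => simp [bb]
  | succ k hk ih =>
    rw [bb_succ_derivative, ih, bb_eval_zero k hk]
    obtain ⟨j, rfl⟩ : ∃ j, k = j + 1 := ⟨k - 1, by omega⟩
    have h2 : (j : ℂ) + 1 ≠ 0 := by exact_mod_cast j.succ_ne_zero
    simp
    field_simp
    ring

theorem Dm_poly (m : ℕ) (Q : Polynomial ℂ) (hQ : Q.natDegree ≤ m) :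
    Dm m (fun n => Q.eval (n : ℂ)) = Q.derivative.eval 0 := by
  have key : Q = ∑ k ∈ Finset.range (m + 1),
      Polynomial.C (nd (fun n => Q.eval (n : ℂ)) k 0) * bb k := by
    refine Polynomial.eq_of_degrees_lt_of_eval_finset_eq
      ((Finset.range (m + 1)).map ⟨(Nat.cast : ℕ → ℂ), Nat.cast_injective⟩) ?_ ?_ ?_
    · rw [Finset.card_map, Finset.card_range]
      exact (Polynomial.degree_le_natDegree).trans_lt (by exact_mod_cast Nat.lt_succ_of_le hQ)
    · rw [Finset.card_map, Finset.card_range]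
      refine (Polynomial.degree_sum_le _ _).trans_lt ?_
      rw [Finset.sup_lt_iff (by exact WithBot.bot_lt_coe _)]
      intro k hk
      refine (Polynomial.degree_le_natDegree).trans_lt ?_
      have := (Polynomial.natDegree_C_mul_le (nd (fun n => Q.eval (n : ℂ)) k 0) (bb k)).trans
        (bb_natDegree k)
      have h2 := Finset.mem_range.1 hk
      exact_mod_cast lt_of_le_of_lt this h2
    · intro y hy
      simp only [Finset.mem_map, Finset.mem_range, Function.Embedding.coeFn_mk] at hy
      obtain ⟨n, hn, rfl⟩ := hy
      rw [Polynomial.eval_finsetSum]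
      simp only [Polynomial.eval_mul, Polynomial.eval_C, bb_eval_nat]
      rw [newton_eq (fun n => Q.eval (n : ℂ)) (Nat.lt_succ_iff.1 hn)]
      simp [mul_comm]
  conv_rhs => rw [key]
  rw [Polynomial.derivative_sum, Polynomial.eval_finsetSum, Finset.sum_range_succ']
  have h0 : (Polynomial.C (nd (fun n => Q.eval (n : ℂ)) 0 0) * bb 0).derivative.eval 0 = 0 := by
    simp [bb_zero]
  rw [h0, add_zero, Dm, Finset.sum_bij (s := Finset.Icc 1 m) (t := Finset.range m)
    (g := fun k => (Polynomial.C (nd (fun n => Q.eval (n : ℂ)) (k + 1) 0) *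
      bb (k + 1)).derivative.eval 0) (fun k _ => k - 1)]
  · intro k hk; simp at hk ⊢; omega
  · intro k hk l hl h; simp at hk hl; omega
  · intro k hk; exact ⟨k + 1, by simp at hk ⊢; omega, by simp⟩
  · intro k hk
    have hk1 := (Finset.mem_Icc.1 hk).1
    obtain ⟨j, rfl⟩ : ∃ j, k = j + 1 := ⟨k - 1, by omega⟩
    simp only [Nat.add_sub_cancel, Polynomial.derivative_mul, Polynomial.derivative_C, zero_mul,
      zero_add, Polynomial.eval_mul, Polynomial.eval_C]
    rw [bb_derivative_zero (j + 1) (by omega), smul_eq_mul, mul_comm]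
    simp

theorem Dm_shift (m k : ℕ) (hk : k ≤ m) (t : ℂ) :
    Dm m (fun n => (bb k).eval (t + n)) = (bb k).derivative.eval t := by
  have := Dm_poly m ((bb k).comp (Polynomial.X + Polynomial.C t)) (by
    refine Polynomial.natDegree_comp_le.trans ?_
    rw [Polynomial.natDegree_X_add_C, mul_one]
    exact (bb_natDegree k).trans hk)
  simp only [Polynomial.eval_comp, Polynomial.eval_add, Polynomial.eval_X, Polynomial.eval_C,
    Polynomial.derivative_comp] at this
  simpa [add_comm] using this

theorem Dm_leibniz (m k l : ℕ) (hk : 1 ≤ k) (hl : 1 ≤ l) (h : k + l ≤ m) :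
    Dm m (fun n => (n.choose k : ℂ) * (n.choose l : ℂ)) = 0 := by
  have := Dm_poly m (bb k * bb l) (by
    refine Polynomial.natDegree_mul_le.trans ?_
    have := bb_natDegree k
    have := bb_natDegree l
    omega)
  simp only [Polynomial.eval_mul, bb_eval_nat, Polynomial.derivative_mul, Polynomial.eval_add,
    bb_eval_zero k hk, bb_eval_zero l hl] at this
  simpa using this

/-- bound on `[0,1]` -/
theorem bb_bound_aux (k : ℕ) (t : ℝ) (h0 : 0 ≤ t) (h1 : t ≤ 1) :
    ∃ a b : ℝ, 0 ≤ a ∧ 0 ≤ b ∧ a + b ≤ 1 ∧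
      (bb (k + 1)).eval (t : ℂ) = (((-1) ^ k * t * a / (k + 1) : ℝ) : ℂ) ∧
      (bb (k + 1)).derivative.eval (t : ℂ) = (((-1) ^ k * (a - b) / (k + 1) : ℝ) : ℂ) := by
  induction k with
  | zero => exact ⟨1, 0, by norm_num, by norm_num, by norm_num, by simp [bb], by simp [bb]⟩
  | succ k ih =>
    obtain ⟨a, b, ha, hb, hab, e1, e2⟩ := ih
    have hk : (0 : ℝ) < k + 1 := by positivity
    set s : ℝ := t / (k + 1) with hs
    have hts : t = s * (k + 1) := by rw [hs]; field_simp
    have hs0 : 0 ≤ s := by positivity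
    have hs1 : s ≤ 1 := by rw [hs, div_le_one hk]; have : (0:ℝ) ≤ k := by positivity
                           linarith
    have h2 : (k : ℂ) + 1 ≠ 0 := by exact_mod_cast k.succ_ne_zero
    have h3 : (k : ℂ) + 1 + 1 ≠ 0 := by exact_mod_cast (k+1).succ_ne_zero
    refine ⟨a * (1 - s), b * (1 - s) + a * s, mul_nonneg ha (by linarith), 
      add_nonneg (mul_nonneg hb (by linarith)) (mul_nonneg ha hs0), ?_, ?_, ?_⟩
    · nlinarith
    · rw [bb_succ_eval, e1, hts]
      push_cast
      field_simp
      ring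
    · rw [bb_succ_derivative, e1, e2, hts]
      push_cast
      field_simp
      ring

theorem bb_bound (k : ℕ) (hk : 1 ≤ k) (t : ℝ) (h0 : 0 ≤ t) (h1 : t ≤ 1) :
    ‖(bb k).eval (t : ℂ)‖ ≤ 1 / k ∧ ‖(bb k).derivative.eval (t : ℂ)‖ ≤ 1 / k := by
  obtain ⟨j, rfl⟩ : ∃ j, k = j + 1 := ⟨k - 1, by omega⟩
  obtain ⟨a, b, ha, hb, hab, e1, e2⟩ := bb_bound_aux j t h0 h1
  have hj : (0 : ℝ) < j + 1 := by positivity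
  rw [e1, e2, Complex.norm_real, Complex.norm_real, Real.norm_eq_abs, Real.norm_eq_abs]
  simp only [abs_div, abs_mul, abs_pow, abs_neg, abs_one, one_pow, one_mul, abs_of_pos hj]
  push_cast
  constructor
  · gcongr
    rw [abs_of_nonneg h0, abs_of_nonneg ha]
    nlinarith
  · gcongr
    rw [abs_le]; constructor <;> linarith

theorem bb_crude (k : ℕ) (s : ℂ) : ‖(bb k).eval s‖ ≤ (‖s‖ + k) ^ k := by
  induction k with
  | zero => simp [bb_zero]
  | succ k ih =>
    rw [bb_succ_eval, norm_div, norm_mul]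
    have h1 : ‖(k : ℂ) + 1‖ = k + 1 := by
      have : ((k : ℂ) + 1) = ((k + 1 : ℕ) : ℂ) := by push_cast; rfl
      rw [this, Complex.norm_natCast]; push_cast; rfl
    have h2 : ‖s - k‖ ≤ ‖s‖ + k := (norm_sub_le _ _).trans (by simp)
    have h3 : ‖s‖ + k ≤ ‖s‖ + (k + 1 : ℕ) := by push_cast; linarith
    rw [h1]
    calc ‖(bb k).eval s‖ * ‖s - k‖ / (k + 1) ≤ ‖(bb k).eval s‖ * ‖s - k‖ := by
          apply div_le_self (by positivity)
          have : (0:ℝ) ≤ k := by positivity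
          linarith
      _ ≤ (‖s‖ + k) ^ k * (‖s‖ + k) := by gcongr
      _ = (‖s‖ + k) ^ (k + 1) := by ring
      _ ≤ _ := by gcongr

theorem nd_step_bound {E : Type*} [NormedAddCommGroup E] (a : ℕ → E) (K : ℝ) (m : ℕ)
    (h : ∀ n < m, ‖a (n + 1) - a n‖ ≤ K) (k j : ℕ) (hkj : k + 1 + j ≤ m) :
    ‖nd a (k + 1) j‖ ≤ 2 ^ k * K := by
  induction k generalizing j with
  | zero => simpa [nd] using h j (by omega)
  | succ k ih =>
    rw [nd]
    refine (norm_sub_le _ _).trans ((add_le_add (ih (j + 1) (by omega)) (ih j (by omega))).trans ?_)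
    rw [pow_succ]; linarith

theorem nd_sq_bound {E : Type*} [NormedAddCommGroup E] (a : ℕ → E) (K : ℝ) (m : ℕ)
    (h : ∀ n ≤ m, ‖a n‖ ≤ n ^ 2 * K) (k j : ℕ) (hkj : k + j ≤ m) :
    ‖nd a k j‖ ≤ 2 ^ k * (j ^ 2 + j * k + k * (k + 1) / 4) * K := by
  induction k generalizing j with
  | zero => simpa [nd] using h j (by omega)
  | succ k ih =>
    rw [nd]
    refine (norm_sub_le _ _).trans ((add_le_add (ih (j + 1) (by omega)) (ih j (by omega))).trans ?_)
    apply le_of_eq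
    push_cast
    ring

theorem nd_norm_le_max {E : Type*} [NormedAddCommGroup E] (a : ℕ → E) (K : ℝ) (hK : 0 ≤ K) (m : ℕ)
    (h : ∀ n ≤ m, ‖a n‖ ≤ n ^ 2 * K) [Module ℂ E] [NormSMulClass ℂ E] :
    ‖Dm m a‖ ≤ m * 2 ^ m / 2 * K := by
  have : ‖Dm m a‖ ≤ ∑ k ∈ Finset.Icc 1 m, (2 : ℝ) ^ k * (k + 1) / 4 * K := by
    unfold Dm
    refine norm_sum_le_of_le _ fun k hk => ?_
    have hk1 := (Finset.mem_Icc.1 hk).1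
    have hk0 : (0 : ℝ) < k := by exact_mod_cast hk1
    rw [norm_smul, norm_div, norm_pow, norm_neg, norm_one, one_pow, Complex.norm_natCast]
    have := nd_sq_bound a K m h k 0 (by have := (Finset.mem_Icc.1 hk).2; omega)
    calc 1 / (k : ℝ) * ‖nd a k 0‖ ≤ 1 / (k : ℝ) * (2 ^ k * (k * (k + 1) / 4) * K) := by
          gcongr; simpa using this
      _ = _ := by field_simp
  refine this.trans (le_of_eq ?_)
  clear this h
  induction m with
  | zero => simp
  | succ m ih =>
    rw [Finset.sum_Icc_succ_top (by omega), ih]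
    push_cast
    ring

end Part1

section Part2

attribute [local fun_prop] analyticAt_fst analyticAt_snd

theorem cauchy_bound {E F : Type*} [NormedAddCommGroup E] [NormedSpace ℂ E]
    [NormedAddCommGroup F] [NormedSpace ℂ F] {f : E → F} {c : E} {R M : ℝ} (hR : 0 < R)
    (hd : DifferentiableOn ℂ f (Metric.ball c R)) (hb : ∀ y ∈ Metric.ball c R, ‖f y‖ ≤ M) :
    ‖fderiv ℂ f c‖ ≤ M / R := by
  have hM : 0 ≤ M := (norm_nonneg _).trans (hb c (Metric.mem_ball_self hR))
  refine ContinuousLinearMap.opNorm_le_bound _ (by positivity) fun v => ?_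
  rcases eq_or_ne v 0 with rfl | hv
  · simp
  have hv' : 0 < ‖v‖ := norm_pos_iff.2 hv
  have hdc : DifferentiableAt ℂ f c := hd.differentiableAt (Metric.ball_mem_nhds c hR)
  have key : ∀ R' : ℝ, 0 < R' → R' < R → ‖fderiv ℂ f c v‖ * R' ≤ M * ‖v‖ := by
    intro R' h0 h1
    have hmap : ∀ z ∈ Metric.closedBall (0 : ℂ) (R' / ‖v‖), c + z • v ∈ Metric.ball c R := by
      intro z hz
      rw [Metric.mem_ball, dist_eq_norm, add_sub_cancel_left, norm_smul]
      rw [mem_closedBall_zero_iff, le_div_iff₀ hv'] at hz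
      exact hz.trans_lt h1
    have hcl : DiffContOnCl ℂ (fun z : ℂ => f (c + z • v)) (Metric.ball 0 (R' / ‖v‖)) := by
      apply DifferentiableOn.diffContOnCl
      rw [closure_ball _ (by positivity)]
      refine hd.comp (f := fun z : ℂ => c + z • v) ?_ hmap
      exact Differentiable.differentiableOn (by fun_prop)
    have := Complex.norm_deriv_le_of_forall_mem_sphere_norm_le (C := M)
      (show 0 < R' / ‖v‖ by positivity) hcl
      (fun z hz => hb _ (hmap z (Metric.sphere_subset_closedBall hz)))
    have hder : HasDerivAt (fun z : ℂ => f (c + z • v)) (fderiv ℂ f c v) 0 := by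
      have h1 : HasDerivAt (fun z : ℂ => c + z • v) v 0 := by
        simpa using ((hasDerivAt_id (0 : ℂ)).smul_const v).const_add c
      refine HasFDerivAt.comp_hasDerivAt (0 : ℂ) (l := f) (f := fun z : ℂ => c + z • v) ?_ h1
      simpa using hdc.hasFDerivAt
    rw [hder.deriv, le_div_iff₀ (by positivity)] at this
    rw [← mul_div_assoc, div_le_iff₀ hv'] at this
    exact this
  rw [div_mul_eq_mul_div, le_div_iff₀ hR]
  have hc : ContinuousWithinAt (fun R' : ℝ => ‖fderiv ℂ f c v‖ * R') (Set.Iio R) R := by fun_prop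
  refine le_of_tendsto hc.tendsto ?_
  filter_upwards [Ioo_mem_nhdsLT hR] with R' h
  exact key R' h.1 h.2

theorem lip_bound {E F : Type*} [NormedAddCommGroup E] [NormedSpace ℂ E]
    [NormedAddCommGroup F] [NormedSpace ℂ F] {f : E → F} {c : E} {a r M : ℝ} (hr : 0 < r)
    (hd : DifferentiableOn ℂ f (Metric.ball c (a + r)))
    (hb : ∀ y ∈ Metric.ball c (a + r), ‖f y‖ ≤ M) {x y : E}
    (hx : ‖x - c‖ ≤ a) (hy : ‖y - c‖ ≤ a) : ‖f y - f x‖ ≤ M / r * ‖y - x‖ := by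
  let _ : NormedSpace ℝ E := NormedSpace.restrictScalars ℝ ℂ E
  have hsub : ∀ z ∈ Metric.closedBall c a, Metric.ball z r ⊆ Metric.ball c (a + r) := by
    intro z hz
    apply Metric.ball_subset_ball'
    rw [Metric.mem_closedBall] at hz
    linarith
  refine Convex.norm_image_sub_le_of_norm_fderiv_le (𝕜 := ℂ) (s := Metric.closedBall c a)
    (fun z hz => ?_) (fun z hz => ?_) (convex_closedBall c a) ?_ ?_
  · exact hd.differentiableAt (Filter.mem_of_superset (Metric.ball_mem_nhds z hr) (hsub z hz))
  · exact cauchy_bound hr (hd.mono (hsub z hz)) fun y hy => hb y (hsub z hz hy)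
  · simpa [dist_eq_norm] using hx
  · simpa [dist_eq_norm] using hy

theorem implicit_family {V : Type*} [NormedAddCommGroup V] [NormedSpace ℂ V] [CompleteSpace V]
    (ρ : V × V → ℝ) (hρ : ∀ x y, ρ x ≤ ρ y + ‖x - y‖) (δ ε : ℝ) (hε : 0 < ε)
    (a b : V × V → V) (ha : ∀ x, ρ x ≤ δ → AnalyticAt ℂ a x) (hb : ∀ x, ρ x ≤ δ → AnalyticAt ℂ b x)
    (hae : ∀ x, ρ x ≤ δ → ‖a x‖ ≤ ε) (hbe : ∀ x, ρ x ≤ δ → ‖b x‖ ≤ ε) :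
    ∃ F : ℂ → V × V → V × V, ∀ μ x, ρ x + 2 * ‖μ‖ * ε < δ →
      AnalyticAt ℂ (fun z : ℂ × (V × V) => F z.1 z.2) (μ, x) ∧
      ‖F μ x - x‖ ≤ ‖μ‖ * ε ∧
      x.1 = (F μ x).1 + μ • b ((F μ x).1, x.2) ∧
      (F μ x).2 = x.2 + μ • a ((F μ x).1, x.2) ∧
      ∀ P, ρ (P, x.2) ≤ δ → P = x.1 - μ • b (P, x.2) → P = (F μ x).1 := by
  -- uniqueness in the whole domain
  have hclose : ∀ (μ : ℂ) (x : V × V) (P : V), ρ (P, x.2) ≤ δ → P = x.1 - μ • b (P, x.2) →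
      ‖P - x.1‖ ≤ ‖μ‖ * ε := by
    intro μ x P h1 h2
    have : P - x.1 = -(μ • b (P, x.2)) := by
      nth_rewrite 1 [h2]; abel
    rw [this, norm_neg, norm_smul]
    gcongr
    exact hbe _ h1
  have hin : ∀ (μ : ℂ) (x : V × V) (P : V), ‖P - x.1‖ ≤ ‖μ‖ * ε → ρ (P, x.2) ≤ ρ x + ‖μ‖ * ε := by
    intro μ x P h
    refine (hρ (P, x.2) x).trans ?_
    have : ‖(P, x.2) - x‖ = ‖P - x.1‖ := by simp [Prod.norm_def]
    linarith
  have hlip : ∀ (μ : ℂ) (x : V × V), ρ x + 2 * ‖μ‖ * ε < δ → ∀ P P' : V, ‖P - x.1‖ ≤ ‖μ‖ * ε →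
      ‖P' - x.1‖ ≤ ‖μ‖ * ε →
      ‖b (P', x.2) - b (P, x.2)‖ ≤ ε / (δ - ρ x - ‖μ‖ * ε) * ‖P' - P‖ := by
    intro μ x h P P' hP hP'
    have h0 : 0 ≤ ‖μ‖ * ε := by positivity
    have hball : ∀ y ∈ Metric.ball x (‖μ‖ * ε + (δ - ρ x - ‖μ‖ * ε)), ρ y ≤ δ := by
      intro y hy
      rw [mem_ball_iff_norm] at hy
      linarith [hρ y x]
    have := lip_bound (f := b) (c := x) (a := ‖μ‖ * ε) (r := δ - ρ x - ‖μ‖ * ε) (M := ε)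
      (by linarith) (fun y hy => (hb y (hball y hy)).differentiableAt.differentiableWithinAt)
      (fun y hy => hbe y (hball y hy)) (x := (P, x.2)) (y := (P', x.2))
      (by simpa [Prod.norm_def] using hP) (by simpa [Prod.norm_def] using hP')
    simpa [Prod.norm_def] using this
  have hkap : ∀ (μ : ℂ) (x : V × V), ρ x + 2 * ‖μ‖ * ε < δ →
      ‖μ‖ * (ε / (δ - ρ x - ‖μ‖ * ε)) < 1 ∧ 0 < δ - ρ x - ‖μ‖ * ε := by
    intro μ x h
    have h0 : 0 ≤ ‖μ‖ * ε := by positivity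
    have : 0 < δ - ρ x - ‖μ‖ * ε := by linarith
    refine ⟨?_, this⟩
    rw [← mul_div_assoc, div_lt_one this]
    linarith
  have huniq : ∀ (μ : ℂ) (x : V × V), ρ x + 2 * ‖μ‖ * ε < δ → ∀ P P' : V,
      ρ (P, x.2) ≤ δ → P = x.1 - μ • b (P, x.2) → ρ (P', x.2) ≤ δ → P' = x.1 - μ • b (P', x.2) →
      P' = P := by
    intro μ x h P P' h1 h2 h1' h2'
    have hl := hlip μ x h P P' (hclose μ x P h1 h2) (hclose μ x P' h1' h2')
    have e : P' - P = -(μ • (b (P', x.2) - b (P, x.2))) := by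
      nth_rewrite 1 [h2, h2']; rw [smul_sub]; abel
    have hn : ‖P' - P‖ ≤ ‖μ‖ * (ε / (δ - ρ x - ‖μ‖ * ε)) * ‖P' - P‖ := by
      nth_rewrite 1 [e]
      rw [norm_neg, norm_smul, mul_assoc]
      gcongr
    have hk := (hkap μ x h).1
    have : ‖P' - P‖ = 0 := by
      by_contra hne
      have : 0 < ‖P' - P‖ := lt_of_le_of_ne (norm_nonneg _) (Ne.symm hne)
      nlinarith
    exact sub_eq_zero.1 (norm_eq_zero.1 this)
  have hex : ∀ (μ : ℂ) (x : V × V), ρ x + 2 * ‖μ‖ * ε < δ → ∃ P : V, ρ (P, x.2) ≤ δ ∧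
      P = x.1 - μ • b (P, x.2) := by
    intro μ x h
    have h0 : 0 ≤ ‖μ‖ * ε := by positivity
    have hk := hkap μ x h
    have hmaps : Set.MapsTo (fun P => x.1 - μ • b (P, x.2)) (Metric.closedBall x.1 (‖μ‖ * ε))
        (Metric.closedBall x.1 (‖μ‖ * ε)) := by
      intro P hP
      rw [mem_closedBall_iff_norm] at hP ⊢
      have : x.1 - μ • b (P, x.2) - x.1 = -(μ • b (P, x.2)) := by abel
      rw [this, norm_neg, norm_smul]
      gcongr
      apply hbe
      linarith [hin μ x P hP]
    have hcon : ContractingWith (Real.toNNReal (‖μ‖ * (ε / (δ - ρ x - ‖μ‖ * ε))))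
        (Set.MapsTo.restrict _ _ _ hmaps) := by
      constructor
      · rw [← Real.toNNReal_one]
        exact (Real.toNNReal_lt_toNNReal_iff one_pos).2 hk.1
      · refine LipschitzWith.of_dist_le_mul fun P P' => ?_
        have hc : 0 ≤ ‖μ‖ * (ε / (δ - ρ x - ‖μ‖ * ε)) :=
          mul_nonneg (norm_nonneg _) (div_nonneg hε.le hk.2.le)
        rw [Real.coe_toNNReal _ hc, Subtype.dist_eq, Subtype.dist_eq, dist_eq_norm, dist_eq_norm]
        simp only [Set.MapsTo.val_restrict_apply]
        have := hlip μ x h P' P (mem_closedBall_iff_norm.1 P'.2) (mem_closedBall_iff_norm.1 P.2)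
        rw [sub_sub_sub_cancel_left, ← smul_sub, norm_smul, norm_sub_rev, mul_assoc]
        gcongr
    obtain ⟨P, hP, hfix, -⟩ := ContractingWith.exists_fixedPoint' (x := x.1)
      (Metric.isClosed_closedBall.isComplete) hmaps hcon (by simpa using h0) (edist_ne_top _ _)
    refine ⟨P, ?_, hfix.symm⟩
    linarith [hin μ x P (mem_closedBall_iff_norm.1 hP)]
  classical
  choose! Pf hPf using hex
  refine ⟨fun μ x => (Pf μ x, x.2 + μ • a (Pf μ x, x.2)), fun μ x h => ?_⟩
  have hμ0 : 0 ≤ ‖μ‖ * ε := by positivity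
  have hP := hPf μ x h
  have hPc := hclose μ x _ hP.1 hP.2
  have hρc : Continuous ρ := by
    refine LipschitzWith.continuous (K := 1) (LipschitzWith.of_dist_le_mul fun x y => ?_)
    rw [dist_eq_norm, dist_eq_norm, Real.norm_eq_abs, abs_le]
    have h1 := hρ x y
    have h2 := hρ y x
    rw [norm_sub_rev] at h2
    simp only [NNReal.coe_one, one_mul]
    constructor <;> linarith
  have hPin : ρ (Pf μ x, x.2) < δ := by linarith [hin μ x _ hPc]
  -- analyticity of Pf
  have hPan : AnalyticAt ℂ (fun z : ℂ × (V × V) => Pf z.1 z.2) (μ, x) := by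
    set Θ : (ℂ × (V × V)) × V → V := fun w => w.2 - w.1.2.1 + w.1.1 • b (w.2, w.1.2.2) with hΘ
    have hban : AnalyticAt ℂ (fun w : (ℂ × (V × V)) × V => b (w.2, w.1.2.2))
        ((μ, x), Pf μ x) := by
      have hb1 : AnalyticAt ℂ b (Pf μ x, x.2) := hb _ hP.1
      exact AnalyticAt.fun_comp (f := fun w : (ℂ × (V × V)) × V => (w.2, w.1.2.2)) hb1 (by fun_prop)
    have hΘan : AnalyticAt ℂ Θ ((μ, x), Pf μ x) := by
      have h1 : AnalyticAt ℂ (fun w : (ℂ × (V × V)) × V => w.1.1) ((μ, x), Pf μ x) := by fun_prop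
      have h2 : AnalyticAt ℂ (fun w : (ℂ × (V × V)) × V => w.2 - w.1.2.1) ((μ, x), Pf μ x) := by
        fun_prop
      exact h2.add (h1.smul hban)
    have hcd : ContDiffAt ℂ ⊤ Θ ((μ, x), Pf μ x) := hΘan.contDiffAt
    have hbd : ‖fderiv ℂ b (Pf μ x, x.2)‖ ≤ ε / (δ - ρ x - ‖μ‖ * ε) := by
      have hball : ∀ y ∈ Metric.ball (Pf μ x, x.2) (δ - ρ x - ‖μ‖ * ε), ρ y ≤ δ := by
        intro y hy
        rw [mem_ball_iff_norm] at hy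
        linarith [hρ y (Pf μ x, x.2), hin μ x _ hPc]
      exact cauchy_bound (hkap μ x h).2
        (fun y hy => (hb y (hball y hy)).differentiableAt.differentiableWithinAt)
        fun y hy => hbe y (hball y hy)
    set T : V →L[ℂ] V := -(μ • (fderiv ℂ b (Pf μ x, x.2) ∘L ContinuousLinearMap.inl ℂ V V)) with hT
    have hTn : ‖T‖ < 1 := by
      rw [hT, norm_neg, norm_smul]
      refine lt_of_le_of_lt ?_ (hkap μ x h).1
      gcongr
      refine (ContinuousLinearMap.opNorm_comp_le _ _).trans ?_
      refine le_trans ?_ hbd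
      refine mul_le_of_le_one_right (norm_nonneg _) ?_
      exact ContinuousLinearMap.norm_inl_le_one ℂ V V
    have hpart : fderiv ℂ Θ ((μ, x), Pf μ x) ∘L ContinuousLinearMap.inr ℂ (ℂ × (V × V)) V
        = 1 - T := by
      have h1 : HasFDerivAt (fun P : V => ((μ, x), P))
          (ContinuousLinearMap.inr ℂ (ℂ × (V × V)) V) (Pf μ x) := hasFDerivAt_prodMk_right _ _
      have h2 := (hΘan.differentiableAt.hasFDerivAt).comp (Pf μ x) h1
      have h3 : HasFDerivAt (fun P : V => b (P, x.2))
          (fderiv ℂ b (Pf μ x, x.2) ∘L ContinuousLinearMap.inl ℂ V V) (Pf μ x) :=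
        ((hb _ hP.1).differentiableAt.hasFDerivAt).comp (Pf μ x) (hasFDerivAt_prodMk_left _ _)
      have h4 : HasFDerivAt (fun P : V => P - x.1 + μ • b (P, x.2)) (1 - T) (Pf μ x) := by
        rw [hT, sub_neg_eq_add]
        exact ((hasFDerivAt_id (Pf μ x)).sub_const x.1).add (h3.const_smul μ)
      exact h2.unique h4
    have hinv : (fderiv ℂ Θ ((μ, x), Pf μ x) ∘L
        ContinuousLinearMap.inr ℂ (ℂ × (V × V)) V).IsInvertible := by
      rw [hpart]
      exact ⟨ContinuousLinearEquiv.unitsEquiv ℂ V (Units.oneSub T hTn), rfl⟩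
    have hne : (⊤ : WithTop ℕ∞) ≠ 0 := by simp
    have himp := (hcd.contDiffAt_implicitFunction hne hinv).analyticAt
    refine himp.congr ?_
    have hΘ0 : Θ ((μ, x), Pf μ x) = 0 := by
      simp only [hΘ]; nth_rewrite 1 [hP.2]; abel
    have hev := hcd.eventually_apply_implicitFunction hne hinv
    have hself := hcd.implicitFunction_apply_self hne hinv
    set φ := hcd.implicitFunction hne hinv with hφ
    have hcont : ContinuousAt φ (μ, x) := himp.continuousAt
    have hev2 : ∀ᶠ z : ℂ × (V × V) in nhds (μ, x), ρ (φ z, z.2.2) < δ := by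
      have hc2 : ContinuousAt (fun z : ℂ × (V × V) => ρ (φ z, z.2.2)) (μ, x) :=
        hρc.continuousAt.comp (hcont.prodMk (by fun_prop))
      apply hc2.eventually_lt continuousAt_const
      simpa [hself] using hPin
    have hev3 : ∀ᶠ z : ℂ × (V × V) in nhds (μ, x), ρ z.2 + 2 * ‖z.1‖ * ε < δ := by
      have hc2 : ContinuousAt (fun z : ℂ × (V × V) => ρ z.2 + 2 * ‖z.1‖ * ε) (μ, x) := by
        fun_prop
      exact hc2.eventually_lt continuousAt_const h
    filter_upwards [hev, hev2, hev3] with z hz1 hz2 hz3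
    have hq := hPf z.1 z.2 hz3
    refine huniq z.1 z.2 hz3 _ _ hq.1 hq.2 hz2.le ?_
    rw [hΘ0] at hz1
    simp only [hΘ] at hz1
    rw [eq_sub_iff_add_eq]
    rw [← sub_eq_zero]
    rw [← hz1]
    abel
  refine ⟨?_, ?_, ?_, rfl, fun P h1 h2 => huniq μ x h _ _ hP.1 hP.2 h1 h2⟩
  · have haan : AnalyticAt ℂ (fun z : ℂ × (V × V) => a (Pf z.1 z.2, z.2.2)) (μ, x) := by
      have h1 : AnalyticAt ℂ (fun z : ℂ × (V × V) => (Pf z.1 z.2, z.2.2)) (μ, x) :=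
        hPan.prod (by fun_prop)
      exact AnalyticAt.fun_comp (ha _ hP.1) h1
    have h1 : AnalyticAt ℂ (fun w : (ℂ × (V × V)) => w.1) (μ, x) := by fun_prop
    have h2 : AnalyticAt ℂ (fun w : (ℂ × (V × V)) => w.2.2) (μ, x) := by fun_prop
    exact hPan.prod (h2.add (h1.smul haan))
  · rw [Prod.norm_def]
    refine max_le hPc ?_
    simp only [Prod.snd_sub, add_sub_cancel_left, norm_smul]
    gcongr
    exact hae _ hP.1
  · simp only
    nth_rewrite 1 [hP.2]; abel

end Part2

section Part3

attribute [local fun_prop] analyticAt_fst analyticAt_snd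

open Asymptotics Filter Topology

/-- near-identity analytic family -/
structure Fam {E : Type*} [NormedAddCommGroup E] [NormedSpace ℂ E] (ρ : E → ℝ) (δ ε : ℝ)
    (F : ℂ → E → E) : Prop where
  lip : ∀ x y, ρ x ≤ ρ y + ‖x - y‖
  pos : 0 < ε
  an : ∀ μ x, ρ x + 2 * ‖μ‖ * ε < δ → AnalyticAt ℂ (fun z : ℂ × E => F z.1 z.2) (μ, x)
  dist : ∀ μ x, ρ x + 2 * ‖μ‖ * ε < δ → ‖F μ x - x‖ ≤ ‖μ‖ * ε

theorem schwarz {F : Type*} [NormedAddCommGroup F] [NormedSpace ℂ F] {φ : ℂ → F} {R M : ℝ}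
    {k : ℕ} (hk : 1 ≤ k) (hd : DifferentiableOn ℂ φ (Metric.ball 0 R))
    (hM : ∀ z ∈ Metric.ball (0 : ℂ) R, ‖φ z‖ ≤ M) (hO : φ =O[𝓝 0] fun z => z ^ k)
    {z : ℂ} (hz : ‖z‖ < R) : ‖φ z‖ ≤ M * (‖z‖ / R) ^ k := by
  obtain ⟨j, rfl⟩ : ∃ j, k = j + 1 := ⟨k - 1, by omega⟩
  have h0 : φ 0 = 0 := by
    obtain ⟨C, hC⟩ := hO.bound
    have := hC.self_of_nhds
    simpa using this
  have hlit : (fun w => φ w - φ 0) =o[𝓝 0] fun w => ‖w - 0‖ ^ j := by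
    simp only [h0, sub_zero]
    refine hO.trans_isLittleO ?_
    refine IsLittleO.norm_right (g' := fun w : ℂ => w ^ j) ?_ |>.congr_right (fun w => norm_pow w j)
    exact isLittleO_pow_pow (Nat.lt_succ_self j)
  have := Complex.dist_le_mul_div_pow_of_mapsTo_ball_of_isLittleO (R₂ := M) hd
    (fun w hw => by rw [h0, mem_closedBall_zero_iff]; exact hM w hw) hlit
    (show z ∈ Metric.ball (0 : ℂ) R by simpa using hz)
  simpa [h0] using this

theorem nd_shift {E : Type*} [AddCommGroup E] (a : ℕ → E) (k j : ℕ) :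
    nd a k (j + 1) = nd (fun n => a (n + 1)) k j := by
  induction k generalizing j with
  | zero => rfl
  | succ k ih => rw [nd, nd, ih, ih]

theorem multi_zero {F : Type*} [NormedAddCommGroup F] [NormedSpace ℂ F] [CompleteSpace F] (n : ℕ) :
    ∀ (h : ℂ → F) (T M : ℝ), (n : ℝ) ^ 2 < T → DifferentiableOn ℂ h (Metric.ball 0 T) →
    (∀ s ∈ Metric.ball (0 : ℂ) T, ‖h s‖ ≤ M) → (∀ j < n, h (j : ℂ) = 0) →
    ∀ s : ℂ, ‖s‖ < T - (n : ℝ) ^ 2 → ‖h s‖ ≤ M * ((‖s‖ + n) / (T - (n : ℝ) ^ 2)) ^ n := by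
  induction n with
  | zero =>
    intro h T M hT hd hM hz s hs
    simpa using hM s (by simpa using hs)
  | succ n ih =>
    intro h T M hT hd hM hz s hs
    push_cast at hT hs ⊢
    have hn0 : (0 : ℝ) ≤ n := Nat.cast_nonneg n
    have hnT : (n : ℝ) < T := by nlinarith
    have hM0 : 0 ≤ M := (norm_nonneg _).trans (hM 0 (by simpa using hn0.trans_lt hnT))
    have hmem : (n : ℂ) ∈ Metric.ball (0 : ℂ) T := by simpa using hnT
    have hgd : DifferentiableOn ℂ (dslope h n) (Metric.ball 0 T) :=
      (Complex.differentiableOn_dslope (Metric.isOpen_ball.mem_nhds hmem)).2 hd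
    have hn : h n = 0 := hz n (Nat.lt_succ_self n)
    have hsub : Metric.ball (n : ℂ) (T - n) ⊆ Metric.ball 0 T := by
      apply Metric.ball_subset_ball'; simp
    have hsub2 : Metric.ball (0 : ℂ) (T - 2 * n) ⊆ Metric.ball (n : ℂ) (T - n) := by
      apply Metric.ball_subset_ball'; simp; linarith
    have hgb : ∀ z ∈ Metric.ball (0 : ℂ) (T - 2 * n), ‖dslope h n z‖ ≤ M / (T - n) := by
      intro z hz
      refine Complex.norm_dslope_le_div_of_mapsTo_ball (hd.mono hsub) ?_ (hsub2 hz)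
      intro w hw
      rw [hn, mem_closedBall_zero_iff]
      exact hM w (hsub hw)
    have := ih (dslope h n) (T - 2 * n) (M / (T - n)) (by nlinarith)
      (hgd.mono (Metric.ball_subset_ball (by linarith))) hgb
      (fun j hj => by
        have : (j : ℂ) ≠ n := by exact_mod_cast hj.ne
        rw [dslope_of_ne _ this, slope_def_module, hn, hz j (by omega)]; simp)
      s (by nlinarith)
    have e : h s = (s - n) • dslope h n s := by
      rw [sub_smul_dslope, hn, sub_zero]
    rw [e, norm_smul]
    have h1 : ‖s - n‖ ≤ ‖s‖ + (n + 1) := (norm_sub_le _ _).trans (by simp)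
    have hpos : 0 < T - ((n : ℝ) + 1) ^ 2 := by linarith
    have hs0 : 0 ≤ ‖s‖ := norm_nonneg _
    calc ‖s - n‖ * ‖dslope h n s‖
        ≤ (‖s‖ + (n + 1)) * (M / (T - n) * ((‖s‖ + n) / (T - 2 * n - (n : ℝ) ^ 2)) ^ n) := by
          gcongr
      _ ≤ (‖s‖ + (n + 1)) * (M / (T - (n + 1) ^ 2) *
            ((‖s‖ + (n + 1)) / (T - (n + 1) ^ 2)) ^ n) := by
          have h2 : 0 ≤ (‖s‖ + n) / (T - 2 * n - (n : ℝ) ^ 2) := by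
            apply div_nonneg (by positivity); nlinarith
          have h3 : T - ((n : ℝ) + 1) ^ 2 ≤ T - n := by nlinarith
          have h4 : T - ((n : ℝ) + 1) ^ 2 ≤ T - 2 * n - (n : ℝ) ^ 2 := by nlinarith
          have h5 : ‖s‖ + (n : ℝ) ≤ ‖s‖ + (n + 1) := by linarith
          have h6 : (‖s‖ + n) / (T - 2 * n - (n : ℝ) ^ 2) ≤
            (‖s‖ + (n + 1)) / (T - (n + 1) ^ 2) := div_le_div₀ (by positivity) h5 hpos h4
          have h7 : M / (T - n) ≤ M / (T - (n + 1) ^ 2) :=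
            div_le_div_of_nonneg_left hM0 hpos h3
          have h8 : 0 ≤ M / (T - (n + 1) ^ 2) := by positivity
          gcongr
      _ = _ := by
          rw [pow_succ]; ring

section fam
variable {E : Type*} [NormedAddCommGroup E] [NormedSpace ℂ E] {ρ : E → ℝ} {δ ε : ℝ}
  {F : ℂ → E → E}

theorem Fam.iter_dist (h : Fam ρ δ ε F) (n : ℕ) (μ : ℂ) (x : E)
    (hx : ρ x + (n + 1) * ‖μ‖ * ε < δ) : ‖(F μ)^[n] x - x‖ ≤ n * ‖μ‖ * ε := by
  have h0 : 0 ≤ ‖μ‖ * ε := mul_nonneg (norm_nonneg _) h.pos.le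
  induction n with
  | zero => simp
  | succ n ih =>
    push_cast at hx ⊢
    have ih := ih (by nlinarith)
    rw [Function.iterate_succ_apply']
    have h2 := h.dist μ ((F μ)^[n] x) (by nlinarith [h.lip ((F μ)^[n] x) x])
    calc _ = ‖(F μ ((F μ)^[n] x) - (F μ)^[n] x) + ((F μ)^[n] x - x)‖ := by congr 1; abel
      _ ≤ _ := (norm_add_le _ _).trans (by linarith)

theorem Fam.iter_step (h : Fam ρ δ ε F) (n : ℕ) (μ : ℂ) (x : E)
    (hx : ρ x + (n + 2) * ‖μ‖ * ε < δ) : ‖(F μ)^[n + 1] x - (F μ)^[n] x‖ ≤ ‖μ‖ * ε := by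
  have h0 : 0 ≤ ‖μ‖ * ε := mul_nonneg (norm_nonneg _) h.pos.le
  rw [Function.iterate_succ_apply']
  have h1 := h.iter_dist n μ x (by nlinarith)
  exact h.dist μ ((F μ)^[n] x) (by nlinarith [h.lip ((F μ)^[n] x) x])

theorem Fam.iter_an (h : Fam ρ δ ε F) (n : ℕ) (μ : ℂ) (x : E)
    (hx : ρ x + (n + 1) * ‖μ‖ * ε < δ) :
    AnalyticAt ℂ (fun z : ℂ × E => (F z.1)^[n] z.2) (μ, x) := by
  have h0 : 0 ≤ ‖μ‖ * ε := mul_nonneg (norm_nonneg _) h.pos.le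
  induction n with
  | zero => simpa using analyticAt_snd
  | succ n ih =>
    push_cast at hx
    have ih := ih (by nlinarith)
    have h1 := h.iter_dist n μ x (by nlinarith)
    have h2 := h.an μ ((F μ)^[n] x) (by nlinarith [h.lip ((F μ)^[n] x) x])
    simp_rw [Function.iterate_succ_apply']
    exact AnalyticAt.fun_comp (f := fun z : ℂ × E => (z.1, (F z.1)^[n] z.2)) h2
      (analyticAt_fst.prod ih)

/-- the finite difference of the family -/
def dl (F : ℂ → E → E) (k : ℕ) (z : ℂ × E) : E := nd (fun n => (F z.1)^[n] z.2) k 0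

theorem dl_zero (F : ℂ → E → E) (z : ℂ × E) : dl F 0 z = z.2 := rfl

theorem dl_succ (F : ℂ → E → E) (k : ℕ) (μ : ℂ) (x : E) :
    dl F (k + 1) (μ, x) = dl F k (μ, F μ x) - dl F k (μ, x) := by
  simp only [dl, nd]
  rw [nd_shift]
  rfl

theorem dl_eq_finDiff (F : ℂ → E → E) (k : ℕ) (μ : ℂ) (x : E) :
    dl F k (μ, x) = finDiff (F μ) k x := by
  have := finDiff_eq_nd (F μ) x k 0
  exact this.symm

theorem Fam.dl_an (h : Fam ρ δ ε F) (k : ℕ) (μ : ℂ) (x : E)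
    (hx : ρ x + (k + 1) * ‖μ‖ * ε < δ) : AnalyticAt ℂ (dl F k) (μ, x) := by
  have h0 : 0 ≤ ‖μ‖ * ε := mul_nonneg (norm_nonneg _) h.pos.le
  have : dl F k = fun z : ℂ × E => ∑ n ∈ Finset.range (k + 1),
      ((-1 : ℂ) ^ (k - n) * (k.choose n : ℂ)) • (F z.1)^[n] z.2 := by
    funext z; exact nd_eq_sum _ _
  rw [this]
  refine Finset.analyticAt_fun_sum _ fun n hn => ?_
  have hn' : (n : ℝ) ≤ k := by exact_mod_cast Nat.lt_succ_iff.1 (Finset.mem_range.1 hn)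
  exact analyticAt_const.smul (h.iter_an n μ x (by nlinarith))

/-- local uniform bounds -/
theorem loc_lemma {G : Type*} [NormedAddCommGroup G] [NormedSpace ℂ G] {g : ℂ × E → G} {x₀ : E}
    {k : ℕ} (hg : ∀ᶠ z in 𝓝 ((0 : ℂ), x₀), AnalyticAt ℂ g z)
    (hO : g =O[𝓝 ((0 : ℂ), x₀)] fun z => z.1 ^ k) :
    ∃ C r : ℝ, 0 ≤ C ∧ 0 < r ∧ ∀ μ : ℂ, ‖μ‖ < r → ∀ x ∈ Metric.ball x₀ (r + r),
      DifferentiableAt ℂ (fun y => g (μ, y)) x ∧ ‖g (μ, x)‖ ≤ C * ‖μ‖ ^ k := by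
  obtain ⟨C, hC0, hC⟩ := hO.exists_nonneg
  have hh := (hg.and hC.bound)
  rw [Metric.eventually_nhds_iff_ball] at hh
  obtain ⟨r, hr, hh⟩ := hh
  refine ⟨C, r / 2, hC0, by positivity, fun μ hμ x hx => ?_⟩
  have hx' : ((μ, x) : ℂ × E) ∈ Metric.ball ((0 : ℂ), x₀) r := by
    rw [add_halves] at hx
    rw [Metric.mem_ball, Prod.dist_eq]
    refine max_lt ?_ hx
    simp; linarith
  have := hh _ hx'
  refine ⟨?_, by simpa using this.2⟩
  exact DifferentiableAt.fun_comp' x (f := fun y => (μ, y)) this.1.differentiableAt (by fun_prop)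

theorem Fam.ev_an [CompleteSpace E] (h : Fam ρ δ ε F) (k : ℕ) (x₀ : E) (hx : ρ x₀ < δ) :
    ∀ᶠ z in 𝓝 ((0 : ℂ), x₀), AnalyticAt ℂ (dl F k) z :=
  (h.dl_an k 0 x₀ (by simpa using hx)).eventually_analyticAt

theorem Fam.dl_O [CompleteSpace E] (h : Fam ρ δ ε F) (k : ℕ) (x₀ : E) (hx : ρ x₀ < δ) :
    dl F k =O[𝓝 ((0 : ℂ), x₀)] fun z => z.1 ^ k := by
  induction k with
  | zero =>
    simp only [pow_zero]
    exact ((h.dl_an 0 0 x₀ (by simpa using hx)).continuousAt).isBigO_one ℂ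
  | succ k ih =>
    obtain ⟨C, r, hC, hr, H⟩ := loc_lemma (h.ev_an k x₀ hx) ih
    have hε := h.pos
    have hρ1 : ∀ᶠ z : ℂ × E in 𝓝 ((0 : ℂ), x₀), ‖z.1‖ * ε < r / 2 ∧ ‖z.1‖ < r ∧ ‖z.2 - x₀‖ < r / 2
        ∧ ‖z.2 - x₀‖ + 2 * ‖z.1‖ * ε < δ - ρ x₀ := by
      refine Filter.Eventually.and ?_ (Filter.Eventually.and ?_ (Filter.Eventually.and ?_ ?_))
      · exact ContinuousAt.eventually_lt (by fun_prop) continuousAt_const (by simpa using hr)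
      · exact ContinuousAt.eventually_lt (by fun_prop) continuousAt_const (by simpa using hr)
      · exact ContinuousAt.eventually_lt (by fun_prop) continuousAt_const (by simpa using hr)
      · exact ContinuousAt.eventually_lt (by fun_prop) continuousAt_const (by simpa using hx)
    refine IsBigO.of_bound (C / r * ε) ?_
    filter_upwards [hρ1] with z hz
    obtain ⟨μ, x⟩ := z
    obtain ⟨h1, h2, h3, h4⟩ := hz
    simp only at h1 h2 h3 h4
    have hd := h.dist μ x (by linarith [h.lip x x₀])
    rw [dl_succ]
    have := lip_bound (f := fun y => dl F k (μ, y)) (c := x₀) (a := r) (r := r)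
      (M := C * ‖μ‖ ^ k) hr (fun y hy => (H μ h2 y hy).1.differentiableWithinAt)
      (fun y hy => (H μ h2 y hy).2) (x := x) (y := F μ x) (by linarith) (by
        calc ‖F μ x - x₀‖ = ‖(F μ x - x) + (x - x₀)‖ := by congr 1; abel
          _ ≤ _ := (norm_add_le _ _).trans (by linarith))
    refine this.trans ?_
    rw [norm_pow]
    calc C * ‖μ‖ ^ k / r * ‖F μ x - x‖ ≤ C * ‖μ‖ ^ k / r * (‖μ‖ * ε) := by gcongr
      _ = _ := by ring

/-- restriction of a family of O estimates to a fixed point -/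
theorem Fam.dl_O_fix [CompleteSpace E] (h : Fam ρ δ ε F) (k : ℕ) (x₀ : E) (hx : ρ x₀ < δ) :
    (fun μ => dl F k (μ, x₀)) =O[𝓝 (0 : ℂ)] fun μ => μ ^ k := by
  have ht : Tendsto (fun μ : ℂ => (μ, x₀)) (𝓝 0) (𝓝 ((0 : ℂ), x₀)) :=
    Continuous.tendsto' (by fun_prop) _ _ rfl
  exact (h.dl_O k x₀ hx).comp_tendsto ht

/-- main bound of differences -/
theorem Fam.dl_bound [CompleteSpace E] (h : Fam ρ δ ε F) (k : ℕ) (x : E) (R : ℝ)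
    (hx : ρ x + (k + 2) * R * ε ≤ δ) (μ : ℂ) (hμ : ‖μ‖ < R) :
    ‖dl F (k + 1) (μ, x)‖ ≤ ‖μ‖ * ε * (2 * ‖μ‖ / R) ^ k := by
  have hR : 0 < R := (norm_nonneg _).trans_lt hμ
  have hε := h.pos
  have hin : ∀ z ∈ Metric.ball (0 : ℂ) R, ρ x + (k + 2) * ‖z‖ * ε < δ := by
    intro z hz
    rw [mem_ball_zero_iff] at hz
    refine lt_of_lt_of_le ?_ hx
    gcongr
  have := schwarz (φ := fun μ => dl F (k + 1) (μ, x)) (R := R) (M := 2 ^ k * (R * ε)) (k := k + 1)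
    (by omega) (fun z hz => ?_) (fun z hz => ?_) (h.dl_O_fix (k + 1) x (by
      have : 0 < (k + 2) * R * ε := by positivity
      linarith)) hμ
  · refine this.trans (le_of_eq ?_)
    have hne := hR.ne'
    rw [div_pow, div_pow, mul_pow, pow_succ, pow_succ]
    field_simp
  · have h1 := (h.dl_an (k + 1) z x (by have := hin z hz; push_cast; linarith)).differentiableAt
    exact (DifferentiableAt.fun_comp' z (f := fun y => (y, x)) h1
      (by fun_prop)).differentiableWithinAt
  · refine (nd_step_bound _ (‖z‖ * ε) (k + 1) (fun n hn => ?_) k 0 (by omega)).trans ?_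
    · apply h.iter_step
      refine lt_of_le_of_lt ?_ (hin z hz)
      have : (n : ℝ) ≤ k := by exact_mod_cast Nat.lt_succ_iff.1 hn
      gcongr
    · rw [mem_ball_zero_iff] at hz
      gcongr

end fam

end Part3

section Part4

attribute [local fun_prop] analyticAt_fst analyticAt_snd

open Asymptotics Filter Topology

section fam
variable {E : Type*} [NormedAddCommGroup E] [NormedSpace ℂ E] {ρ : E → ℝ} {δ ε : ℝ}
  {F : ℂ → E → E}

noncomputable def PP (F : ℂ → E → E) (m : ℕ) (x : E) (s : ℂ) (μ : ℂ) : E :=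
  ∑ k ∈ Finset.range (m + 1), (bb k).eval s • dl F k (μ, x)

noncomputable def PPd (F : ℂ → E → E) (m : ℕ) (x : E) (s : ℂ) (μ : ℂ) : E :=
  ∑ k ∈ Finset.range (m + 1), (bb k).derivative.eval s • dl F k (μ, x)

noncomputable def XX (F : ℂ → E → E) (m : ℕ) (μ : ℂ) (y : E) : E :=
  Dm m (fun n => (F μ)^[n] y)

theorem PP_nat (F : ℂ → E → E) (m : ℕ) (x : E) (μ : ℂ) (n : ℕ) (hn : n ≤ m) :
    PP F m x n μ = (F μ)^[n] x := by
  rw [newton_eq (fun n => (F μ)^[n] x) hn]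
  simp only [PP, bb_eval_nat]
  rfl

theorem PP_eq (F : ℂ → E → E) (m : ℕ) (x : E) (s μ : ℂ) :
    PP F m x s μ = x + ∑ k ∈ Finset.range m, (bb (k + 1)).eval s • dl F (k + 1) (μ, x) := by
  rw [PP, Finset.sum_range_succ', bb_zero, dl_zero, add_comm]
  simp

theorem PPd_eq (F : ℂ → E → E) (m : ℕ) (x : E) (s μ : ℂ) :
    PPd F m x s μ =
      ∑ k ∈ Finset.range m, (bb (k + 1)).derivative.eval s • dl F (k + 1) (μ, x) := by
  rw [PPd, Finset.sum_range_succ', bb_zero]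
  simp

theorem XX_eq (F : ℂ → E → E) (m : ℕ) (y : E) (μ : ℂ) :
    XX F m μ y =
      ∑ k ∈ Finset.range m, ((-1 : ℂ) ^ k / (k + 1 : ℕ)) • dl F (k + 1) (μ, y) := by
  rw [XX, Dm, Finset.sum_bij (s := Finset.Icc 1 m) (t := Finset.range m)
    (g := fun k => ((-1 : ℂ) ^ k / (k + 1 : ℕ)) • dl F (k + 1) (μ, y)) (fun k _ => k - 1)]
  · intro k hk; simp at hk ⊢; omega
  · intro k hk l hl h; simp at hk hl; omega
  · intro k hk; exact ⟨k + 1, by simp at hk ⊢; omega, by simp⟩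
  · intro k hk
    have hk1 := (Finset.mem_Icc.1 hk).1
    obtain ⟨j, rfl⟩ : ∃ j, k = j + 1 := ⟨k - 1, by omega⟩
    rfl

theorem PPd_eq_Dm (F : ℂ → E → E) (m : ℕ) (x : E) (t μ : ℂ) :
    PPd F m x t μ = Dm m (fun n => PP F m x (t + n) μ) := by
  rw [Dm_eq_sum]
  simp only [PP, PPd]
  simp_rw [Finset.smul_sum]
  rw [Finset.sum_comm]
  refine Finset.sum_congr rfl fun k hk => ?_
  rw [← Dm_shift m k (Nat.lt_succ_iff.1 (Finset.mem_range.1 hk)) t, Dm_eq_sum, Finset.sum_smul]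
  simp_rw [smul_smul, smul_eq_mul]

theorem PP_step (F : ℂ → E → E) (m : ℕ) (x : E) (s μ : ℂ) :
    PP F m x (s + 1) μ - PP F m x s μ =
      ∑ k ∈ Finset.range m, (bb k).eval s • dl F (k + 1) (μ, x) := by
  rw [PP_eq, PP_eq, add_sub_add_left_eq_sub, ← Finset.sum_sub_distrib]
  refine Finset.sum_congr rfl fun k _ => ?_
  rw [← sub_smul, bb_shift]

theorem Fam.zero_apply (h : Fam ρ δ ε F) (y : E) (hy : ρ y < δ) : F 0 y = y := by
  have := h.dist 0 y (by simpa using hy)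
  simpa [sub_eq_zero] using this

variable [CompleteSpace E]

theorem Fam.dl_O_unif (h : Fam ρ δ ε F) (m : ℕ) (x : E) (hx : ρ x < δ) :
    ∃ C : ℝ, 0 ≤ C ∧ ∀ᶠ μ in 𝓝 (0 : ℂ), ∀ k ≤ m, ‖dl F k (μ, x)‖ ≤ C * ‖μ‖ ^ k := by
  choose C hC0 hC using fun k => (h.dl_O_fix k x hx).exists_nonneg
  refine ⟨∑ k ∈ Finset.range (m + 1), C k, Finset.sum_nonneg fun k _ => hC0 k, ?_⟩
  have : ∀ᶠ μ in 𝓝 (0 : ℂ), ∀ k ∈ Finset.range (m + 1), ‖dl F k (μ, x)‖ ≤ C k * ‖μ ^ k‖ := by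
    rw [Filter.eventually_all_finset]
    exact fun k _ => (hC k).bound
  filter_upwards [this] with μ hμ k hk
  have hk' : k ∈ Finset.range (m + 1) := Finset.mem_range.2 (by omega)
  refine (hμ k hk').trans ?_
  rw [norm_pow]
  gcongr
  exact Finset.single_le_sum (fun k _ => hC0 k) hk'

theorem Fam.W_O (h : Fam ρ δ ε F) (m : ℕ) (x : E) (hx : ρ x < δ) (s : ℂ) :
    (fun μ => PP F m x (s + 1) μ - F μ (PP F m x s μ)) =O[𝓝 (0 : ℂ)] fun μ => μ ^ (m + 1) := by
  obtain ⟨C, hC, hev⟩ := h.dl_O_unif m x hx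
  have hε := h.pos
  have hg : 0 < δ - ρ x := by linarith
  obtain ⟨η, hη, hη1, hη2⟩ : ∃ η : ℝ, 0 < η ∧ η ≤ 1 ∧ m * C * η ≤ (δ - ρ x) / 2 := by
    refine ⟨min 1 ((δ - ρ x) / 2 / (m * C + 1)), lt_min one_pos (by positivity), min_le_left _ _, ?_⟩
    calc (m : ℝ) * C * min 1 ((δ - ρ x) / 2 / (m * C + 1))
        ≤ (m * C + 1) * ((δ - ρ x) / 2 / (m * C + 1)) := by
          gcongr
          · linarith
          · exact min_le_right _ _
      _ = _ := by field_simp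
  have hev2 : ∀ᶠ μ in 𝓝 (0 : ℂ), 2 * ‖μ‖ * ε < (δ - ρ x) / 2 ∧ m * ‖μ‖ < η / 2 ∧
      (m : ℝ) ^ 2 * ‖μ‖ < η / 4 ∧ (‖s‖ + (m : ℝ) ^ 2) * ‖μ‖ < η / 2 := by
    refine Filter.Eventually.and ?_ (Filter.Eventually.and ?_ (Filter.Eventually.and ?_ ?_))
    · exact ContinuousAt.eventually_lt (by fun_prop) continuousAt_const (by simpa using hg)
    · exact ContinuousAt.eventually_lt (by fun_prop) continuousAt_const (by simpa using hη)
    · exact ContinuousAt.eventually_lt (by fun_prop) continuousAt_const (by simpa using hη)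
    · exact ContinuousAt.eventually_lt (by fun_prop) continuousAt_const (by simpa using hη)
  refine IsBigO.of_bound ((m * C + ε) * ((‖s‖ + m) * 4 / η) ^ m) ?_
  filter_upwards [hev, hev2] with μ hdl ⟨hm1, hm2, hm3, hm4⟩
  -- pointwise estimates
  have hPx : ∀ σ : ℂ, (‖σ‖ + m) * ‖μ‖ ≤ η → ‖PP F m x σ μ - x‖ ≤ (δ - ρ x) / 2 := by
    intro σ hσ
    rw [PP_eq, add_sub_cancel_left]
    refine le_trans ?_ hη2
    have : (m : ℝ) * C * η = ∑ k ∈ Finset.range m, C * η := by simp; ring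
    rw [this]
    refine norm_sum_le_of_le _ fun k hk => ?_
    have hk' : k + 1 ≤ m := Finset.mem_range.1 hk
    have hk2 : ((k + 1 : ℕ) : ℝ) ≤ m := by exact_mod_cast hk'
    rw [norm_smul]
    calc _ ≤ (‖σ‖ + (k + 1 : ℕ)) ^ (k + 1) * (C * ‖μ‖ ^ (k + 1)) := by
          gcongr
          · exact bb_crude _ _
          · exact hdl _ hk'
      _ ≤ (‖σ‖ + m) ^ (k + 1) * (C * ‖μ‖ ^ (k + 1)) := by gcongr
      _ = C * ((‖σ‖ + m) * ‖μ‖) ^ (k + 1) := by rw [mul_pow]; ring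
      _ ≤ C * ((‖σ‖ + m) * ‖μ‖) := by
          gcongr
          exact pow_le_of_le_one (by positivity) (hσ.trans hη1) (by omega)
      _ ≤ C * η := by gcongr
  have hPs : ∀ σ : ℂ, (‖σ‖ + m) * ‖μ‖ ≤ η →
      ‖PP F m x (σ + 1) μ - PP F m x σ μ‖ ≤ m * C * ‖μ‖ := by
    intro σ hσ
    rw [PP_step]
    have : (m : ℝ) * C * ‖μ‖ = ∑ k ∈ Finset.range m, C * ‖μ‖ := by simp; ring
    rw [this]
    refine norm_sum_le_of_le _ fun k hk => ?_
    have hk' : k + 1 ≤ m := Finset.mem_range.1 hk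
    have hk2 : (k : ℝ) ≤ m := by exact_mod_cast (by omega : k ≤ m)
    rw [norm_smul]
    calc _ ≤ (‖σ‖ + k) ^ k * (C * ‖μ‖ ^ (k + 1)) := by
          gcongr
          · exact bb_crude _ _
          · exact hdl _ hk'
      _ ≤ (‖σ‖ + m) ^ k * (C * ‖μ‖ ^ (k + 1)) := by gcongr
      _ = C * ‖μ‖ * ((‖σ‖ + m) * ‖μ‖) ^ k := by rw [mul_pow]; ring
      _ ≤ C * ‖μ‖ * 1 := by
          gcongr
          exact pow_le_one₀ (by positivity) (hσ.trans hη1)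
      _ = _ := mul_one _
  have hdom : ∀ σ : ℂ, (‖σ‖ + m) * ‖μ‖ ≤ η → ρ (PP F m x σ μ) + 2 * ‖μ‖ * ε < δ := by
    intro σ hσ
    linarith [hPx σ hσ, h.lip (PP F m x σ μ) x]
  have hWb : ∀ σ : ℂ, (‖σ‖ + m) * ‖μ‖ ≤ η →
      ‖PP F m x (σ + 1) μ - F μ (PP F m x σ μ)‖ ≤ (m * C + ε) * ‖μ‖ := by
    intro σ hσ
    have h1 := hPs σ hσ
    have h2 := h.dist μ _ (hdom σ hσ)
    calc _ = ‖(PP F m x (σ + 1) μ - PP F m x σ μ) - (F μ (PP F m x σ μ) - PP F m x σ μ)‖ := by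
          congr 1; abel
      _ ≤ _ := (norm_sub_le _ _).trans (by linarith)
  rcases eq_or_ne μ 0 with rfl | hμ
  · have := hWb s (by simpa using hη.le)
    simpa using this
  have hμ0 : 0 < ‖μ‖ := norm_pos_iff.2 hμ
  have hT : ∀ σ ∈ Metric.ball (0 : ℂ) (η / (2 * ‖μ‖)), (‖σ‖ + m) * ‖μ‖ ≤ η := by
    intro σ hσ
    rw [mem_ball_zero_iff, lt_div_iff₀ (by positivity)] at hσ
    linarith
  have hT2 : η / (4 * ‖μ‖) ≤ η / (2 * ‖μ‖) - (m : ℝ) ^ 2 := by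
    rw [le_sub_iff_add_le, div_add' _ _ _ (by positivity), div_le_div_iff₀ (by positivity)
      (by positivity)]
    nlinarith
  have hmz := multi_zero m (fun σ => PP F m x (σ + 1) μ - F μ (PP F m x σ μ)) (η / (2 * ‖μ‖))
    ((m * C + ε) * ‖μ‖) (by
      have : 0 < η / (4 * ‖μ‖) := by positivity
      linarith) (fun σ hσ => ?_) (fun σ hσ => hWb σ (hT σ hσ)) (fun j hj => ?_) s ?_
  · refine hmz.trans ?_
    rw [norm_pow, pow_succ]
    calc (m * C + ε) * ‖μ‖ * ((‖s‖ + m) / (η / (2 * ‖μ‖) - (m : ℝ) ^ 2)) ^ m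
        ≤ (m * C + ε) * ‖μ‖ * ((‖s‖ + m) / (η / (4 * ‖μ‖))) ^ m := by
          gcongr
          apply div_nonneg (by positivity)
          have : 0 < η / (4 * ‖μ‖) := by positivity
          linarith
      _ = (m * C + ε) * ‖μ‖ * ((‖s‖ + m) * 4 / η * ‖μ‖) ^ m := by
          congr 2; field_simp
      _ = _ := by rw [mul_pow]; ring
  · have hPd : ∀ σ, DifferentiableAt ℂ (fun σ => PP F m x σ μ) σ := by
      intro σ
      simp only [PP]
      refine DifferentiableAt.fun_sum fun k _ => ?_
      exact (Polynomial.differentiableAt _).smul_const _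
    have h1 : DifferentiableAt ℂ (fun σ => PP F m x (σ + 1) μ) σ :=
      DifferentiableAt.fun_comp' σ (g := fun σ => PP F m x σ μ) (f := fun σ => σ + 1)
        (hPd _) (by fun_prop)
    have h2 : DifferentiableAt ℂ (fun σ => F μ (PP F m x σ μ)) σ :=
      DifferentiableAt.fun_comp' σ (g := fun z : ℂ × E => F z.1 z.2)
        (f := fun σ => (μ, PP F m x σ μ)) (h.an μ _ (hdom σ (hT σ hσ))).differentiableAt
        ((differentiableAt_const μ).prodMk (hPd σ))
    exact (h1.sub h2).differentiableWithinAt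
  · have e : ((j : ℂ) + 1) = ((j + 1 : ℕ) : ℂ) := by push_cast; rfl
    rw [e, PP_nat F m x μ (j + 1) (by omega), PP_nat F m x μ j (by omega),
      Function.iterate_succ_apply', sub_self]
  · rw [lt_sub_iff_add_lt, lt_div_iff₀ (by positivity)]
    linarith

theorem Fam.PP_diff (h : Fam ρ δ ε F) (m : ℕ) (x : E) (s μ : ℂ)
    (hx : ρ x + (m + 1) * ‖μ‖ * ε < δ) : DifferentiableAt ℂ (fun μ => PP F m x s μ) μ ∧
    DifferentiableAt ℂ (fun μ => PPd F m x s μ) μ := by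
  have hk : ∀ k ∈ Finset.range (m + 1), DifferentiableAt ℂ (fun μ => dl F k (μ, x)) μ := by
    intro k hk
    have hk' : (k : ℝ) ≤ m := by exact_mod_cast Nat.lt_succ_iff.1 (Finset.mem_range.1 hk)
    have h0 := h.pos
    have h1 := h.dl_an k μ x (lt_of_le_of_lt (by gcongr) hx)
    exact DifferentiableAt.fun_comp' μ (f := fun μ => (μ, x)) h1.differentiableAt (by fun_prop)
  constructor
  · exact DifferentiableAt.fun_sum fun k hk' => (hk k hk').const_smul _
  · exact DifferentiableAt.fun_sum fun k hk' => (hk k hk').const_smul _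

theorem Fam.PP_zero (h : Fam ρ δ ε F) (m : ℕ) (x : E) (s : ℂ) (hx : ρ x < δ) :
    PP F m x s 0 = x := by
  rw [PP_eq]
  simp only [add_eq_left]
  refine Finset.sum_eq_zero fun k _ => ?_
  obtain ⟨C, hC⟩ := (h.dl_O_fix (k + 1) x hx).bound
  have := hC.self_of_nhds
  have h2 : dl F (k + 1) (0, x) = 0 := by simpa using this
  rw [h2, smul_zero]

theorem Fam.defect_O (h : Fam ρ δ ε F) (m : ℕ) (x : E) (hx : ρ x < δ) (t : ℂ) :
    (fun μ => PPd F m x t μ - XX F m μ (PP F m x t μ)) =O[𝓝 (0 : ℂ)] fun μ => μ ^ (m + 1) := by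
  have hPc : ∀ s, Tendsto (fun μ => PP F m x s μ) (𝓝 0) (𝓝 x) := by
    intro s
    have := (h.PP_diff m x s 0 (by simpa using hx)).1.continuousAt.tendsto
    rwa [h.PP_zero m x s hx] at this
  have hit : ∀ n : ℕ, Tendsto (fun μ => (F μ)^[n] (PP F m x t μ)) (𝓝 0) (𝓝 x) := by
    intro n
    have h1 := (h.iter_an n 0 x (by simpa using hx)).continuousAt.tendsto
    have h2 : (F 0)^[n] x = x := by
      have := h.iter_dist n 0 x (by simpa using hx)
      simpa [sub_eq_zero] using this
    simp only [h2] at h1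
    exact h1.comp (tendsto_id.prodMk_nhds (hPc t))
  have hV : ∀ n : ℕ, (fun μ => PP F m x (t + n) μ - (F μ)^[n] (PP F m x t μ)) =O[𝓝 (0 : ℂ)]
      fun μ => μ ^ (m + 1) := by
    intro n
    induction n with
    | zero => simpa using isBigO_zero _ _
    | succ n ih =>
      have hW := h.W_O m x hx (t + n)
      have hs := ((h.an 0 x (by simpa using hx)).hasStrictFDerivAt).isBigO_sub
      have ht : Tendsto (fun μ : ℂ => ((μ, PP F m x (t + n) μ), (μ, (F μ)^[n] (PP F m x t μ))))
          (𝓝 0) (𝓝 (((0 : ℂ), x), ((0 : ℂ), x))) :=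
        (tendsto_id.prodMk_nhds (hPc _)).prodMk_nhds (tendsto_id.prodMk_nhds (hit n))
      have h3 := hs.comp_tendsto ht
      have h4 : (fun μ => F μ (PP F m x (t + n) μ) - F μ ((F μ)^[n] (PP F m x t μ))) =O[𝓝 (0 : ℂ)]
          fun μ => μ ^ (m + 1) := by
        refine h3.trans (IsBigO.trans (IsBigO.of_bound 1 ?_) ih)
        refine Filter.Eventually.of_forall fun μ => ?_
        simp [Prod.norm_def]
      refine (hW.add h4).congr_left fun μ => ?_
      rw [Function.iterate_succ_apply']
      push_cast
      rw [add_assoc]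
      abel
  have e : (fun μ => PPd F m x t μ - XX F m μ (PP F m x t μ)) = fun μ =>
      ∑ n ∈ Finset.range (m + 1),
        kap m n • (PP F m x (t + n) μ - (F μ)^[n] (PP F m x t μ)) := by
    funext μ
    rw [PPd_eq_Dm, XX, Dm_eq_sum, Dm_eq_sum, ← Finset.sum_sub_distrib]
    simp_rw [smul_sub]
  rw [e]
  exact IsBigO.fun_sum fun n _ => (hV n).const_smul_left _

noncomputable def Hm (m : ℕ) : ℝ := ∑ k ∈ Finset.range m, 1 / ((k + 1 : ℕ) : ℝ)

theorem Fam.dl_half (h : Fam ρ δ ε F) (m : ℕ) (R : ℝ) (hR : (m + 1) * R * ε ≤ δ / 2)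
    (k : ℕ) (hk : k < m) (y : E) (hy : ρ y ≤ δ / 2) (μ : ℂ) (hμ : ‖μ‖ < R) :
    ‖dl F (k + 1) (μ, y)‖ ≤ ‖μ‖ * ε * (2 * ‖μ‖ / R) ^ k := by
  have hk' : (k : ℝ) + 1 ≤ m := by exact_mod_cast hk
  have hR0 : 0 < R := (norm_nonneg _).trans_lt hμ
  have := h.pos
  refine h.dl_bound k y R ?_ μ hμ
  have : (k + 2) * R * ε ≤ (m + 1) * R * ε := by gcongr ?_ * _ * _; linarith
  linarith

theorem Fam.defect_bound (h : Fam ρ δ ε F) (m : ℕ) (R : ℝ) (hR0 : 0 < R)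
    (hR : (m + 1) * R * ε ≤ δ / 2)
    (hH : Hm m * (R / 2) * ε ≤ δ / 2) (x : E) (hx : ρ x ≤ 0) (t : ℝ) (ht0 : 0 ≤ t) (ht1 : t ≤ 1)
    (μ : ℂ) (hμ : ‖μ‖ < R / 2) :
    ‖PPd F m x t μ - XX F m μ (PP F m x t μ)‖ ≤
      2 * Hm m * (R / 2) * ε * (‖μ‖ / (R / 2)) ^ (m + 1) := by
  have hε := h.pos
  have hδ : 0 < δ / 2 := lt_of_lt_of_le (by positivity) hR
  have hH0 : 0 ≤ Hm m := Finset.sum_nonneg fun k _ => by positivity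
  have hdl : ∀ z : ℂ, ‖z‖ < R / 2 → ∀ k < m, ∀ y, ρ y ≤ δ / 2 →
      ‖dl F (k + 1) (z, y)‖ ≤ R / 2 * ε := by
    intro z hz k hk y hy
    refine (h.dl_half m R hR k hk y hy z (by linarith)).trans ?_
    have h1 : (2 * ‖z‖ / R) ^ k ≤ 1 := by
      apply pow_le_one₀ (by positivity)
      rw [div_le_one hR0]; linarith
    calc ‖z‖ * ε * (2 * ‖z‖ / R) ^ k ≤ ‖z‖ * ε * 1 := by gcongr
      _ ≤ R / 2 * ε := by rw [mul_one]; gcongr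
  have hsum : ∀ (c : ℕ → ℂ) (z : ℂ) (y : E), ‖z‖ < R / 2 → ρ y ≤ δ / 2 →
      (∀ k, ‖c k‖ ≤ 1 / ((k + 1 : ℕ) : ℝ)) →
      ‖∑ k ∈ Finset.range m, c k • dl F (k + 1) (z, y)‖ ≤ Hm m * (R / 2) * ε := by
    intro c z y hz hy hc
    rw [Hm, mul_assoc, Finset.sum_mul]
    refine norm_sum_le_of_le _ fun k hk => ?_
    rw [norm_smul]
    gcongr
    · exact hc k
    · exact hdl z hz k (Finset.mem_range.1 hk) y hy
  have hPx : ∀ z : ℂ, ‖z‖ < R / 2 → ρ (PP F m x t z) ≤ δ / 2 := by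
    intro z hz
    have h1 : ‖PP F m x t z - x‖ ≤ Hm m * (R / 2) * ε := by
      rw [PP_eq, add_sub_cancel_left]
      exact hsum _ z x hz (by linarith) fun k => (bb_bound (k + 1) (by omega) t ht0 ht1).1
    linarith [h.lip (PP F m x t z) x]
  have hdom : ∀ z : ℂ, ‖z‖ < R / 2 → ∀ y, ρ y ≤ δ / 2 → ρ y + (m + 1) * ‖z‖ * ε < δ := by
    intro z hz y hy
    have : (m + 1) * ‖z‖ * ε < (m + 1) * R * ε := by gcongr; linarith
    linarith
  refine schwarz (φ := fun μ => PPd F m x t μ - XX F m μ (PP F m x t μ)) (R := R / 2)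
    (M := 2 * Hm m * (R / 2) * ε) (k := m + 1) (by omega) (fun z hz => ?_) (fun z hz => ?_)
    (h.defect_O m x (by linarith) t) hμ
  · rw [mem_ball_zero_iff] at hz
    have hd := h.PP_diff m x t z (hdom z hz x (by linarith))
    refine (hd.2.sub ?_).differentiableWithinAt
    simp_rw [XX_eq]
    refine DifferentiableAt.fun_sum fun k hk => ?_
    have hk' : (k : ℝ) + 1 ≤ m := by exact_mod_cast Finset.mem_range.1 hk
    have h1 := h.dl_an (k + 1) z (PP F m x t z)
      (lt_of_le_of_lt (by push_cast; gcongr) (hdom z hz _ (hPx z hz)))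
    exact (DifferentiableAt.fun_comp' z (f := fun z => (z, PP F m x t z)) h1.differentiableAt
      (differentiableAt_id.prodMk hd.1)).const_smul _
  · rw [mem_ball_zero_iff] at hz
    have h1 : ‖PPd F m x t z‖ ≤ Hm m * (R / 2) * ε := by
      rw [PPd_eq]
      exact hsum _ z x hz (by linarith) fun k => (bb_bound (k + 1) (by omega) t ht0 ht1).2
    have h2 : ‖XX F m z (PP F m x t z)‖ ≤ Hm m * (R / 2) * ε := by
      rw [XX_eq]
      refine hsum _ z _ hz (hPx z hz) fun k => ?_
      rw [norm_div, norm_pow, norm_neg, norm_one, one_pow, Complex.norm_natCast]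
    exact (norm_sub_le _ _).trans (by linarith)

end fam

end Part4

section Part5

attribute [local fun_prop] analyticAt_fst analyticAt_snd

open Asymptotics Filter Topology

theorem nd_map {E G : Type*} [AddCommGroup E] [AddCommGroup G] (L : E →+ G) (a : ℕ → E) (k j : ℕ) :
    nd (fun n => L (a n)) k j = L (nd a k j) := by
  induction k generalizing j with
  | zero => rfl
  | succ k ih => rw [nd, nd, ih, ih, map_sub]

theorem nd_sub_const {E : Type*} [AddCommGroup E] (a : ℕ → E) (c : E) (k j : ℕ) :
    nd (fun n => a n - c) (k + 1) j = nd a (k + 1) j := by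
  induction k generalizing j with
  | zero => simp [nd]
  | succ k ih => rw [nd, ih, ih]; rfl

theorem Dm_const {E : Type*} [AddCommGroup E] [Module ℂ E] (m : ℕ) (c : E) :
    Dm m (fun _ => c) = 0 := by
  have h : ∀ k j : ℕ, nd (fun _ : ℕ => c) (k + 1) j = 0 := by
    intro k
    induction k with
    | zero => intro j; simp [nd]
    | succ k ih => intro j; rw [nd, ih, ih, sub_zero]
  refine Finset.sum_eq_zero fun k hk => ?_
  obtain ⟨j, rfl⟩ : ∃ j, k = j + 1 := ⟨k - 1, by have := (Finset.mem_Icc.1 hk).1; omega⟩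
  rw [h, smul_zero]

theorem Dm_mul_eq (m : ℕ) (α β : ℕ → ℂ) :
    Dm m (fun n => α n * β n) = ∑ k ∈ Finset.range (m + 1), ∑ l ∈ Finset.range (m + 1),
      nd α k 0 * nd β l 0 * Dm m (fun n => (n.choose k : ℂ) * (n.choose l : ℂ)) := by
  simp_rw [Dm_eq_sum, smul_eq_mul, Finset.mul_sum]
  have : ∀ k ∈ Finset.range (m + 1), (∑ l ∈ Finset.range (m + 1), ∑ n ∈ Finset.range (m + 1),
      nd α k 0 * nd β l 0 * (kap m n * ((n.choose k : ℂ) * (n.choose l : ℂ)))) =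
      ∑ n ∈ Finset.range (m + 1), ∑ l ∈ Finset.range (m + 1),
      nd α k 0 * nd β l 0 * (kap m n * ((n.choose k : ℂ) * (n.choose l : ℂ))) :=
    fun k _ => Finset.sum_comm
  rw [Finset.sum_congr rfl this, Finset.sum_comm]
  refine Finset.sum_congr rfl fun n hn => ?_
  have hn' := Nat.lt_succ_iff.1 (Finset.mem_range.1 hn)
  conv_lhs => rw [newton_eq α hn', newton_eq β hn', Finset.sum_mul_sum, Finset.mul_sum]
  refine Finset.sum_congr rfl fun k _ => ?_
  rw [Finset.mul_sum]
  refine Finset.sum_congr rfl fun l _ => ?_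
  simp only [smul_eq_mul]
  ring

theorem Dm_mul_O (m : ℕ) (α β : ℂ → ℕ → ℂ) (hα0 : ∀ μ, α μ 0 = 0) (hβ0 : ∀ μ, β μ 0 = 0)
    (hα : ∀ k, (fun μ => nd (α μ) (k + 1) 0) =O[𝓝 (0 : ℂ)] fun μ => μ ^ (k + 1))
    (hβ : ∀ k, (fun μ => nd (β μ) (k + 1) 0) =O[𝓝 (0 : ℂ)] fun μ => μ ^ (k + 1)) :
    (fun μ => Dm m (fun n => α μ n * β μ n)) =O[𝓝 (0 : ℂ)] fun μ => μ ^ (m + 1) := by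
  have e : (fun μ => Dm m (fun n => α μ n * β μ n)) = fun μ =>
      ∑ k ∈ Finset.range (m + 1), ∑ l ∈ Finset.range (m + 1),
      nd (α μ) k 0 * nd (β μ) l 0 * Dm m (fun n => (n.choose k : ℂ) * (n.choose l : ℂ)) :=
    funext fun μ => Dm_mul_eq m _ _
  rw [e]
  refine IsBigO.fun_sum fun k _ => IsBigO.fun_sum fun l _ => ?_
  rcases k with _ | k
  · simpa [nd, hα0] using isBigO_zero _ _
  rcases l with _ | l
  · simpa [nd, hβ0] using isBigO_zero _ _
  by_cases hkl : k + 1 + (l + 1) ≤ m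
  · rw [Dm_leibniz m (k + 1) (l + 1) (by omega) (by omega) hkl]
    simpa using isBigO_zero _ _
  · have h1 := ((hα k).mul (hβ l)).const_mul_left
      (Dm m (fun n => (n.choose (k + 1) : ℂ) * (n.choose (l + 1) : ℂ)))
    have h2 : (fun μ : ℂ => μ ^ (k + 1) * μ ^ (l + 1)) =O[𝓝 (0 : ℂ)] fun μ => μ ^ (m + 1) := by
      refine IsBigO.of_bound 1 ?_
      filter_upwards [Metric.ball_mem_nhds (0 : ℂ) one_pos] with μ hμ
      rw [mem_ball_zero_iff] at hμ
      rw [← pow_add, norm_pow, norm_pow, one_mul]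
      exact pow_le_pow_of_le_one (norm_nonneg _) hμ.le (by omega)
    refine (h1.trans h2).congr_left fun μ => ?_
    ring

section fam
variable {E : Type*} [NormedAddCommGroup E] [NormedSpace ℂ E] {ρ : E → ℝ} {δ ε : ℝ}
  {F : ℂ → E → E}

/-- derivative of the iterates in direction `v` -/
noncomputable def dY (F : ℂ → E → E) (x v : E) (μ : ℂ) (n : ℕ) : E :=
  fderiv ℂ (fun z : ℂ × E => (F z.1)^[n] z.2) (μ, x) (0, v)

theorem Fam.nd_dY (h : Fam ρ δ ε F) (x v : E) (μ : ℂ) (k : ℕ)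
    (hx : ρ x + (k + 1) * ‖μ‖ * ε < δ) :
    nd (dY F x v μ) k 0 = fderiv ℂ (dl F k) (μ, x) (0, v) := by
  have hε := h.pos
  have : dl F k = fun z : ℂ × E => ∑ n ∈ Finset.range (k + 1),
      ((-1 : ℂ) ^ (k - n) * (k.choose n : ℂ)) • (F z.1)^[n] z.2 := by
    funext z; exact nd_eq_sum _ _
  have hd : ∀ n ∈ Finset.range (k + 1),
      DifferentiableAt ℂ (fun z : ℂ × E => (F z.1)^[n] z.2) (μ, x) := by
    intro n hn
    have hn' : (n : ℝ) ≤ k := by exact_mod_cast Nat.lt_succ_iff.1 (Finset.mem_range.1 hn)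
    exact (h.iter_an n μ x (lt_of_le_of_lt (by gcongr) hx)).differentiableAt
  rw [this, fderiv_fun_sum fun n hn => (hd n hn).fun_const_smul _, nd_eq_sum]
  rw [sum_apply]
  refine Finset.sum_congr rfl fun n hn => ?_
  rw [fderiv_fun_const_smul (hd n hn)]
  rfl

theorem fderiv_partial {G : Type*} [NormedAddCommGroup G] [NormedSpace ℂ G] {g : ℂ × E → G}
    {μ : ℂ} {x : E} (hg : DifferentiableAt ℂ g (μ, x)) (v : E) :
    fderiv ℂ g (μ, x) (0, v) = fderiv ℂ (fun y => g (μ, y)) x v := by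
  have h1 := hg.hasFDerivAt.comp x (hasFDerivAt_prodMk_right (𝕜 := ℂ) μ x)
  have h2 : HasFDerivAt (fun y => g (μ, y))
    ((fderiv ℂ g (μ, x)).comp (ContinuousLinearMap.inr ℂ ℂ E)) x := h1
  rw [h2.fderiv]
  rfl

variable [CompleteSpace E]

theorem Fam.dY_O (h : Fam ρ δ ε F) (x v : E) (hx : ρ x < δ) (k : ℕ) :
    (fun μ => nd (dY F x v μ) k 0) =O[𝓝 (0 : ℂ)] fun μ => μ ^ k := by
  obtain ⟨C, r, hC, hr, H⟩ := loc_lemma (h.ev_an k x hx) (h.dl_O k x hx)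
  have hev : ∀ᶠ μ in 𝓝 (0 : ℂ), ρ x + (k + 1) * ‖μ‖ * ε < δ ∧ ‖μ‖ < r := by
    refine Filter.Eventually.and ?_ ?_
    · exact ContinuousAt.eventually_lt (by fun_prop) continuousAt_const (by simpa using hx)
    · exact ContinuousAt.eventually_lt (by fun_prop) continuousAt_const (by simpa using hr)
  refine IsBigO.of_bound (C / (r + r) * ‖v‖) ?_
  filter_upwards [hev] with μ ⟨h1, h2⟩
  rw [h.nd_dY x v μ k h1, fderiv_partial (h.dl_an k μ x h1).differentiableAt]
  have := cauchy_bound (f := fun y => dl F k (μ, y)) (c := x) (R := r + r) (M := C * ‖μ‖ ^ k)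
    (by linarith) (fun y hy => (H μ h2 y hy).1.differentiableWithinAt) (fun y hy => (H μ h2 y hy).2)
  refine (ContinuousLinearMap.le_opNorm _ _).trans ?_
  rw [norm_pow]
  calc _ ≤ C * ‖μ‖ ^ k / (r + r) * ‖v‖ := by gcongr
    _ = _ := by ring

/-- bound on the derivative of iterates -/
theorem Fam.dY_bound (h : Fam ρ δ ε F) (x v : E) (n : ℕ) (μ : ℂ) (r : ℝ) (hr : 0 < r)
    (hx : ρ x + r + (n + 1) * ‖μ‖ * ε ≤ δ) :
    ‖dY F x v μ n - v‖ ≤ n * ‖μ‖ * ε / r * ‖v‖ := by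
  have hin : ∀ y ∈ Metric.ball x r, ρ y + (n + 1) * ‖μ‖ * ε < δ := by
    intro y hy
    rw [mem_ball_iff_norm] at hy
    linarith [h.lip y x]
  have hd : ∀ y ∈ Metric.ball x r, DifferentiableAt ℂ (fun y => (F μ)^[n] y) y := by
    intro y hy
    exact DifferentiableAt.fun_comp' y (g := fun z : ℂ × E => (F z.1)^[n] z.2) (f := fun y => (μ, y))
      (h.iter_an n μ y (hin y hy)).differentiableAt (by fun_prop)
  have hx0 := Metric.mem_ball_self (x := x) hr
  have := cauchy_bound (f := fun y => (F μ)^[n] y - y) (c := x) (R := r) (M := n * ‖μ‖ * ε) hr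
    (fun y hy => ((hd y hy).sub differentiableAt_id).differentiableWithinAt)
    (fun y hy => h.iter_dist n μ y (hin y hy))
  rw [fderiv_fun_sub (hd x hx0) differentiableAt_fun_id] at this
  rw [dY, fderiv_partial (h.iter_an n μ x (hin x hx0)).differentiableAt]
  have h2 := (ContinuousLinearMap.le_opNorm (fderiv ℂ (fun y => (F μ)^[n] y) x -
    fderiv ℂ (fun y => y) x) v)
  rw [sub_apply, fderiv_fun_id, ContinuousLinearMap.id_apply] at h2
  rw [fderiv_fun_id] at this
  refine h2.trans ?_
  gcongr

end fam

/-- the error term in the Hamiltonian -/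
noncomputable def om {d : ℕ} (F : ℂ → CPhase d → CPhase d) (m : ℕ) (x v : CPhase d) (μ : ℂ) : ℂ :=
  Dm m (fun n => ∑ i, (((F μ)^[n] x).1 i - x.1 i) * ((dY F x v μ n).2 i - v.2 i))

theorem om_bound {d : ℕ} {ρ : CPhase d → ℝ} {δ ε : ℝ} {F : ℂ → CPhase d → CPhase d}
    (h : Fam ρ δ ε F) (m : ℕ) (x v : CPhase d) (hv : ‖v‖ ≤ 1) (hx : ρ x ≤ δ / 2) (R : ℝ)
    (hR : 1 < R) (hR2 : (m + 1) * R * ε < δ / 2) :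
    ‖om F m x v 1‖ ≤ m * 2 ^ m / 2 * (d * ((R * ε) ^ 2 / (δ / 2 - (m + 1) * R * ε))) *
      (1 / R) ^ (m + 1) := by
  have hε := h.pos
  set r := δ / 2 - (m + 1) * R * ε with hr
  have hr0 : 0 < r := by linarith
  have hdom : ∀ z : ℂ, ‖z‖ < R → ∀ n ≤ m, ρ x + r + (n + 1) * ‖z‖ * ε ≤ δ := by
    intro z hz n hn
    have hn' : (n : ℝ) ≤ m := by exact_mod_cast hn
    have : (n + 1) * ‖z‖ * ε ≤ (m + 1) * R * ε := by gcongr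
    linarith
  have := schwarz (φ := om F m x v) (R := R)
    (M := m * 2 ^ m / 2 * (d * ((R * ε) ^ 2 / r))) (k := m + 1) (z := 1) (by omega)
    (fun z hz => ?_) (fun z hz => ?_) ?_ (by simpa using hR)
  · simpa using this
  · rw [mem_ball_zero_iff] at hz
    have : om F m x v = fun μ => ∑ n ∈ Finset.range (m + 1), kap m n •
        ∑ i, (((F μ)^[n] x).1 i - x.1 i) * ((dY F x v μ n).2 i - v.2 i) := by
      funext μ; rw [om, Dm_eq_sum]
    rw [this]
    refine DifferentiableAt.differentiableWithinAt ?_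
    refine DifferentiableAt.fun_sum fun n hn => DifferentiableAt.fun_const_smul ?_ _
    have hn' := Nat.lt_succ_iff.1 (Finset.mem_range.1 hn)
    have han := h.iter_an n z x (by linarith [hdom z hz n hn'])
    have hp : DifferentiableAt ℂ (fun μ : ℂ => (μ, x)) z := by fun_prop
    have h1 : DifferentiableAt ℂ (fun μ => (F μ)^[n] x) z :=
      DifferentiableAt.fun_comp' z (g := fun z : ℂ × CPhase d => (F z.1)^[n] z.2)
        (f := fun μ => (μ, x)) han.differentiableAt hp
    have h2 : DifferentiableAt ℂ (fun μ => dY F x v μ n) z := by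
      have h3 : DifferentiableAt ℂ (fun μ : ℂ =>
          fderiv ℂ (fun z : ℂ × CPhase d => (F z.1)^[n] z.2) (μ, x)) z :=
        DifferentiableAt.fun_comp' z (f := fun μ : ℂ => (μ, x)) han.fderiv.differentiableAt hp
      exact h3.clm_apply (differentiableAt_const _)
    refine DifferentiableAt.fun_sum fun i _ => DifferentiableAt.mul ?_ ?_
    · exact (differentiableAt_pi.1 h1.fst i).sub_const _
    · exact (differentiableAt_pi.1 h2.snd i).sub_const _
  · rw [mem_ball_zero_iff] at hz
    refine nd_norm_le_max _ _ (by positivity) m fun n hn => ?_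
    have h1 := h.iter_dist n z x (by linarith [hdom z hz n hn])
    have h2 := h.dY_bound x v n z r hr0 (hdom z hz n hn)
    have : (n : ℝ) ^ 2 * (d * ((R * ε) ^ 2 / r)) =
        ∑ i : Fin d, (n * R * ε) * (n * R * ε / r * 1) := by
      simp; ring
    rw [this]
    refine norm_sum_le_of_le _ fun i _ => ?_
    rw [norm_mul]
    gcongr
    · calc _ ≤ ‖((F z)^[n] x - x).1‖ := norm_le_pi_norm ((F z)^[n] x - x).1 i
        _ ≤ _ := (norm_fst_le _).trans h1
        _ ≤ _ := by gcongr
    · calc _ ≤ ‖(dY F x v z n - v).2‖ := norm_le_pi_norm (dY F x v z n - v).2 i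
        _ ≤ _ := (norm_snd_le _).trans h2
        _ ≤ _ := by gcongr
  · have hxδ : ρ x < δ := by
      have : 0 < (m + 1) * R * ε := by positivity
      linarith
    have : om F m x v = fun μ => ∑ i, Dm m (fun n =>
        (((F μ)^[n] x).1 i - x.1 i) * ((dY F x v μ n).2 i - v.2 i)) := by
      funext μ
      simp_rw [om, Dm_eq_sum, Finset.smul_sum]
      exact Finset.sum_comm
    rw [this]
    refine IsBigO.fun_sum fun i _ => Dm_mul_O m (fun μ n => ((F μ)^[n] x).1 i - x.1 i)
      (fun μ n => (dY F x v μ n).2 i - v.2 i) (fun μ => by simp) (fun μ => ?_) (fun k => ?_)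
      (fun k => ?_)
    · have : dY F x v μ 0 = v := by
        simp only [dY, Function.iterate_zero, id]
        rw [fderiv_snd]; rfl
      simp [this]
    · refine IsBigO.trans (IsBigO.of_bound 1 (Filter.Eventually.of_forall fun μ => ?_))
        (h.dl_O_fix (k + 1) x hxδ)
      rw [nd_sub_const]
      have := nd_map ((Pi.evalAddMonoidHom (fun _ : Fin d => ℂ) i).comp
        (AddMonoidHom.fst (Fin d → ℂ) (Fin d → ℂ))) (fun n => (F μ)^[n] x) (k + 1) 0
      have h3 : nd (fun n => ((F μ)^[n] x).1 i) (k + 1) 0 = (dl F (k + 1) (μ, x)).1 i := this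
      rw [h3, one_mul]
      exact (norm_le_pi_norm _ i).trans (norm_fst_le _)
    · refine IsBigO.trans (IsBigO.of_bound 1 (Filter.Eventually.of_forall fun μ => ?_))
        (h.dY_O x v hxδ (k + 1))
      rw [nd_sub_const]
      have := nd_map ((Pi.evalAddMonoidHom (fun _ : Fin d => ℂ) i).comp
        (AddMonoidHom.snd (Fin d → ℂ) (Fin d → ℂ))) (dY F x v μ) (k + 1) 0
      have h3 : nd (fun n => (dY F x v μ n).2 i) (k + 1) 0 =
        (nd (dY F x v μ) (k + 1) 0).2 i := this
      rw [h3, one_mul]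
      exact (norm_le_pi_norm _ i).trans (norm_snd_le _)

end Part5

section Part6

attribute [local fun_prop] analyticAt_fst analyticAt_snd

open Asymptotics Filter Topology

theorem fderiv_grad {d : ℕ} (S : CPhase d → ℂ) (x w : CPhase d) :
    fderiv ℂ S x w = ∑ i, (w.1 i * pGrad d S x i + w.2 i * qGrad d S x i) := by
  have h1 : w = ∑ i, (w.1 i • ((Pi.single i 1, 0) : CPhase d) +
      w.2 i • ((0, Pi.single i 1) : CPhase d)) := by
    ext j <;> simp [Prod.fst_sum, Prod.snd_sum, Finset.sum_apply, Pi.single_apply]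
  conv_lhs => rw [h1]
  rw [map_sum]
  refine Finset.sum_congr rfl fun i _ => ?_
  rw [map_add, map_smul, map_smul]
  rfl

/-- one step action -/
noncomputable def act {d : ℕ} (S : CPhase d → ℂ) (g : CPhase d → CPhase d) (x : CPhase d) : ℂ :=
  ∑ i, (g x).1 i * ((g x).2 i - x.2 i) - S ((g x).1, x.2)

theorem coord_an {d : ℕ} {g : CPhase d → CPhase d} {x : CPhase d} (hg : AnalyticAt ℂ g x) (i : Fin d) :
    AnalyticAt ℂ (fun y => (g y).1 i) x ∧ AnalyticAt ℂ (fun y => (g y).2 i) x := by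
  have h1 : AnalyticAt ℂ (fun y => (g y).1) x := analyticAt_fst.fun_comp hg
  have h2 : AnalyticAt ℂ (fun y => (g y).2) x := analyticAt_snd.fun_comp hg
  exact ⟨(analyticAt_pi_iff.1 h1) i, (analyticAt_pi_iff.1 h2) i⟩

theorem coord_fderiv {d : ℕ} {g : CPhase d → CPhase d} {x : CPhase d} {g' : CPhase d →L[ℂ] CPhase d}
    (hg : HasFDerivAt g g' x) (i : Fin d) :
    HasFDerivAt (fun y => (g y).1 i) ((ContinuousLinearMap.proj i).comp
      ((ContinuousLinearMap.fst ℂ (Fin d → ℂ) (Fin d → ℂ)).comp g')) x ∧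
    HasFDerivAt (fun y => (g y).2 i) ((ContinuousLinearMap.proj i).comp
      ((ContinuousLinearMap.snd ℂ (Fin d → ℂ) (Fin d → ℂ)).comp g')) x :=
  ⟨hasFDerivAt_pi'.1 hg.fst i, hasFDerivAt_pi'.1 hg.snd i⟩

theorem act_an {d : ℕ} {S : CPhase d → ℂ} {g : CPhase d → CPhase d} {x : CPhase d}
    (hg : AnalyticAt ℂ g x) (hS : AnalyticAt ℂ S ((g x).1, x.2)) : AnalyticAt ℂ (act S g) x := by
  refine AnalyticAt.fun_sub (Finset.analyticAt_fun_sum _ fun i _ => ?_) ?_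
  · exact (coord_an hg i).1.fun_mul ((coord_an hg i).2.fun_sub (coord_an analyticAt_id i).2)
  · exact AnalyticAt.fun_comp (g := S) (f := fun y : CPhase d => ((g y).1, y.2)) hS
      ((analyticAt_fst.fun_comp hg).prod analyticAt_snd)

theorem act_deriv {d : ℕ} {S : CPhase d → ℂ} {g : CPhase d → CPhase d} {x : CPhase d}
    (hg : AnalyticAt ℂ g x) (hS : AnalyticAt ℂ S ((g x).1, x.2))
    (h1 : (g x).2 = x.2 + pGrad d S ((g x).1, x.2))
    (h2 : x.1 = (g x).1 + qGrad d S ((g x).1, x.2)) (v : CPhase d) :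
    fderiv ℂ (act S g) x v =
      ∑ i, ((g x).1 i * (fderiv ℂ g x v).2 i - x.1 i * v.2 i) := by
  have hgd := hg.differentiableAt.hasFDerivAt
  have hid : HasFDerivAt (fun y : CPhase d => y) (ContinuousLinearMap.id ℂ (CPhase d)) x :=
    hasFDerivAt_id x
  have hs : HasFDerivAt (fun y : CPhase d => S ((g y).1, y.2)) _ x :=
    HasFDerivAt.comp (g := S) (f := fun y : CPhase d => ((g y).1, y.2)) x
      hS.differentiableAt.hasFDerivAt (hgd.fst.prodMk hasFDerivAt_snd)
  have ht := (HasFDerivAt.fun_sum (u := Finset.univ) fun i _ => (coord_fderiv hgd i).1.fun_mul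
    ((coord_fderiv hgd i).2.fun_sub (coord_fderiv hid i).2)).fun_sub hs
  have hA : HasFDerivAt (act S g) _ x := ht
  rw [hA.fderiv]
  simp only [sub_apply, sum_apply, add_apply, smul_apply, ContinuousLinearMap.comp_apply,
    smul_eq_mul, fderiv_grad S, ← Finset.sum_sub_distrib, ContinuousLinearMap.prod_apply,
    ContinuousLinearMap.coe_fst', ContinuousLinearMap.coe_snd', ContinuousLinearMap.proj_apply,
    ContinuousLinearMap.id_apply]
  refine Finset.sum_congr rfl fun i _ => ?_
  have e1 := congrFun h1 i
  have e2 := congrFun h2 i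
  simp only [Pi.add_apply] at e1 e2
  rw [e2, e1]
  ring

/-- the action of iterates -/
noncomputable def actn {d : ℕ} (S : CPhase d → ℂ) (g : CPhase d → CPhase d) (n : ℕ) (x : CPhase d) : ℂ :=
  ∑ j ∈ Finset.range n, act S g (g^[j] x)

structure Gen {d : ℕ} (S : CPhase d → ℂ) (g : CPhase d → CPhase d) (x : CPhase d) : Prop where
  an : AnalyticAt ℂ g x
  anS : AnalyticAt ℂ S ((g x).1, x.2)
  e1 : (g x).2 = x.2 + pGrad d S ((g x).1, x.2)
  e2 : x.1 = (g x).1 + qGrad d S ((g x).1, x.2)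

theorem actn_an {d : ℕ} {S : CPhase d → ℂ} {g : CPhase d → CPhase d} {x : CPhase d} (n : ℕ)
    (h : ∀ j < n, Gen S g (g^[j] x)) :
    AnalyticAt ℂ (g^[n]) x ∧ AnalyticAt ℂ (actn S g n) x ∧
    ∀ v, fderiv ℂ (actn S g n) x v =
      ∑ i, ((g^[n] x).1 i * (fderiv ℂ (g^[n]) x v).2 i - x.1 i * v.2 i) := by
  induction n with
  | zero =>
    have e : actn S g 0 = fun _ => 0 := by funext y; simp [actn]
    rw [e]
    refine ⟨analyticAt_id, analyticAt_const, fun v => ?_⟩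
    simp
  | succ n ih =>
    obtain ⟨i1, i2, i3⟩ := ih fun j hj => h j (by omega)
    have hn := h n (by omega)
    have e : actn S g (n + 1) = fun y => actn S g n y + act S g (g^[n] y) := by
      funext y; simp [actn, Finset.sum_range_succ]
    have e' : g^[n + 1] = fun y => g (g^[n] y) := by
      funext y; rw [Function.iterate_succ_apply']
    have ha := act_an hn.an hn.anS
    rw [e, e']
    refine ⟨hn.an.fun_comp i1, i2.fun_add (ha.fun_comp i1), fun v => ?_⟩
    have c1 : HasFDerivAt (fun y => act S g (g^[n] y)) _ x :=
      ha.differentiableAt.hasFDerivAt.comp x i1.differentiableAt.hasFDerivAt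
    have c2 : HasFDerivAt (fun y => g (g^[n] y)) _ x :=
      hn.an.differentiableAt.hasFDerivAt.comp x i1.differentiableAt.hasFDerivAt
    rw [(i2.differentiableAt.hasFDerivAt.fun_add c1).fderiv, c2.fderiv, add_apply, i3,
      ContinuousLinearMap.comp_apply, act_deriv hn.an hn.anS hn.e1 hn.e2, ← Finset.sum_add_distrib]
    refine Finset.sum_congr rfl fun i _ => ?_
    simp only [ContinuousLinearMap.comp_apply]
    ring

/-- the Hamiltonian -/
noncomputable def HH {d : ℕ} (S : CPhase d → ℂ) (g : CPhase d → CPhase d) (m : ℕ) (x : CPhase d) : ℂ :=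
  ∑ n ∈ Finset.range (m + 1), kap m n * (∑ i, x.1 i * (g^[n] x).2 i - actn S g n x)

theorem HH_an {d : ℕ} {S : CPhase d → ℂ} {g : CPhase d → CPhase d} {x : CPhase d} (m : ℕ)
    (h : ∀ j < m, Gen S g (g^[j] x)) : AnalyticAt ℂ (HH S g m) x := by
  refine Finset.analyticAt_fun_sum _ fun n hn => analyticAt_const.fun_mul ?_
  have hn' := Nat.lt_succ_iff.1 (Finset.mem_range.1 hn)
  obtain ⟨i1, i2, i3⟩ := actn_an n fun j hj => h j (by omega)
  refine AnalyticAt.fun_sub (Finset.analyticAt_fun_sum _ fun i _ => ?_) i2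
  exact (coord_an analyticAt_id i).1.fun_mul (coord_an i1 i).2

theorem HH_deriv {d : ℕ} {S : CPhase d → ℂ} {F : ℂ → CPhase d → CPhase d} {x : CPhase d} (m : ℕ)
    (h : ∀ j < m, Gen S (F 1) ((F 1)^[j] x))
    (hF : ∀ n ≤ m, DifferentiableAt ℂ (fun z : ℂ × CPhase d => (F z.1)^[n] z.2) (1, x))
    (v : CPhase d) :
    fderiv ℂ (HH S (F 1) m) x v =
      ∑ i, (v.1 i * (XX F m 1 x).2 i - (XX F m 1 x).1 i * v.2 i) - om F m x v 1 := by
  set g := F 1 with hg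
  have hdY : ∀ n ≤ m, dY F x v 1 n = fderiv ℂ (g^[n]) x v := fun n hn =>
    fderiv_partial (hF n hn) v
  have hid : HasFDerivAt (fun y : CPhase d => y) (ContinuousLinearMap.id ℂ (CPhase d)) x :=
    hasFDerivAt_id x
  have key : ∀ n ∈ Finset.range (m + 1), DifferentiableAt ℂ (fun x : CPhase d =>
      kap m n * (∑ i, x.1 i * (g^[n] x).2 i - actn S g n x)) x := by
    intro n hn
    have hn' := Nat.lt_succ_iff.1 (Finset.mem_range.1 hn)
    obtain ⟨i1, i2, i3⟩ := actn_an n fun j hj => h j (by omega)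
    exact ((((HasFDerivAt.fun_sum (u := Finset.univ) fun i _ => (coord_fderiv hid i).1.fun_mul
      (coord_fderiv i1.differentiableAt.hasFDerivAt i).2)).fun_sub
      i2.differentiableAt.hasFDerivAt).const_mul _).differentiableAt
  have hA : fderiv ℂ (HH S g m) x = ∑ n ∈ Finset.range (m + 1), fderiv ℂ (fun x : CPhase d =>
      kap m n * (∑ i, x.1 i * (g^[n] x).2 i - actn S g n x)) x := fderiv_fun_sum key
  rw [hA]
  have hk : ∑ n ∈ Finset.range (m + 1), kap m n = 0 := by
    have := Dm_const m (1 : ℂ)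
    rw [Dm_eq_sum] at this
    simpa using this
  have hX1 : ∀ i, (XX F m 1 x).1 i = ∑ n ∈ Finset.range (m + 1), kap m n * (g^[n] x).1 i := by
    intro i
    rw [XX, Dm_eq_sum]
    simp [Prod.fst_sum, hg]
  have hX2 : ∀ i, (XX F m 1 x).2 i = ∑ n ∈ Finset.range (m + 1), kap m n * (g^[n] x).2 i := by
    intro i
    rw [XX, Dm_eq_sum]
    simp [Prod.snd_sum, hg]
  have hL : ∑ i, (v.1 i * (XX F m 1 x).2 i - (XX F m 1 x).1 i * v.2 i) =
      ∑ n ∈ Finset.range (m + 1), kap m n *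
        ∑ i, (v.1 i * (g^[n] x).2 i - (g^[n] x).1 i * v.2 i + 2 * x.1 i * v.2 i) := by
    simp_rw [Finset.sum_add_distrib, mul_add]
    rw [Finset.sum_add_distrib, ← Finset.sum_mul (s := Finset.range (m + 1)), hk, zero_mul, add_zero]
    simp_rw [Finset.mul_sum]
    rw [Finset.sum_comm]
    refine Finset.sum_congr rfl fun i _ => ?_
    rw [hX1, hX2, Finset.mul_sum, Finset.sum_mul, ← Finset.sum_sub_distrib]
    refine Finset.sum_congr rfl fun n _ => ?_
    ring
  rw [hL, om, Dm_eq_sum, ← Finset.sum_sub_distrib, sum_apply]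
  refine Finset.sum_congr rfl fun n hn => ?_
  have hn' := Nat.lt_succ_iff.1 (Finset.mem_range.1 hn)
  obtain ⟨i1, i2, i3⟩ := actn_an n fun j hj => h j (by omega)
  have hq := (((HasFDerivAt.fun_sum (u := Finset.univ) fun i _ => (coord_fderiv hid i).1.fun_mul
      (coord_fderiv i1.differentiableAt.hasFDerivAt i).2)).fun_sub
      i2.differentiableAt.hasFDerivAt).const_mul (kap m n)
  rw [hdY n hn', hq.fderiv]
  simp only [sub_apply, sum_apply, add_apply, smul_apply, ContinuousLinearMap.comp_apply,
    smul_eq_mul, i3, ← Finset.sum_sub_distrib, ← mul_sub,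
    ContinuousLinearMap.coe_fst', ContinuousLinearMap.coe_snd', ContinuousLinearMap.proj_apply,
    ContinuousLinearMap.id_apply]
  congr 1
  refine Finset.sum_congr rfl fun i _ => ?_
  ring

theorem hamVF_dist {d : ℕ} {S : CPhase d → ℂ} {F : ℂ → CPhase d → CPhase d} {x : CPhase d} (m : ℕ)
    (h : ∀ j < m, Gen S (F 1) ((F 1)^[j] x))
    (hF : ∀ n ≤ m, DifferentiableAt ℂ (fun z : ℂ × CPhase d => (F z.1)^[n] z.2) (1, x))
    (M : ℝ) (hM0 : 0 ≤ M) (hM : ∀ v, ‖v‖ ≤ 1 → ‖om F m x v 1‖ ≤ M) :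
    ‖hamVF d (HH S (F 1) m) x - XX F m 1 x‖ ≤ M := by
  refine (norm_prod_le_iff).2 ⟨(pi_norm_le_iff_of_nonneg hM0).2 fun i => ?_,
    (pi_norm_le_iff_of_nonneg hM0).2 fun i => ?_⟩
  · have := HH_deriv m h hF (0, Pi.single i 1)
    have e : (hamVF d (HH S (F 1) m) x - XX F m 1 x).1 i = om F m x (0, Pi.single i 1) 1 := by
      simp only [Prod.fst_sub, Pi.sub_apply, hamVF, Pi.neg_apply, qGrad, this]
      simp [Pi.single_apply]
    rw [e]
    exact hM _ (by simp [Prod.norm_def, Pi.norm_single])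
  · have := HH_deriv m h hF (Pi.single i 1, 0)
    have e : (hamVF d (HH S (F 1) m) x - XX F m 1 x).2 i = -om F m x (Pi.single i 1, 0) 1 := by
      simp only [Prod.snd_sub, Pi.sub_apply, hamVF, pGrad, this]
      simp [Pi.single_apply]
    rw [e, norm_neg]
    exact hM _ (by simp [Prod.norm_def, Pi.norm_single])

end Part6

section Part7

open Asymptotics Filter Topology

open scoped NNReal in
theorem flow_exists {E : Type*} [NormedAddCommGroup E] [NormedSpace ℝ E] [CompleteSpace E]
    (V : E → E) (x : E) (B r : ℝ) (hB : 0 ≤ B) (hr : 21 / 20 * B ≤ r) (K : ℝ≥0)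
    (hb : ∀ y ∈ Metric.closedBall x r, ‖V y‖ ≤ B)
    (hl : LipschitzOnWith K V (Metric.closedBall x r)) :
    ∃ γ : ℝ → E, γ 0 = x ∧ ∀ t ∈ Set.Icc (0 : ℝ) 1,
      γ t ∈ Metric.closedBall x r ∧ HasDerivAt γ (V (γ t)) t := by
  have hr0 : 0 ≤ r := by linarith
  lift r to ℝ≥0 using hr0
  lift B to ℝ≥0 using hB
  let t₀ : Set.Icc (-1 / 20 : ℝ) (21 / 20) := ⟨0, by norm_num, by norm_num⟩
  have hpl : IsPicardLindelof (fun _ => V) t₀ x r 0 B K := by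
    refine IsPicardLindelof.of_time_independent hb hl ?_
    have : max ((21 / 20 : ℝ) - t₀) (t₀ - (-1 / 20)) = 21 / 20 := by
      simp only [t₀]; norm_num
    rw [this]
    simp only [NNReal.coe_zero, sub_zero]
    linarith
  obtain ⟨α, hα⟩ := ODE.FunSpace.exists_isFixedPt_next hpl (Metric.mem_closedBall_self le_rfl)
  have h1 : ∀ t ∈ Set.Icc (-1 / 20 : ℝ) (21 / 20),
      HasDerivWithinAt α.compProj (V (α.compProj t)) (Set.Icc (-1 / 20 : ℝ) (21 / 20)) t := by
    intro t ht
    apply (ODE.hasDerivWithinAt_picard_Icc t₀.2 hpl.continuousOn_uncurry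
      α.continuous_compProj.continuousOn (fun _ ht' ↦ α.compProj_mem_closedBall hpl.mul_max_le)
      x ht).congr_of_mem _ ht
    intro t' ht'
    nth_rw 1 [← hα]
    rw [ODE.FunSpace.compProj_of_mem ht', ODE.FunSpace.next_apply]
  refine ⟨α.compProj, ?_, fun t ht => ⟨α.compProj_mem_closedBall hpl.mul_max_le, ?_⟩⟩
  · have : α.compProj t₀ = x := by
      rw [ODE.FunSpace.compProj_val, ← hα, ODE.FunSpace.next_apply₀]
    exact this
  · exact (h1 t ⟨by linarith [ht.1], by linarith [ht.2]⟩).hasDerivAt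
      (Icc_mem_nhds (by linarith [ht.1]) (by linarith [ht.2]))

theorem exp_three_fifths : Real.exp (3 / 5) ≤ 19 / 10 := by
  have h := Real.exp_bound' (x := 3 / 5) (by norm_num) (by norm_num) (n := 4) (by norm_num)
  refine h.trans ?_
  norm_num [Finset.sum_range_succ, Nat.factorial]

theorem compare {E : Type*} [NormedAddCommGroup E] [NormedSpace ℝ E]
    (V X : E → E) (s : Set E) (η1 η2 : ℝ) (h1 : 0 ≤ η1) (h2 : 0 ≤ η2)
    (hl : ∀ y ∈ s, ∀ z ∈ s, ‖X y - X z‖ ≤ 3 / 5 * ‖y - z‖)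
    (hVX : ∀ y ∈ s, ‖V y - X y‖ ≤ η1) (γ p p' : ℝ → E) (h0 : γ 0 = p 0)
    (hγ : ∀ t ∈ Set.Icc (0 : ℝ) 1, γ t ∈ s ∧ HasDerivAt γ (V (γ t)) t)
    (hp : ∀ t ∈ Set.Icc (0 : ℝ) 1, p t ∈ s ∧ HasDerivAt p (p' t) t ∧ ‖p' t - X (p t)‖ ≤ η2) :
    ‖γ 1 - p 1‖ ≤ 3 / 2 * (η1 + η2) := by
  have hK : (((3 / 5 : ℝ).toNNReal : NNReal) : ℝ) = 3 / 5 := Real.coe_toNNReal _ (by norm_num)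
  have hX : LipschitzOnWith (3 / 5 : ℝ).toNNReal X s := by
    refine LipschitzOnWith.of_dist_le_mul fun y hy z hz => ?_
    rw [hK, dist_eq_norm, dist_eq_norm]
    exact hl y hy z hz
  have hsub : ∀ t ∈ Set.Ico (0 : ℝ) 1, t ∈ Set.Icc (0 : ℝ) 1 := fun t ht => Set.Ico_subset_Icc_self ht
  have := dist_le_of_approx_trajectories_ODE_of_mem (v := fun _ => X) (s := fun _ => s)
    (f := γ) (f' := fun t => V (γ t)) (g := p) (g' := p') (a := 0) (b := 1) (δ := 0) (εf := η1)
    (εg := η2) (fun _ _ => hX)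
    (fun t ht => (hγ t ht).2.continuousAt.continuousWithinAt)
    (fun t ht => (hγ t (hsub t ht)).2.hasDerivWithinAt)
    (fun t ht => by rw [dist_eq_norm]; exact hVX _ (hγ t (hsub t ht)).1)
    (fun t ht => (hγ t (hsub t ht)).1)
    (fun t ht => (hp t ht).2.1.continuousAt.continuousWithinAt)
    (fun t ht => (hp t (hsub t ht)).2.1.hasDerivWithinAt)
    (fun t ht => by rw [dist_eq_norm]; exact (hp t (hsub t ht)).2.2)
    (fun t ht => (hp t (hsub t ht)).1) (by rw [h0, dist_self]) 1 (by norm_num)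
  rw [gronwallBound_of_K_ne_0 (by rw [hK]; norm_num), hK, dist_eq_norm] at this
  refine this.trans ?_
  have he := exp_three_fifths
  have e : (3 / 5 : ℝ) * (1 - 0) = 3 / 5 := by norm_num
  simp only [e, zero_mul, zero_add]
  nlinarith [mul_nonneg (add_nonneg h1 h2) (sub_nonneg.2 he)]

end Part7

section Part8

open Asymptotics Filter Topology

/-- weighted geometric sum -/
noncomputable def Tm (m : ℕ) : ℝ := ∑ k ∈ Finset.range m, 1 / ((k + 1 : ℕ) : ℝ) * (2 / 3) ^ k

theorem Tm_one : Tm 1 = 1 := by simp [Tm]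

theorem Tm_le (m : ℕ) (hm : 1 ≤ m) : Tm m ≤ 2 - 3 / 2 * (2 / 3) ^ m := by
  induction m, hm using Nat.le_induction with
  | base => simp [Tm]; norm_num
  | succ m hm ih =>
    rw [Tm, Finset.sum_range_succ, ← Tm, pow_succ]
    have h1 : 1 / ((m + 1 : ℕ) : ℝ) ≤ 1 / 2 := by
      have : (1 : ℝ) ≤ m := by exact_mod_cast hm
      push_cast
      gcongr
      linarith
    have h2 : (0 : ℝ) ≤ (2 / 3) ^ m := by positivity
    nlinarith [mul_le_mul_of_nonneg_right h1 h2]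

theorem Tm_le_two (m : ℕ) : Tm m ≤ 2 := by
  rcases Nat.eq_zero_or_pos m with rfl | hm
  · simp [Tm]
  · have := Tm_le m hm
    have h2 : (0 : ℝ) ≤ (2 / 3) ^ m := by positivity
    linarith

theorem Hm_ge (m : ℕ) (hm : 1 ≤ m) : 1 ≤ Hm m := by
  induction m, hm using Nat.le_induction with
  | base => simp [Hm]
  | succ m hm ih =>
    rw [Hm, Finset.sum_range_succ, ← Hm]
    have : (0 : ℝ) ≤ 1 / ((m + 1 : ℕ) : ℝ) := by positivity
    linarith

theorem Hm_le (m : ℕ) : Hm m ≤ m := by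
  induction m with
  | zero => simp [Hm]
  | succ m ih =>
    rw [Hm, Finset.sum_range_succ, ← Hm]
    have : 1 / ((m + 1 : ℕ) : ℝ) ≤ 1 := by
      rw [div_le_one (by positivity)]
      push_cast
      linarith [(Nat.cast_nonneg m : (0 : ℝ) ≤ m)]
    push_cast at this ⊢
    linarith

theorem Hm_pow (m : ℕ) (hm : 1 ≤ m) : Hm m * (2 / 3) ^ m ≤ 2 / 3 := by
  induction m, hm using Nat.le_induction with
  | base => simp [Hm]
  | succ m hm ih =>
    have hH := Hm_ge m hm
    refine le_trans ?_ ih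
    rw [Hm, Finset.sum_range_succ, ← Hm, pow_succ]
    have h1 : 1 / ((m + 1 : ℕ) : ℝ) ≤ 1 / 2 := by
      have : (1 : ℝ) ≤ m := by exact_mod_cast hm
      push_cast
      gcongr
      linarith
    have h2 : (0 : ℝ) ≤ (2 / 3) ^ m := by positivity
    have h3 : (Hm m + 1 / ((m + 1 : ℕ) : ℝ)) * (2 / 3) ≤ Hm m := by linarith
    nlinarith [mul_le_mul_of_nonneg_right h3 h2]

theorem five_sixth (m : ℕ) : (m : ℝ) * (5 / 6) ^ m ≤ 5 := by
  have h := one_add_mul_le_pow (a := (1 / 5 : ℝ)) (by norm_num) m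
  have h0 : (0 : ℝ) < (5 / 6) ^ m := by positivity
  have h1 : (1 + 1 / 5 : ℝ) ^ m * (5 / 6) ^ m = 1 := by
    rw [← mul_pow]; norm_num
  nlinarith [mul_le_mul_of_nonneg_right h h0.le]

theorem om_num (m d : ℕ) (hm : 1 ≤ m) (hd : 1 ≤ d) (κ ε δ : ℝ) (hκ : 1 < κ) (hε : 0 < ε)
    (hδ : δ = 6 * ((m : ℝ) + d) * ε * κ) :
    (m + 1) * (12 / 5 * κ) * ε < δ / 2 ∧
    m * 2 ^ m / 2 * (d * ((12 / 5 * κ * ε) ^ 2 / (δ / 2 - (m + 1) * (12 / 5 * κ) * ε))) *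
      (1 / (12 / 5 * κ)) ^ (m + 1) ≤ 2 * (ε * (1 / κ) ^ m) := by
  have hm' : (1 : ℝ) ≤ m := by exact_mod_cast hm
  have hd' : (1 : ℝ) ≤ d := by exact_mod_cast hd
  have hκε : 0 < κ * ε := by positivity
  have hA : (0 : ℝ) < m + 5 * d - 4 := by linarith
  have e1 : δ / 2 - (m + 1) * (12 / 5 * κ) * ε = 3 / 5 * (κ * ε) * (m + 5 * d - 4) := by
    rw [hδ]; ring
  have hpos : 0 < 3 / 5 * (κ * ε) * (m + 5 * d - 4) := by positivity
  refine ⟨by linarith, ?_⟩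
  rw [e1]
  have e2 : m * 2 ^ m / 2 * (d * ((12 / 5 * κ * ε) ^ 2 / (3 / 5 * (κ * ε) * (m + 5 * d - 4)))) *
      (1 / (12 / 5 * κ)) ^ (m + 1) =
      2 * (ε * (1 / κ) ^ m) * ((m * d * (5 / 6) ^ m) / (m + 5 * d - 4)) := by
    have : (5 / 6 : ℝ) ^ m = 2 ^ m * (5 / 12) ^ m := by rw [← mul_pow]; norm_num
    have h2 : (1 / (12 / 5 * κ)) = 5 / 12 * (1 / κ) := by field_simp
    have hκ0 : κ ≠ 0 := (by linarith : (0:ℝ) < κ).ne'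
    rw [this, h2, pow_succ _ m, mul_pow (5 / 12 : ℝ) (1 / κ) m]
    generalize (1 / κ) ^ m = u
    generalize (5 / 12 : ℝ) ^ m = w
    have hA' := hA.ne'
    generalize (m + 5 * d - 4 : ℝ) = A at hA'
    field_simp
    ring
  rw [e2]
  have h3 : (m * d * (5 / 6) ^ m) / (m + 5 * d - 4 : ℝ) ≤ 1 := by
    rw [div_le_one hA]
    have h5 := five_sixth m
    have h6 : (5 / 6 : ℝ) ^ m ≤ 1 := pow_le_one₀ (by norm_num) (by norm_num)
    nlinarith [mul_le_mul_of_nonneg_left h5 (sub_nonneg.2 hd'), mul_le_mul_of_nonneg_left h6 (by linarith : (0:ℝ) ≤ m)]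
  have h4 : 0 ≤ 2 * (ε * (1 / κ) ^ m) := by positivity
  nlinarith [mul_le_mul_of_nonneg_left h3 h4]

theorem PP_hasDerivAt {d : ℕ} (F : ℂ → CPhase d → CPhase d) (m : ℕ) (x : CPhase d) (t : ℝ) (μ : ℂ) :
    HasDerivAt (fun t : ℝ => PP F m x t μ) (PPd F m x t μ) t := by
  refine HasDerivAt.fun_sum fun k _ => ?_
  exact (((bb k).hasDerivAt (t : ℂ)).comp_ofReal).smul_const _

theorem hamVF_diff {d : ℕ} {H : CPhase d → ℂ} {x : CPhase d} (hH : AnalyticAt ℂ H x) :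
    DifferentiableAt ℂ (hamVF d H) x := by
  have h := hH.fderiv.differentiableAt
  refine DifferentiableAt.prodMk (DifferentiableAt.fun_neg ?_) ?_
  · exact differentiableAt_pi.2 fun i => h.clm_apply (differentiableAt_const _)
  · exact differentiableAt_pi.2 fun i => h.clm_apply (differentiableAt_const _)

theorem core {d : ℕ} (hd : 1 ≤ d) {ρ : CPhase d → ℝ} {δ ε : ℝ} {F : ℂ → CPhase d → CPhase d}
    (h : Fam ρ δ ε F) {S : CPhase d → ℂ} (hG : ∀ x, ρ x + 2 * ε < δ → Gen S (F 1) x)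
    (m : ℕ) (hm : 1 ≤ m) (κ q : ℝ) (hκ : 1 < κ) (hδ : δ = 6 * ((m : ℝ) + d) * ε * κ)
    (hq : q = ε * (1 / κ) ^ m) :
    (∀ x, ρ x ≤ δ / 2 → ‖XX F m 1 x‖ ≤ 2 * ε) ∧
    (∀ x, ρ x ≤ δ / 2 → AnalyticAt ℂ (HH S (F 1) m) x) ∧
    (∀ x, ρ x ≤ δ / 2 → ‖hamVF d (HH S (F 1) m) x - XX F m 1 x‖ ≤ 2 * q) ∧
    (∀ x, ρ x ≤ δ / 2 → ‖hamVF d (HH S (F 1) m) x‖ ≤ 4 * ε) ∧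
    (∀ x, ρ x ≤ 0 → ∃ γ : ℝ → CPhase d, γ 0 = x ∧ (∀ t ∈ Set.Icc (0 : ℝ) 1,
      ρ (γ t) ≤ δ / 2 ∧ HasDerivAt γ (XX F m 1 (γ t)) t) ∧ ‖γ 1 - F 1 x‖ ≤ 2 * q) ∧
    (∀ x, ρ x ≤ 0 → ∃ γ : ℝ → CPhase d, γ 0 = x ∧ (∀ t ∈ Set.Icc (0 : ℝ) 1,
      ρ (γ t) ≤ δ / 2 ∧ HasDerivAt γ (hamVF d (HH S (F 1) m) (γ t)) t) ∧
      ‖γ 1 - F 1 x‖ ≤ 5 * q) := by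
  have hε := h.pos
  have hm' : (1 : ℝ) ≤ m := by exact_mod_cast hm
  have hd' : (1 : ℝ) ≤ d := by exact_mod_cast hd
  have hN : (2 : ℝ) ≤ m + d := by linarith
  have hNε : 6 * ((m : ℝ) + d) * ε < δ := by
    rw [hδ]; exact lt_mul_of_one_lt_right (by positivity) hκ
  have hδ12 : 12 * ε < δ := by nlinarith
  have hmε : 6 * (m + 1) * ε < δ := by nlinarith
  have hq0 : 0 ≤ q := by rw [hq]; positivity
  have hqε : q ≤ ε := by
    rw [hq]
    have : (1 / κ) ^ m ≤ 1 := pow_le_one₀ (by positivity) (by rw [div_le_one (by linarith)]; exact hκ.le)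
    nlinarith
  have hR : (m + 1) * (3 * κ) * ε ≤ δ / 2 := by
    rw [hδ]
    have : 0 < κ * ε := by positivity
    nlinarith
  -- weighted sums
  have hsum : ∀ (c : ℕ → ℂ) (y : CPhase d), ρ y ≤ δ / 2 → (∀ k, ‖c k‖ ≤ 1 / ((k + 1 : ℕ) : ℝ)) →
      ‖∑ k ∈ Finset.range m, c k • dl F (k + 1) (1, y)‖ ≤ Tm m * ε := by
    intro c y hy hc
    rw [Tm, Finset.sum_mul]
    refine norm_sum_le_of_le _ fun k hk => ?_
    rw [norm_smul, mul_assoc]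
    have h1 := h.dl_half m (3 * κ) hR k (Finset.mem_range.1 hk) y hy 1 (by simp; linarith)
    rw [norm_one, one_mul, mul_one] at h1
    have h2 : 2 / (3 * κ) ≤ 2 / 3 := by
      gcongr; linarith
    have h3 : (2 / (3 * κ)) ^ k ≤ (2 / 3) ^ k := by gcongr
    have h4 : ‖dl F (k + 1) (1, y)‖ ≤ (2 / 3) ^ k * ε := by
      rw [mul_comm _ ε]
      exact h1.trans (by gcongr)
    exact mul_le_mul (hc k) h4 (norm_nonneg _) (by positivity)
  have hX : ∀ x, ρ x ≤ δ / 2 → ‖XX F m 1 x‖ ≤ Tm m * ε := by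
    intro x hx
    rw [XX_eq]
    refine hsum _ x hx fun k => ?_
    rw [norm_div, norm_pow, norm_neg, norm_one, one_pow, Complex.norm_natCast]
  have hT2 := Tm_le_two m
  have hX2 : ∀ x, ρ x ≤ δ / 2 → ‖XX F m 1 x‖ ≤ 2 * ε := fun x hx => (hX x hx).trans (by gcongr)
  have hitan : ∀ x, ρ x ≤ δ / 2 → ∀ n ≤ m,
      DifferentiableAt ℂ (fun z : ℂ × CPhase d => (F z.1)^[n] z.2) (1, x) := by
    intro x hx n hn
    have hn' : (n : ℝ) ≤ m := by exact_mod_cast hn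
    refine (h.iter_an n 1 x ?_).differentiableAt
    rw [norm_one, mul_one]
    nlinarith
  have hgen : ∀ x, ρ x ≤ δ / 2 → ∀ j < m, Gen S (F 1) ((F 1)^[j] x) := by
    intro x hx j hj
    have hj' : (j : ℝ) + 1 ≤ m := by exact_mod_cast hj
    have h1 := h.iter_dist j 1 x (by rw [norm_one, mul_one]; nlinarith)
    rw [norm_one, mul_one] at h1
    refine hG _ ?_
    have := h.lip ((F 1)^[j] x) x
    nlinarith
  have hHan : ∀ x, ρ x ≤ δ / 2 → AnalyticAt ℂ (HH S (F 1) m) x := fun x hx => HH_an m (hgen x hx)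
  have hdist : ∀ x, ρ x ≤ δ / 2 → ‖hamVF d (HH S (F 1) m) x - XX F m 1 x‖ ≤ 2 * q := by
    intro x hx
    refine hamVF_dist m (hgen x hx) (hitan x hx) _ (by positivity) fun v hv => ?_
    obtain ⟨n1, n2⟩ := om_num m d hm hd κ ε δ hκ hε hδ
    rw [hq]
    exact (om_bound h m x v hv hx (12 / 5 * κ) (by linarith) n1).trans n2
  have hham : ∀ x, ρ x ≤ δ / 2 → ‖hamVF d (HH S (F 1) m) x‖ ≤ 4 * ε := by
    intro x hx
    have := norm_add_le (hamVF d (HH S (F 1) m) x - XX F m 1 x) (XX F m 1 x)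
    rw [sub_add_cancel] at this
    linarith [hdist x hx, hX2 x hx]
  refine ⟨hX2, hHan, hdist, hham, ?_⟩
  -- flows
  have hball : ∀ x, ρ x ≤ 0 → ∀ y ∈ Metric.ball x (21 / 5 * ε + (δ / 2 - 21 / 5 * ε)), ρ y ≤ δ / 2 := by
    intro x hx y hy
    rw [mem_ball_iff_norm] at hy
    linarith [h.lip y x]
  have hcball : ∀ x, ρ x ≤ 0 → ∀ y ∈ Metric.closedBall x (21 / 5 * ε), ρ y ≤ δ / 2 := by
    intro x hx y hy
    rw [mem_closedBall_iff_norm] at hy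
    linarith [h.lip y x]
  have hr0 : 0 < δ / 2 - 21 / 5 * ε := by linarith
  have hXd : ∀ x, ρ x ≤ δ / 2 → DifferentiableAt ℂ (XX F m 1) x := by
    intro x hx
    have e : XX F m 1 = fun y => ∑ n ∈ Finset.range (m + 1), kap m n • (F 1)^[n] y := by
      funext y; rw [XX, Dm_eq_sum]
    rw [e]
    refine DifferentiableAt.fun_sum fun n hn => DifferentiableAt.fun_const_smul ?_ _
    exact DifferentiableAt.fun_comp' x (g := fun z : ℂ × CPhase d => (F z.1)^[n] z.2)
      (f := fun y => ((1 : ℂ), y)) (hitan x hx n (Nat.lt_succ_iff.1 (Finset.mem_range.1 hn)))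
      (by fun_prop)
  have hLX : ∀ x, ρ x ≤ 0 → ∀ y ∈ Metric.closedBall x (21 / 5 * ε),
      ∀ z ∈ Metric.closedBall x (21 / 5 * ε), ‖XX F m 1 y - XX F m 1 z‖ ≤ 3 / 5 * ‖y - z‖ := by
    intro x hx y hy z hz
    rw [mem_closedBall_iff_norm] at hy hz
    have h1 := lip_bound hr0 (fun w hw => (hXd w (hball x hx w hw)).differentiableWithinAt)
      (fun w hw => hX w (hball x hx w hw)) hz hy
    refine h1.trans ?_
    refine mul_le_mul_of_nonneg_right ?_ (norm_nonneg _)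
    rw [div_le_iff₀ hr0]
    rcases Nat.lt_or_ge m 2 with h2 | h2
    · have : m = 1 := by omega
      rw [this, Tm_one]
      linarith
    · have h3 : (2 : ℝ) ≤ m := by exact_mod_cast h2
      have : 18 * ε < δ := by nlinarith
      nlinarith
  have hLH : ∀ x, ρ x ≤ 0 → LipschitzOnWith (4 * ε / (δ / 2 - 21 / 5 * ε)).toNNReal
      (hamVF d (HH S (F 1) m)) (Metric.closedBall x (21 / 5 * ε)) := by
    intro x hx
    refine LipschitzOnWith.of_dist_le_mul fun y hy z hz => ?_
    rw [Real.coe_toNNReal _ (by positivity), dist_eq_norm, dist_eq_norm]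
    rw [mem_closedBall_iff_norm] at hy hz
    exact lip_bound hr0 (fun w hw => (hamVF_diff (hHan w (hball x hx w hw))).differentiableWithinAt)
      (fun w hw => hham w (hball x hx w hw)) hz hy
  have hp : ∀ x, ρ x ≤ 0 → ∀ t ∈ Set.Icc (0 : ℝ) 1,
      PP F m x t 1 ∈ Metric.closedBall x (21 / 5 * ε) ∧
      HasDerivAt (fun t : ℝ => PP F m x t 1) (PPd F m x t 1) t ∧
      ‖PPd F m x t 1 - XX F m 1 (PP F m x t 1)‖ ≤ 4 / 3 * q := by
    intro x hx t ht
    refine ⟨?_, PP_hasDerivAt F m x t 1, ?_⟩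
    · rw [mem_closedBall_iff_norm, PP_eq, add_sub_cancel_left]
      refine (hsum _ x (by linarith) fun k => (bb_bound (k + 1) (by omega) t ht.1 ht.2).1).trans ?_
      nlinarith
    · have h1 := h.defect_bound m (3 * κ) (by positivity) hR (by
        have h2 := Hm_le m
        have h3 : 0 < κ * ε := by positivity
        rw [hδ]
        nlinarith) x hx t ht.1 ht.2 1 (by simp; linarith)
      refine h1.trans ?_
      have h2 := Hm_pow m hm
      have e : 2 * Hm m * (3 * κ / 2) * ε * (‖(1 : ℂ)‖ / (3 * κ / 2)) ^ (m + 1) =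
          2 * (Hm m * (2 / 3) ^ m) * (ε * (1 / κ) ^ m) := by
        have e2 : ‖(1 : ℂ)‖ / (3 * κ / 2) = 2 / 3 * (1 / κ) := by rw [norm_one]; field_simp
        rw [e2, pow_succ, mul_pow]
        field_simp
      rw [e, ← hq]
      nlinarith [mul_le_mul_of_nonneg_right h2 hq0]
  have hp0 : ∀ x, PP F m x ((0 : ℝ) : ℂ) 1 = x := by
    intro x
    have := PP_nat F m x 1 0 (by omega)
    simpa using this
  have hp1 : ∀ x, PP F m x ((1 : ℝ) : ℂ) 1 = F 1 x := by
    intro x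
    have := PP_nat F m x 1 1 hm
    simpa using this
  constructor
  · intro x hx
    have hlip : LipschitzOnWith (3 / 5 : ℝ).toNNReal (XX F m 1) (Metric.closedBall x (21 / 5 * ε)) := by
      refine LipschitzOnWith.of_dist_le_mul fun y hy z hz => ?_
      rw [Real.coe_toNNReal _ (by norm_num), dist_eq_norm, dist_eq_norm]
      exact hLX x hx y hy z hz
    obtain ⟨γ, g0, g1⟩ := flow_exists (XX F m 1) x (2 * ε) (21 / 5 * ε) (by positivity)
      (by linarith) _ (fun y hy => hX2 y (hcball x hx y hy)) hlip
    refine ⟨γ, g0, fun t ht => ⟨hcball x hx _ (g1 t ht).1, (g1 t ht).2⟩, ?_⟩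
    have := compare (XX F m 1) (XX F m 1) (Metric.closedBall x (21 / 5 * ε)) 0 (4 / 3 * q) le_rfl
      (by positivity) (hLX x hx) (fun y _ => by simp) γ (fun t => PP F m x t 1)
      (fun t => PPd F m x t 1) (by rw [g0, hp0]) g1 (hp x hx)
    rw [hp1] at this
    linarith
  · intro x hx
    obtain ⟨γ, g0, g1⟩ := flow_exists (hamVF d (HH S (F 1) m)) x (4 * ε) (21 / 5 * ε) (by positivity)
      (by linarith) _ (fun y hy => hham y (hcball x hx y hy)) (hLH x hx)
    refine ⟨γ, g0, fun t ht => ⟨hcball x hx _ (g1 t ht).1, (g1 t ht).2⟩, ?_⟩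
    have := compare (hamVF d (HH S (F 1) m)) (XX F m 1) (Metric.closedBall x (21 / 5 * ε)) (2 * q)
      (4 / 3 * q) (by positivity)
      (by positivity) (hLX x hx) (fun y hy => hdist y (hcball x hx y hy)) γ (fun t => PP F m x t 1)
      (fun t => PPd F m x t 1) (by rw [g0, hp0]) g1 (hp x hx)
    rw [hp1] at this
    linarith

end Part8

/-- **Polynomial-order embedding bounds.**
In the setting of the embedding theorem (`|∇S| ≤ ε` on `D`, `f` generated by
`P·q + S(P,q)`), for every integer `m` with `1 ≤ m < δ/(6ε) − d`, setting
`C_m = 6(m+d)/δ`: `‖X_m‖_{D₁} ≤ 2ε`; there is a Hamiltonian vector field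
`X̂_m = J∇H_m` on `D₁` with `‖X̂_m‖_{D₁} ≤ 4ε`; and
`‖Φ_{X_m} − f‖_{D₀} ≤ 3 C_m^m ε^{m+1}`, `‖Φ_{X̂_m} − f‖_{D₀} ≤ 5 C_m^m ε^{m+1}`,
`‖X̂_m − X_m‖_{D₁} ≤ 4 C_m^m ε^{m+1}`. -/
theorem polynomial_order_embedding_bounds (d : ℕ) (hd : 1 ≤ d)
    (D₀ : Set (CPhase d)) (δ ε : ℝ) (hδ : 0 < δ) (hε : 0 < ε)
    (D D₁ : Set (CPhase d))
    (hD : D = Metric.cthickening δ D₀)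
    (hD₁ : D₁ = Metric.cthickening (δ / 2) D₀)
    (S : CPhase d → ℂ) (hS : AnalyticOnNhd ℂ S D)
    (hεub : ∀ x ∈ D, max ‖pGrad d S x‖ ‖qGrad d S x‖ ≤ ε)
    (f : CPhase d → CPhase d)
    (hfa : AnalyticOnNhd ℂ f (Metric.thickening (3 * δ / 4) D₀))
    (hf : ∀ x ∈ Metric.thickening (3 * δ / 4) D₀,
      ((f x).1, x.2) ∈ D ∧
      x.1 = (f x).1 + qGrad d S ((f x).1, x.2) ∧
      (f x).2 = x.2 + pGrad d S ((f x).1, x.2))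
    (m : ℕ) (hm : 1 ≤ m)
    (hmlt : (m : ℝ) < δ / (6 * ε) - d) :
    (∀ x ∈ D₁, ‖interpVF d f m x‖ ≤ 2 * ε) ∧
    ∃ H : CPhase d → ℂ, AnalyticOnNhd ℂ H D₁ ∧
      (∀ x ∈ D₁, ‖hamVF d H x‖ ≤ 4 * ε) ∧
      (∃ Φ : CPhase d → CPhase d,
        (∀ x ∈ D₀, ∃ γ : ℝ → CPhase d, γ 0 = x ∧ γ 1 = Φ x ∧
          ∀ t ∈ Set.Icc (0 : ℝ) 1, γ t ∈ D₁ ∧ HasDerivAt γ (interpVF d f m (γ t)) t) ∧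
        ∀ x ∈ D₀, ‖Φ x - f x‖ ≤
          3 * (6 * ((m : ℝ) + d) / δ) ^ m * ε ^ (m + 1)) ∧
      (∃ Ψ : CPhase d → CPhase d,
        (∀ x ∈ D₀, ∃ γ : ℝ → CPhase d, γ 0 = x ∧ γ 1 = Ψ x ∧
          ∀ t ∈ Set.Icc (0 : ℝ) 1, γ t ∈ D₁ ∧ HasDerivAt γ (hamVF d H (γ t)) t) ∧
        ∀ x ∈ D₀, ‖Ψ x - f x‖ ≤
          5 * (6 * ((m : ℝ) + d) / δ) ^ m * ε ^ (m + 1)) ∧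
      (∀ x ∈ D₁, ‖hamVF d H x - interpVF d f m x‖ ≤
        4 * (6 * ((m : ℝ) + d) / δ) ^ m * ε ^ (m + 1)) := by
  subst hD hD₁
  rcases D₀.eq_empty_or_nonempty with rfl | hne
  · simp only [Metric.cthickening_empty]
    exact ⟨by simp, fun _ => 0, by simp [AnalyticOnNhd], by simp, ⟨id, by simp, by simp⟩,
      ⟨id, by simp, by simp⟩, by simp⟩
  have hm' : (1 : ℝ) ≤ m := by exact_mod_cast hm
  have hd' : (1 : ℝ) ≤ d := by exact_mod_cast hd
  have hNε : 6 * ((m : ℝ) + d) * ε < δ := by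
    have h1 : (m : ℝ) + d < δ / (6 * ε) := by linarith
    rw [lt_div_iff₀ (by positivity)] at h1
    linarith
  have hδ12 : 12 * ε < δ := by nlinarith
  have hmε : 6 * (m + 1) * ε < δ := by nlinarith
  set ρ : CPhase d → ℝ := fun x => Metric.infDist x D₀ with hρdef
  have hmemD : ∀ (r : ℝ), 0 ≤ r → ∀ x, x ∈ Metric.cthickening r D₀ ↔ ρ x ≤ r := by
    intro r hr x
    rw [Metric.mem_cthickening_iff, ENNReal.le_ofReal_iff_toReal_le (Metric.infEDist_ne_top hne) hr]
    rfl
  have hmemT : ∀ x, x ∈ Metric.thickening (3 * δ / 4) D₀ ↔ ρ x < 3 * δ / 4 := by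
    intro x
    rw [Metric.mem_thickening_iff_infDist_lt hne]
  have hρ0 : ∀ x ∈ D₀, ρ x ≤ 0 := fun x hx => (Metric.infDist_zero_of_mem hx).le
  have hlip : ∀ x y, ρ x ≤ ρ y + ‖x - y‖ := by
    intro x y
    rw [← dist_eq_norm]
    exact Metric.infDist_le_infDist_add_dist
  have hSa : ∀ x, ρ x ≤ δ → AnalyticAt ℂ S x := fun x hx => hS x ((hmemD δ hδ.le x).2 hx)
  have hpan : ∀ x, ρ x ≤ δ → AnalyticAt ℂ (pGrad d S) x := by
    intro x hx
    exact analyticAt_pi_iff.2 fun i => ((ContinuousLinearMap.apply ℂ ℂ ((Pi.single i 1, 0) : CPhase d)).analyticAt _).comp (hSa x hx).fderiv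
  have hqan : ∀ x, ρ x ≤ δ → AnalyticAt ℂ (qGrad d S) x := by
    intro x hx
    exact analyticAt_pi_iff.2 fun i => ((ContinuousLinearMap.apply ℂ ℂ ((0, Pi.single i 1) : CPhase d)).analyticAt _).comp (hSa x hx).fderiv
  obtain ⟨F, hF⟩ := implicit_family ρ hlip δ ε hε (pGrad d S) (qGrad d S) hpan hqan
    (fun x hx => (le_max_left _ _).trans (hεub x ((hmemD δ hδ.le x).2 hx)))
    (fun x hx => (le_max_right _ _).trans (hεub x ((hmemD δ hδ.le x).2 hx)))
  have hfam : Fam ρ δ ε F := ⟨hlip, hε, fun μ x hx => (hF μ x hx).1, fun μ x hx => (hF μ x hx).2.1⟩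
  have hG : ∀ x, ρ x + 2 * ε < δ → Gen S (F 1) x := by
    intro x hx
    obtain ⟨h1, h2, h3, h4, h5⟩ := hF 1 x (by rw [norm_one]; linarith)
    rw [one_smul] at h3 h4
    rw [norm_one, one_mul] at h2
    refine ⟨?_, hSa _ ?_, h4, h3⟩
    · exact AnalyticAt.fun_comp (g := fun z : ℂ × CPhase d => F z.1 z.2)
        (f := fun y => ((1 : ℂ), y)) h1 (analyticAt_const.prod analyticAt_id)
    · have h6 := hlip ((F 1 x).1, x.2) x
      have h7 : ‖((F 1 x).1, x.2) - x‖ ≤ ‖F 1 x - x‖ := by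
        have : ((F 1 x).1, x.2) - x = ((F 1 x - x).1, 0) := by ext <;> simp
        rw [this, Prod.norm_def, norm_zero, max_eq_left (norm_nonneg _)]
        exact norm_fst_le (F 1 x - x)
      linarith
  have hfF : ∀ x, ρ x < 3 * δ / 4 → f x = F 1 x := by
    intro x hx
    obtain ⟨h1, h2, h3, h4, h5⟩ := hF 1 x (by rw [norm_one]; linarith)
    obtain ⟨f1, f2, f3⟩ := hf x ((hmemT x).2 hx)
    have e1 : (f x).1 = (F 1 x).1 := by
      refine h5 _ ((hmemD δ hδ.le _).1 f1) ?_
      rw [one_smul]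
      exact eq_sub_of_add_eq f2.symm
    rw [one_smul] at h4
    exact Prod.ext e1 (by rw [f3, h4, e1])
  have hit : ∀ x, ρ x ≤ δ / 2 → ∀ n ≤ m, f^[n] x = (F 1)^[n] x := by
    intro x hx n
    induction n with
    | zero => intro _; rfl
    | succ n ih =>
      intro hn
      have hn' : (n : ℝ) + 1 ≤ m := by exact_mod_cast hn
      rw [Function.iterate_succ_apply', Function.iterate_succ_apply', ih (by omega)]
      refine hfF _ ?_
      have h1 := hfam.iter_dist n 1 x (by rw [norm_one, mul_one]; nlinarith)
      rw [norm_one, mul_one] at h1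
      have := hlip ((F 1)^[n] x) x
      nlinarith
  have hXint : ∀ x, ρ x ≤ δ / 2 → interpVF d f m x = XX F m 1 x := by
    intro x hx
    have e : interpVF d f m x = Dm m (fun n => f^[n] x) := by
      refine Finset.sum_congr rfl fun k _ => ?_
      rw [← finDiff_eq_nd]; rfl
    rw [e, XX, Dm_eq_sum, Dm_eq_sum]
    refine Finset.sum_congr rfl fun n hn => ?_
    rw [hit x hx n (Nat.lt_succ_iff.1 (Finset.mem_range.1 hn))]
  have hN0 : (0 : ℝ) < m + d := by linarith
  have hδ2 : 0 ≤ δ / 2 := by linarith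
  obtain ⟨c1, c2, c3, c4, c5, c6⟩ := core hd hfam hG m hm (δ / (6 * ((m : ℝ) + d) * ε))
    ((6 * ((m : ℝ) + d) / δ) ^ m * ε ^ (m + 1))
    (by rw [lt_div_iff₀ (by positivity)]; linarith) (by field_simp)
    (by rw [pow_succ, ← mul_assoc, ← mul_pow, mul_comm]; congr 2; field_simp)
  have hq0 : 0 ≤ (6 * ((m : ℝ) + d) / δ) ^ m * ε ^ (m + 1) := by positivity
  simp_rw [mul_assoc _ ((6 * ((m : ℝ) + d) / δ) ^ m) (ε ^ (m + 1))]
  choose! Γ g1 g2 g3 using c5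
  choose! Λ l1 l2 l3 using c6
  refine ⟨fun x hx => ?_, HH S (F 1) m, fun x hx => c2 x ((hmemD _ hδ2 x).1 hx),
    fun x hx => c4 x ((hmemD _ hδ2 x).1 hx),
    ⟨fun x => Γ x 1, fun x hx => ⟨Γ x, g1 x (hρ0 x hx), rfl, fun t ht => ?_⟩, fun x hx => ?_⟩,
    ⟨fun x => Λ x 1, fun x hx => ⟨Λ x, l1 x (hρ0 x hx), rfl, fun t ht => ?_⟩, fun x hx => ?_⟩,
    fun x hx => ?_⟩
  · have hx' := (hmemD _ hδ2 x).1 hx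
    rw [hXint x hx']
    exact c1 x hx'
  · obtain ⟨a, b⟩ := g2 x (hρ0 x hx) t ht
    exact ⟨(hmemD _ hδ2 _).2 a, by rw [hXint _ a]; exact b⟩
  · rw [hfF x (by linarith [hρ0 x hx])]
    exact (g3 x (hρ0 x hx)).trans (by linarith)
  · obtain ⟨a, b⟩ := l2 x (hρ0 x hx) t ht
    exact ⟨(hmemD _ hδ2 _).2 a, b⟩
  · rw [hfF x (by linarith [hρ0 x hx])]
    exact l3 x (hρ0 x hx)
  · have hx' := (hmemD _ hδ2 x).1 hx
    rw [hXint x hx']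
    exact (c3 x hx').trans (by linarith)
end

section
/- (Formal interpolation lemma) Let U ⊆ ℝ^s be open and let f_μ : U → ℝ^s be a family of maps, jointly analytic in (x,μ) for x ∈ U and |μ| ≤ μ̄, with f₀ equal to the identity. Then there is a unique sequence of analytic functions g_k : U → ℝ^s (k ≥ 1) such that for every m ∈ ℕ and every x ∈ U, the time-one map Φ¹_{G_m} of the vector field G_m = Σ_{k=1}^m μ^k g_k satisfies f_μ(x) − Φ¹_{G_m}(x) = O(μ^{m+1}) as μ → 0. Moreover, for every x ∈ U and m ∈ ℕ there is μ_m(x) > 0 such that for |μ| ≤ μ_m(x) the iterates f_μ^k(x) ∈ U for 0 ≤ k ≤ m, and the interpolating vector field X_m(x) = Σ_{k=1}^m ((−1)^{k−1}/k) Δ_k(x) of f_μ satisfies X_m(x) = G_m(x) + O(μ^{m+1}) as μ → 0. -/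
/-- `g` is a sequence of coefficient vector fields whose truncated flows interpolate the
family `f_μ` to all orders: for every `m` and `x ∈ U`, the time-one map of
`G_m = Σ_{k=1}^m μ^k g_k` differs from `f_μ(x)` by `O(μ^{m+1})` as `μ → 0`. -/
def FormalInterpolation (s : ℕ) (U : Set (Fin s → ℝ))
    (f : ℝ → (Fin s → ℝ) → (Fin s → ℝ)) (g : ℕ → (Fin s → ℝ) → (Fin s → ℝ)) : Prop :=
  ∀ m : ℕ, ∀ x ∈ U, ∃ C > (0 : ℝ), ∃ μ' > (0 : ℝ), ∀ μ : ℝ, |μ| ≤ μ' →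
    ∃ γ : ℝ → Fin s → ℝ, γ 0 = x ∧
      (∀ t ∈ Set.Icc (0 : ℝ) 1, γ t ∈ U ∧
        HasDerivAt γ (∑ k ∈ Finset.Icc 1 m, μ ^ k • g k (γ t)) t) ∧
      ‖f μ x - γ 1‖ ≤ C * |μ| ^ (m + 1)


open Filter Topology Asymptotics

lemma finDiff_eq_fwdDiff {α : Type*} [AddCommGroup α] (f : α → α) (k : ℕ) (x : α) (n : ℕ) :
    finDiff f k (f^[n] x) = (fwdDiff 1)^[k] (fun j : ℕ => f^[j] x) n := by
  induction k generalizing n with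
  | zero => rfl
  | succ k ih =>
    rw [Function.iterate_succ_apply', fwdDiff, ← ih, ← ih, Function.iterate_succ_apply']
    rfl

lemma sum_Icc_one {G : Type*} [AddCommMonoid G] (m : ℕ) (a : ℕ → G) :
    ∑ k ∈ Finset.Icc 1 m, a k = ∑ k ∈ Finset.range m, a (k+1) := by
  induction m with
  | zero => simp
  | succ m ih => rw [Finset.sum_Icc_succ_top (by omega), ih, Finset.sum_range_succ]

lemma derivative_descPochhammer (k : ℕ) :
    (Polynomial.derivative (descPochhammer ℝ (k+1))).eval 0 = (-1)^k * (k.factorial : ℝ) := by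
  induction k with
  | zero => simp
  | succ k ih =>
    rw [descPochhammer_succ_right]
    have := descPochhammer_ne_zero_eval_zero ℝ (Nat.succ_ne_zero k)
    simp only [Nat.succ_eq_add_one] at this
    simp [Polynomial.derivative_mul, ih, this, Nat.factorial_succ, pow_succ]
    ring

lemma newton_deriv (m i : ℕ) (hi : i ≤ m) :
    ∑ k ∈ Finset.Icc 1 m, ((-1 : ℝ) ^ (k - 1) / k) * (fwdDiff (1:ℝ))^[k] (fun r : ℝ => r ^ i) 0
      = if i = 1 then 1 else 0 := by
  set D : ℕ → ℝ := fun k => (fwdDiff (1:ℝ))^[k] (fun r : ℝ => r ^ i) 0 with hD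
  have hDz : ∀ k, m < k → D k = 0 := fun k hk => by
    simp only [hD]; rw [fwdDiff_iter_pow_eq_zero_of_lt (by omega)]; rfl
  have hpoly : (Polynomial.X ^ i : Polynomial ℝ) =
      ∑ k ∈ Finset.range (m+1), Polynomial.C (D k / k.factorial) * descPochhammer ℝ k := by
    apply Polynomial.eq_of_infinite_eval_eq
    apply Set.Infinite.mono (s := Set.range (fun n : ℕ => (n : ℝ)))
    · rintro _ ⟨n, rfl⟩
      have h := shift_eq_sum_fwdDiff_iter (1:ℝ) (fun r : ℝ => r ^ i) n 0
      simp only [zero_add, nsmul_eq_mul, mul_one] at h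
      simp only [Set.mem_ofPred_eq, Polynomial.eval_pow, Polynomial.eval_X,
        Polynomial.eval_finsetSum, Polynomial.eval_mul, Polynomial.eval_C]
      rw [h]
      have e1 : ∀ k, (n.choose k : ℝ) * D k =
        D k / k.factorial * (descPochhammer ℝ k).eval (n:ℝ) := fun k => by
        rw [Nat.cast_choose_eq_descPochhammer_div]; ring
      have e2 : ∑ k ∈ Finset.range (n+1), (n.choose k : ℝ) * D k =
          ∑ k ∈ Finset.range (n+m+1), (n.choose k : ℝ) * D k := by
        apply Finset.sum_subset
        · intro k; simp; omega
        · intro k _ hk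
          rw [Nat.choose_eq_zero_of_lt (by simpa using hk)]; simp
      have e3 : ∑ k ∈ Finset.range (m+1), (n.choose k : ℝ) * D k =
          ∑ k ∈ Finset.range (n+m+1), (n.choose k : ℝ) * D k := by
        apply Finset.sum_subset
        · intro k; simp; omega
        · intro k _ hk
          rw [hDz k (by simpa using hk)]; simp
      simp only [← e1]
      rw [e3, ← e2]
    · exact Set.infinite_range_of_injective Nat.cast_injective
  have h2 := congrArg (fun p => (Polynomial.derivative p).eval 0) hpoly
  simp only [Polynomial.derivative_sum, Polynomial.eval_finsetSum, Polynomial.derivative_C_mul,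
    Polynomial.eval_C_mul] at h2
  rw [Finset.sum_range_succ'] at h2
  simp only [descPochhammer_zero, Polynomial.derivative_one, Polynomial.eval_zero, mul_zero,
    add_zero, derivative_descPochhammer] at h2
  have h3 : (Polynomial.derivative (Polynomial.X ^ i : Polynomial ℝ)).eval 0 =
      if i = 1 then 1 else 0 := by
    rcases i with _ | _ | i <;> simp
  rw [h3] at h2
  rw [h2, sum_Icc_one]
  refine Finset.sum_congr rfl fun k _ => ?_
  rw [Nat.factorial_succ]
  have : (k.factorial : ℝ) ≠ 0 := by positivity
  have : (k : ℝ) + 1 ≠ 0 := by positivity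
  simp only [hD, Nat.add_sub_cancel]
  push_cast
  field_simp

lemma exists_weights (m : ℕ) : ∃ w : ℕ → ℝ,
    (∀ {E : Type} [AddCommGroup E] [Module ℝ E] (f : E → E) (x : E),
      ∑ k ∈ Finset.Icc 1 m, ((-1 : ℝ) ^ (k - 1) / k) • finDiff f k x =
        ∑ j ∈ Finset.range (m+1), w j • f^[j] x) ∧
    ∀ i ≤ m, ∑ j ∈ Finset.range (m+1), w j * (j:ℝ)^i = if i = 1 then 1 else 0 := by
  have key : ∀ {G : Type} [AddCommGroup G] [Module ℝ G] (a : ℕ → G) (k : ℕ), k ≤ m →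
      ∑ j ∈ Finset.range (k+1), ((-1 : ℤ) ^ (k - j) * k.choose j) • a j =
      ∑ j ∈ Finset.range (m+1), ((-1 : ℝ) ^ (k - j) * k.choose j) • a j := by
    intro G _ _ a k hk
    rw [Finset.sum_subset (s₂ := Finset.range (m+1))]
    · refine Finset.sum_congr rfl fun j _ => ?_
      rw [← Int.cast_smul_eq_zsmul ℝ]; push_cast; rfl
    · intro k; simp; omega
    · intro j _ hj
      rw [Nat.choose_eq_zero_of_lt (by simpa using hj)]; simp
  refine ⟨fun j => ∑ k ∈ Finset.Icc 1 m, ((-1 : ℝ) ^ (k - 1) / k) *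
    ((-1 : ℝ) ^ (k - j) * k.choose j), ?_, ?_⟩
  · intro E _ _ f x
    simp only [Finset.sum_smul]
    rw [Finset.sum_comm]
    refine Finset.sum_congr rfl fun k hk => ?_
    have h := finDiff_eq_fwdDiff f k x 0
    simp only [Function.iterate_zero, id] at h
    rw [h, fwdDiff_iter_eq_sum_shift]
    simp only [zero_add, smul_eq_mul, mul_one]
    rw [key (fun j => f^[j] x) k (Finset.mem_Icc.1 hk).2, Finset.smul_sum]
    simp only [smul_smul]
  · intro i hi
    rw [← newton_deriv m i hi]
    simp only [Finset.sum_mul]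
    rw [Finset.sum_comm]
    refine Finset.sum_congr rfl fun k hk => ?_
    rw [fwdDiff_iter_eq_sum_shift]
    simp only [zero_add, nsmul_eq_mul, mul_one]
    rw [key (fun j => (j:ℝ)^i) k (Finset.mem_Icc.1 hk).2, Finset.mul_sum]
    simp only [smul_eq_mul, mul_assoc]

section taylor
variable {E G : Type*} [NormedAddCommGroup E] [NormedSpace ℝ E]
  [NormedAddCommGroup G] [NormedSpace ℝ G]

lemma analyticAt_clm_apply' {E' : Type*} [NormedAddCommGroup E'] [NormedSpace ℝ E']
    {A : E → E' →L[ℝ] G} {v : E → E'} {z : E}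
    (hA : AnalyticAt ℝ A z) (hv : AnalyticAt ℝ v z) : AnalyticAt ℝ (fun y => A y (v y)) z :=
  AnalyticAt.fun_comp (g := fun p : (E' →L[ℝ] G) × E' => p.1 p.2) (f := fun y => (A y, v y))
    ((ContinuousLinearMap.id ℝ (E' →L[ℝ] G)).analyticAt_bilinear (A z, v z)) (hA.prod hv)

lemma taylor_curve (T ε M : ℝ) (n : ℕ) (u : ℕ → ℝ → G)
    (hu : ∀ i < n, ∀ t ∈ Set.Icc 0 T, HasDerivAt (u i) (ε • u (i+1) t) t)
    (hM : ∀ t ∈ Set.Icc 0 T, ‖u n t‖ ≤ M) :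
    ∀ t ∈ Set.Icc 0 T,
      ‖u 0 t - ∑ i ∈ Finset.range n, ((t * ε) ^ i / i.factorial) • u i 0‖ ≤ M * (|ε| * t) ^ n := by
  induction n generalizing u with
  | zero => intro t ht; simpa using hM t ht
  | succ n ih =>
    intro t ht
    have ih' := ih (fun i => u (i+1)) (fun i hi => hu (i+1) (by omega)) hM
    have hM0 : 0 ≤ M := (norm_nonneg _).trans (hM t ht)
    set φ : ℝ → G := fun t => u 0 t -
      ∑ i ∈ Finset.range (n+1), ((t * ε) ^ i / i.factorial) • u i 0 with hφ
    have hd : ∀ τ ∈ Set.Icc 0 T, HasDerivAt φ (ε • (u 1 τ -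
        ∑ i ∈ Finset.range n, ((τ * ε) ^ i / i.factorial) • u (i+1) 0)) τ := by
      intro τ hτ
      simp only [hφ, Finset.sum_range_succ', smul_sub, Finset.smul_sum]
      refine (hu 0 (by omega) τ hτ).sub ?_
      simp only [pow_zero]
      rw [← add_zero (∑ i ∈ Finset.range n, _)]
      refine HasDerivAt.add ?_ (hasDerivAt_const _ _)
      refine HasDerivAt.fun_sum fun i _ => ?_
      rw [smul_smul]
      refine HasDerivAt.smul_const ?_ _
      have h1 : HasDerivAt (fun t : ℝ => t * ε) ε τ := by
        simpa using (hasDerivAt_id τ).mul_const ε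
      refine ((h1.pow (i+1)).div_const ((i+1).factorial : ℝ)).congr_deriv ?_
      rw [Nat.factorial_succ]
      have : (i.factorial : ℝ) ≠ 0 := by positivity
      have : (i : ℝ) + 1 ≠ 0 := by positivity
      push_cast
      field_simp
    have hsub : Set.Icc 0 t ⊆ Set.Icc 0 T := Set.Icc_subset_Icc_right ht.2
    have := norm_image_sub_le_of_norm_deriv_le_segment' (a := 0) (b := t) (f := φ)
      (C := |ε| * (M * (|ε| * t) ^ n))
      (fun τ hτ => (hd τ (hsub hτ)).hasDerivWithinAt) (fun τ hτ => by
        rw [norm_smul, Real.norm_eq_abs]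
        have h := ih' τ (hsub (Set.Ico_subset_Icc_self hτ))
        have h0 := hτ.1
        have h1 := hτ.2.le
        have : M * (|ε| * τ) ^ n ≤ M * (|ε| * t) ^ n := by gcongr
        gcongr
        exact h.trans this) t ⟨ht.1, le_rfl⟩
    have h0 : φ 0 = 0 := by simp [hφ, Finset.sum_range_succ']
    rw [h0] at this
    calc _ = ‖φ t - 0‖ := by rw [sub_zero]
      _ ≤ _ := this
      _ = _ := by ring

/-- iterated partial derivative in the parameter -/
noncomputable def dmu (F : E × ℝ → G) : ℕ → E × ℝ → G
  | 0 => F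
  | i+1 => fun z => fderiv ℝ (dmu F i) z (0, 1)

lemma dmu_analyticAt [CompleteSpace G] {F : E × ℝ → G} {z : E × ℝ} (hF : AnalyticAt ℝ F z) (i : ℕ) :
    AnalyticAt ℝ (dmu F i) z := by
  induction i with
  | zero => exact hF
  | succ i ih => exact analyticAt_clm_apply' ih.fderiv analyticAt_const

lemma taylor_mu [CompleteSpace G] {F : E × ℝ → G} {x₀ : E} (hF : AnalyticAt ℝ F (x₀, 0)) (n : ℕ) :
    (fun z : E × ℝ => F z -
      ∑ i ∈ Finset.range n, (z.2 ^ i / i.factorial) • dmu F i (z.1, 0)) =O[𝓝 (x₀, 0)]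
      fun z => z.2 ^ n := by
  have h1 : ∀ᶠ z in 𝓝 (x₀, (0:ℝ)), AnalyticAt ℝ F z := hF.eventually_analyticAt
  have h2 : ∀ᶠ z in 𝓝 (x₀, (0:ℝ)), ‖dmu F n z‖ < ‖dmu F n (x₀, 0)‖ + 1 :=
    (dmu_analyticAt hF n).continuousAt.norm.eventually_lt continuousAt_const (by simp)
  obtain ⟨r, hr, hb⟩ := Metric.eventually_nhds_iff_ball.1 (h1.and h2)
  refine IsBigO.of_bound (‖dmu F n (x₀, 0)‖ + 1) ?_
  filter_upwards [Metric.ball_mem_nhds _ hr] with z hz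
  have hz' : ∀ t ∈ Set.Icc (0:ℝ) 1, (z.1, t * z.2) ∈ Metric.ball (x₀, (0:ℝ)) r := by
    intro t ht
    rw [Metric.mem_ball, Prod.dist_eq, max_lt_iff] at hz ⊢
    refine ⟨hz.1, lt_of_le_of_lt ?_ hz.2⟩
    simp only [dist_zero_right, norm_mul, Real.norm_eq_abs, abs_of_nonneg ht.1]
    exact mul_le_of_le_one_left (abs_nonneg _) ht.2
  have := taylor_curve 1 z.2 (‖dmu F n (x₀, 0)‖ + 1) n (fun i t => dmu F i (z.1, t * z.2))
    (fun i _ t ht => by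
      have hc : HasDerivAt (fun t : ℝ => (z.1, t * z.2)) (0, z.2) t :=
        (hasDerivAt_const _ _).prodMk (by simpa using (hasDerivAt_id t).mul_const z.2)
      have hd := (dmu_analyticAt (hb _ (hz' t ht)).1 i).differentiableAt.hasFDerivAt
      have := hd.comp_hasDerivAt t hc
      refine this.congr_deriv ?_
      simp only [dmu]
      rw [← map_smul]; simp)
    (fun t ht => (hb _ (hz' t ht)).2.le) 1 (by simp)
  simp only [one_mul, zero_mul, mul_one, Prod.mk.eta] at this
  simpa [dmu] using this

lemma poly_zero (n : ℕ) (c : ℕ → G)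
    (h : (fun μ : ℝ => ∑ i ∈ Finset.range n, μ ^ i • c i) =O[𝓝[≠] 0] fun μ => μ ^ n) :
    ∀ i < n, c i = 0 := by
  induction n generalizing c with
  | zero => intro i hi; omega
  | succ n ih =>
    have h0 : c 0 = 0 := by
      have ht : Tendsto (fun μ : ℝ => ∑ i ∈ Finset.range (n+1), μ ^ i • c i) (𝓝[≠] 0) (𝓝 0) := by
        refine h.trans_tendsto ?_
        have : Tendsto (fun μ : ℝ => μ ^ (n+1)) (𝓝 0) (𝓝 (0 ^ (n+1))) :=
          (continuous_pow _).tendsto _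
        simpa using this.mono_left nhdsWithin_le_nhds
      have ht2 : Tendsto (fun μ : ℝ => ∑ i ∈ Finset.range (n+1), μ ^ i • c i) (𝓝[≠] 0)
          (𝓝 (∑ i ∈ Finset.range (n+1), (0:ℝ) ^ i • c i)) := by
        refine Tendsto.mono_left (Continuous.tendsto ?_ 0) nhdsWithin_le_nhds
        fun_prop
      have := tendsto_nhds_unique ht2 ht
      simpa [Finset.sum_range_succ'] using this
    have := ih (fun i => c (i+1)) (by
      obtain ⟨C, hC⟩ := h.bound
      refine IsBigO.of_bound C ?_
      filter_upwards [hC, self_mem_nhdsWithin] with μ hμ hne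
      have hne : μ ≠ 0 := hne
      rw [Finset.sum_range_succ', h0, smul_zero, add_zero] at hμ
      have e : ∑ i ∈ Finset.range n, μ ^ (i+1) • c (i+1) =
          μ • ∑ i ∈ Finset.range n, μ ^ i • c (i+1) := by
        rw [Finset.smul_sum]; simp only [smul_smul, pow_succ']
      rw [e, norm_smul, pow_succ', norm_mul, mul_left_comm] at hμ
      exact le_of_mul_le_mul_left hμ (norm_pos_iff.2 hne))
    intro i hi
    rcases i with _ | i
    · exact h0
    · exact this i (by omega)
end taylor

section flow
variable {E : Type*} [NormedAddCommGroup E] [NormedSpace ℝ E]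

/-- solution curve -/
def Sol (H : E × ℝ → E) (T μ : ℝ) (γ : ℝ → E) : Prop :=
  ∀ t ∈ Set.Icc 0 T, HasDerivAt γ (μ • H (γ t, μ)) t

lemma conf {H : E × ℝ → E} {x₀ : E} (hH : ContinuousAt H (x₀, 0)) (T : ℝ) (hT : 0 ≤ T)
    {W : Set (E × ℝ)} (hW : W ∈ 𝓝 (x₀, (0:ℝ))) :
    ∀ᶠ z in 𝓝 (x₀, (0:ℝ)), ∀ γ : ℝ → E, γ 0 = z.1 → Sol H T z.2 γ →
      ∀ t ∈ Set.Icc 0 T, (γ t, z.2) ∈ W := by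
  have h2 : ∀ᶠ z in 𝓝 (x₀, (0:ℝ)), ‖H z‖ < ‖H (x₀, 0)‖ + 1 :=
    hH.norm.eventually_lt continuousAt_const (by simp)
  set M := ‖H (x₀, 0)‖ + 1 with hMdef
  have hM : 0 < M := by positivity
  obtain ⟨r, hr, hb⟩ := Metric.eventually_nhds_iff_ball.1 (h2.and hW)
  set β := r / (4 * (T + 1)) with hβ
  have hβ0 : 0 < β := by positivity
  have hβT : β * T ≤ r / 4 := by
    rw [hβ, div_mul_eq_mul_div, div_le_div_iff₀ (by positivity) (by positivity)]
    nlinarith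
  have h3 : ∀ᶠ z in 𝓝 (x₀, (0:ℝ)), |z.2| * M < β := by
    have : ContinuousAt (fun z : E × ℝ => |z.2| * M) (x₀, 0) := by fun_prop
    exact this.eventually_lt continuousAt_const (by simpa using hβ0)
  filter_upwards [Metric.ball_mem_nhds _ (half_pos hr), h3] with z hz hz3 γ hγ0 hγ
  rw [Metric.mem_ball, Prod.dist_eq, max_lt_iff] at hz
  have hin : ∀ t ∈ Set.Icc 0 T, ‖γ t - z.1‖ ≤ β * t → (γ t, z.2) ∈ Metric.ball (x₀, (0:ℝ)) r := by
    intro t ht h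
    rw [Metric.mem_ball, Prod.dist_eq, max_lt_iff]
    refine ⟨?_, by linarith [hz.2]⟩
    have h1 := dist_triangle (γ t) z.1 x₀
    rw [dist_eq_norm (γ t) z.1] at h1
    have : β * t ≤ β * T := by have := ht.2; gcongr
    have := hz.1
    simp only at this ⊢
    linarith
  have := image_norm_le_of_norm_deriv_right_lt_deriv_boundary (a := 0) (b := T)
    (f := fun t => γ t - z.1) (f' := fun t => z.2 • H (γ t, z.2)) (B := fun t => β * t)
    (B' := fun _ => β)
    (fun t ht => ((hγ t ht).continuousAt.sub continuousAt_const).continuousWithinAt)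
    (fun t ht => ((hγ t (Set.Ico_subset_Icc_self ht)).sub_const _).hasDerivWithinAt)
    (by simp [hγ0]) (fun t => by simpa using (hasDerivAt_id t).const_mul β)
    (fun t ht h => by
      have := (hb _ (hin t (Set.Ico_subset_Icc_self ht) h.le)).1
      rw [norm_smul, Real.norm_eq_abs]
      refine lt_of_le_of_lt ?_ hz3
      gcongr)
  intro t ht
  exact (hb _ (hin t ht (this ht))).2

lemma flow_exists_s8 [CompleteSpace E] {H : E × ℝ → E} {x₀ : E} (hH : AnalyticAt ℝ H (x₀, 0))
    (T : ℝ) (hT : 0 ≤ T) :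
    ∀ᶠ z in 𝓝 (x₀, (0:ℝ)), ∃ γ : ℝ → E, γ 0 = z.1 ∧ Sol H T z.2 γ := by
  have h2 : ∀ᶠ z in 𝓝 (x₀, (0:ℝ)), ‖H z‖ < ‖H (x₀, 0)‖ + 1 :=
    hH.continuousAt.norm.eventually_lt continuousAt_const (by simp)
  set M := ‖H (x₀, 0)‖ + 1 with hMdef
  have hM : 0 < M := by positivity
  obtain ⟨K, s, hs, hK⟩ := (hH.contDiffAt (n := 1)).exists_lipschitzOnWith
  obtain ⟨r, hr, hb⟩ := Metric.eventually_nhds_iff_ball.1 (h2.and hs)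
  set β := r / (4 * (T + 1)) with hβ
  have hβ0 : 0 < β := by positivity
  have hβT : β * (T + 1) = r / 4 := by
    rw [hβ]; field_simp
  have h3 : ∀ᶠ z in 𝓝 (x₀, (0:ℝ)), |z.2| * M < β := by
    have : ContinuousAt (fun z : E × ℝ => |z.2| * M) (x₀, 0) := by fun_prop
    exact this.eventually_lt continuousAt_const (by simpa using hβ0)
  filter_upwards [Metric.ball_mem_nhds _ (show 0 < r / 4 by positivity), h3] with z hz hz3
  rw [Metric.mem_ball, Prod.dist_eq, max_lt_iff] at hz
  have hin : ∀ x ∈ Metric.closedBall x₀ (r/2), (x, z.2) ∈ Metric.ball (x₀, (0:ℝ)) r := by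
    intro x hx
    rw [Metric.mem_ball, Prod.dist_eq, max_lt_iff]
    refine ⟨?_, by linarith [hz.2]⟩
    have := Metric.mem_closedBall.1 hx
    simp only
    linarith
  have hpl : IsPicardLindelof (fun _ x => z.2 • H (x, z.2)) (tmin := -1) (tmax := T + 1)
      ⟨0, by constructor <;> linarith⟩ x₀ (Real.toNNReal (r/2)) (Real.toNNReal (r/4))
      (Real.toNNReal β) (‖z.2‖₊ * K) := by
    apply IsPicardLindelof.of_time_independent
    · intro x hx
      rw [Real.coe_toNNReal _ (by positivity)] at hx
      rw [Real.coe_toNNReal _ (by positivity), norm_smul, Real.norm_eq_abs]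
      refine le_trans ?_ hz3.le
      have := (hb _ (hin x hx)).1
      gcongr
    · rw [Real.coe_toNNReal _ (by positivity)]
      refine LipschitzOnWith.of_dist_le_mul fun x hx y hy => ?_
      have := hK.dist_le_mul _ (hb _ (hin x hx)).2 _ (hb _ (hin y hy)).2
      rw [dist_smul₀, NNReal.coe_mul, coe_nnnorm, mul_assoc]
      gcongr
      simpa [Prod.dist_eq] using this
    · rw [Real.coe_toNNReal _ (by positivity), Real.coe_toNNReal _ (by positivity),
        Real.coe_toNNReal _ (by positivity)]
      simp only [sub_zero, sub_neg_eq_add, zero_add]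
      rw [max_eq_left (by linarith), hβT]; linarith
  obtain ⟨γ, h0, hγ⟩ := hpl.exists_eq_forall_mem_Icc_hasDerivWithinAt (x := z.1) (by
    rw [Real.coe_toNNReal _ (by positivity)]
    exact hz.1.le)
  refine ⟨γ, h0, fun t ht => ?_⟩
  exact (hγ t ⟨by linarith [ht.1], by linarith [ht.2]⟩).hasDerivAt
    (Icc_mem_nhds (by linarith [ht.1]) (by linarith [ht.2]))

/-- iterated Lie derivatives of the identity -/
noncomputable def LI (H : E × ℝ → E) : ℕ → E × ℝ → E
  | 0 => Prod.fst
  | i+1 => fun z => fderiv ℝ (LI H i) z (H z, 0)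

lemma LI_one (H : E × ℝ → E) (z : E × ℝ) : LI H 1 z = H z := by
  simp [LI, fderiv_fst]

lemma LI_analyticAt [CompleteSpace E] {H : E × ℝ → E} {z : E × ℝ} (hH : AnalyticAt ℝ H z) (i : ℕ) :
    AnalyticAt ℝ (LI H i) z := by
  induction i with
  | zero => exact analyticAt_fst
  | succ i ih => exact analyticAt_clm_apply' ih.fderiv (hH.prod analyticAt_const)

lemma flow_taylor [CompleteSpace E] {H : E × ℝ → E} {x₀ : E} (hH : AnalyticAt ℝ H (x₀, 0))
    (T : ℝ) (hT : 0 ≤ T) (n : ℕ) :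
    ∃ C, ∀ᶠ z in 𝓝 (x₀, (0:ℝ)), ∀ γ : ℝ → E, γ 0 = z.1 → Sol H T z.2 γ →
      ∀ t ∈ Set.Icc 0 T,
        ‖γ t - ∑ i ∈ Finset.range n, ((t * z.2) ^ i / i.factorial) • LI H i z‖ ≤ C * |z.2| ^ n := by
  have h1 : ∀ᶠ z in 𝓝 (x₀, (0:ℝ)), AnalyticAt ℝ H z := hH.eventually_analyticAt
  have h2 : ∀ᶠ z in 𝓝 (x₀, (0:ℝ)), ‖LI H n z‖ < ‖LI H n (x₀, 0)‖ + 1 :=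
    (LI_analyticAt hH n).continuousAt.norm.eventually_lt continuousAt_const (by simp)
  refine ⟨(‖LI H n (x₀, 0)‖ + 1) * T ^ n, ?_⟩
  filter_upwards [conf hH.continuousAt T hT (h1.and h2)] with z hz γ h0 hγ t ht
  have := taylor_curve T z.2 (‖LI H n (x₀, 0)‖ + 1) n (fun i t => LI H i (γ t, z.2))
    (fun i _ t ht => by
      have hc : HasDerivAt (fun t : ℝ => (γ t, z.2)) (z.2 • H (γ t, z.2), 0) t :=
        (hγ t ht).prodMk (hasDerivAt_const _ _)
      have hd := (LI_analyticAt (hz γ h0 hγ t ht).1 i).differentiableAt.hasFDerivAt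
      have := hd.comp_hasDerivAt t hc
      refine this.congr_deriv ?_
      simp only [LI]
      rw [← map_smul]; simp)
    (fun t ht => (hz γ h0 hγ t ht).2.le) t ht
  simp only [h0] at this
  refine this.trans ?_
  have := ht.1
  have := ht.2
  calc (‖LI H n (x₀, 0)‖ + 1) * (|z.2| * t) ^ n ≤ (‖LI H n (x₀, 0)‖ + 1) * (|z.2| * T) ^ n := by
        gcongr
    _ = _ := by rw [mul_pow]; ring

/-- Lie polynomial -/
noncomputable def LP (H : E × ℝ → E) (n : ℕ) (z : E × ℝ) : E :=
  ∑ i ∈ Finset.range (n+1), (z.2 ^ i / i.factorial) • LI H i z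

lemma LI_compare [CompleteSpace E] {Ω : Set (E × ℝ)} (hΩ : IsOpen Ω) {H H' w : E × ℝ → E} (p : ℕ)
    (hH : AnalyticOnNhd ℝ H Ω) (hH' : AnalyticOnNhd ℝ H' Ω) (hw : AnalyticOnNhd ℝ w Ω)
    (heq : ∀ z ∈ Ω, H' z = H z + z.2 ^ p • w z) (i : ℕ) :
    ∃ R : E × ℝ → E, AnalyticOnNhd ℝ R Ω ∧ ∀ z ∈ Ω, LI H' i z = LI H i z + z.2 ^ p • R z := by
  induction i with
  | zero => exact ⟨fun _ => 0, analyticOnNhd_const, fun z _ => by simp [LI]⟩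
  | succ i ih =>
    obtain ⟨R, hR, hRe⟩ := ih
    refine ⟨fun z => fderiv ℝ (LI H i) z (w z, 0) + fderiv ℝ R z (H' z, 0), ?_, ?_⟩
    · intro z hz
      exact (analyticAt_clm_apply' (LI_analyticAt (hH z hz) i).fderiv
        ((hw z hz).prod analyticAt_const)).add
        (analyticAt_clm_apply' (hR z hz).fderiv ((hH' z hz).prod analyticAt_const))
    · intro z hz
      have e : LI H' i =ᶠ[𝓝 z] fun z => LI H i z + z.2 ^ p • R z := by
        filter_upwards [hΩ.mem_nhds hz] with y hy using hRe y hy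
      have hd1 := (LI_analyticAt (hH z hz) i).differentiableAt.hasFDerivAt
      have hd2 := (hR z hz).differentiableAt.hasFDerivAt
      have hd3 : HasFDerivAt (fun z : E × ℝ => z.2 ^ p) _ z := (hasFDerivAt_snd (𝕜 := ℝ)).pow p
      have hd := (hd1.add (hd3.smul hd2)).fderiv
      simp only [LI]
      rw [e.fderiv_eq]
      erw [hd]
      have hv : ((H' z, 0) : E × ℝ) = (H z, 0) + z.2 ^ p • (w z, 0) := by
        rw [heq z hz]; simp
      simp only [add_apply, smul_apply,
        ContinuousLinearMap.smulRight_apply, ContinuousLinearMap.coe_snd', smul_zero, zero_smul,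
        add_zero]
      rw [show fderiv ℝ (LI H i) z (H' z, 0) = fderiv ℝ (LI H i) z (H z, 0) +
        z.2 ^ p • fderiv ℝ (LI H i) z (w z, 0) by rw [hv, map_add, map_smul]]
      rw [smul_add, add_assoc]

lemma pow_smul_isBigO {R : E × ℝ → E} {x₀ : E} (hR : ContinuousAt R (x₀, 0)) {n k : ℕ} (h : n ≤ k)
    (c : ℝ) : (fun z : E × ℝ => (c * z.2 ^ k) • R z) =O[𝓝 (x₀, 0)] fun z => z.2 ^ n := by
  have h1 : R =O[𝓝 (x₀, 0)] fun _ => (1:ℝ) := hR.tendsto.isBigO_one ℝ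
  have h2 : (fun z : E × ℝ => z.2 ^ (k - n)) =O[𝓝 (x₀, 0)] fun _ => (1:ℝ) := by
    have : ContinuousAt (fun z : E × ℝ => z.2 ^ (k - n)) (x₀, 0) := by fun_prop
    exact this.tendsto.isBigO_one ℝ
  have h3 : (fun z : E × ℝ => c * (z.2 ^ n * z.2 ^ (k-n))) =O[𝓝 (x₀, 0)] fun z => z.2 ^ n := by
    simpa using ((isBigO_refl (fun z : E × ℝ => z.2 ^ n) (𝓝 (x₀, 0))).mul h2).const_mul_left c
  have := h3.smul h1
  simp only [smul_eq_mul, mul_one, ← pow_add, Nat.add_sub_cancel' h] at this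
  exact this

lemma LP_compare [CompleteSpace E] {Ω : Set (E × ℝ)} (hΩ : IsOpen Ω) {H H' w : E × ℝ → E} (p : ℕ)
    (hH : AnalyticOnNhd ℝ H Ω) (hH' : AnalyticOnNhd ℝ H' Ω) (hw : AnalyticOnNhd ℝ w Ω)
    (heq : ∀ z ∈ Ω, H' z = H z + z.2 ^ p • w z) (n : ℕ) {x₀ : E} (hx : (x₀, (0:ℝ)) ∈ Ω) :
    (fun z : E × ℝ => LP H' (n+1) z - LP H (n+1) z - z.2 ^ (p+1) • w z) =O[𝓝 (x₀, 0)]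
      fun z => z.2 ^ (p+2) := by
  choose R hR hRe using LI_compare hΩ p hH hH' hw heq
  have h1 : (fun z : E × ℝ => ∑ i ∈ Finset.range n,
      ((1 / (i+2).factorial : ℝ) * z.2 ^ (i+2+p)) • R (i+2) z) =O[𝓝 (x₀, 0)]
      fun z => z.2 ^ (p+2) := by
    refine IsBigO.fun_sum fun i _ => ?_
    exact pow_smul_isBigO (hR _ _ hx).continuousAt (by omega) _
  refine h1.congr' ?_ EventuallyEq.rfl
  filter_upwards [hΩ.mem_nhds hx] with z hz
  simp only [LP]
  rw [Finset.sum_range_succ', Finset.sum_range_succ', Finset.sum_range_succ' (n := n+1),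
    Finset.sum_range_succ' (n := n)]
  simp only [zero_add, LI_one, hRe (_ + 1 + 1) z hz, smul_add, Finset.sum_add_distrib, heq z hz]
  simp only [LI, smul_smul]
  have : ∀ i : ℕ, (1 / (i+2).factorial : ℝ) * z.2 ^ (i+2+p) =
    z.2 ^ (i+1+1) / ((i+1+1).factorial : ℝ) * z.2 ^ p := fun i => by
    rw [pow_add]; ring
  simp only [this, pow_one, Nat.factorial_one, Nat.cast_one, div_one, pow_succ' z.2 p]
  abel
end flow

section main
variable {E : Type} [NormedAddCommGroup E] [NormedSpace ℝ E] [CompleteSpace E]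

/-- next coefficient -/
noncomputable def gco (F : E × ℝ → E) (H : E × ℝ → E) (n : ℕ) (x : E) : E :=
  (((n+1).factorial : ℝ)⁻¹) • dmu (fun z => F z - LP H (n+1) z) (n+1) (x, 0)

/-- truncated (rescaled) vector fields -/
noncomputable def Hs (F : E × ℝ → E) : ℕ → E × ℝ → E
  | 0 => fun _ => 0
  | n+1 => fun z => Hs F n z + z.2 ^ n • gco F (Hs F n) n z.1

/-- rescaled vector field of a coefficient sequence -/
def Hg (g : ℕ → E → E) (n : ℕ) (z : E × ℝ) : E := ∑ k ∈ Finset.Icc 1 n, z.2 ^ (k - 1) • g k z.1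

lemma smul_Hg (g : ℕ → E → E) (n : ℕ) (x : E) (μ : ℝ) :
    μ • Hg g n (x, μ) = ∑ k ∈ Finset.Icc 1 n, μ ^ k • g k x := by
  rw [Hg, Finset.smul_sum]
  refine Finset.sum_congr rfl fun k hk => ?_
  rw [smul_smul, ← pow_succ', Nat.sub_add_cancel (Finset.mem_Icc.1 hk).1]

lemma Hg_analytic {U : Set E} {g : ℕ → E → E} (hg : ∀ k, 1 ≤ k → AnalyticOnNhd ℝ (g k) U) (n : ℕ) :
    AnalyticOnNhd ℝ (Hg g n) (U ×ˢ Set.univ) := by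
  intro z hz
  unfold Hg
  refine Finset.analyticAt_fun_sum _ fun k hk => ?_
  exact (analyticAt_snd.pow _).smul
    ((hg k (Finset.mem_Icc.1 hk).1 z.1 hz.1).fun_comp analyticAt_fst)

lemma LP_analyticAt {H : E × ℝ → E} {z : E × ℝ} (hH : AnalyticAt ℝ H z) (n : ℕ) :
    AnalyticAt ℝ (LP H n) z := by
  unfold LP
  refine Finset.analyticAt_fun_sum _ fun i _ => ?_
  simp only [div_eq_mul_inv]
  exact ((analyticAt_snd.pow _).mul analyticAt_const).smul (LI_analyticAt hH i)

lemma gco_analyticAt {F H : E × ℝ → E} {x : E} (hF : AnalyticAt ℝ F (x, 0))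
    (hH : AnalyticAt ℝ H (x, 0)) (n : ℕ) : AnalyticAt ℝ (gco F H n) x := by
  unfold gco
  refine analyticAt_const.smul ?_
  exact (dmu_analyticAt (hF.sub (LP_analyticAt hH (n+1))) (n+1)).fun_comp
    (f := fun x : E => (x, (0:ℝ))) (analyticAt_id.prod analyticAt_const)

lemma Hs_analytic {F : E × ℝ → E} {U : Set E} (hF : ∀ x ∈ U, AnalyticAt ℝ F (x, 0)) (n : ℕ) :
    AnalyticOnNhd ℝ (Hs F n) (U ×ˢ Set.univ) := by
  induction n with
  | zero => exact analyticOnNhd_const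
  | succ n ih =>
    intro z hz
    exact (ih z hz).add ((analyticAt_snd.pow _).smul
      ((gco_analyticAt (hF z.1 hz.1) (ih (z.1, 0) ⟨hz.1, trivial⟩) n).fun_comp analyticAt_fst))

lemma tendsto_pair (x : E) : Tendsto (fun μ : ℝ => (x, μ)) (𝓝 0) (𝓝 (x, 0)) :=
  (Continuous.prodMk_right x).tendsto 0

lemma Hs_err {F : E × ℝ → E} {U : Set E} (hU : IsOpen U) (hF : ∀ x ∈ U, AnalyticAt ℝ F (x, 0))
    (hF0 : ∀ x ∈ U, F (x, 0) = x) (n : ℕ) : ∀ x ∈ U,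
    (fun z : E × ℝ => F z - LP (Hs F n) n z) =O[𝓝 (x, 0)] fun z => z.2 ^ (n+1) := by
  have hUn : ∀ x ∈ U, ∀ᶠ z : E × ℝ in 𝓝 (x, 0), z.1 ∈ U := fun x hx =>
    continuousAt_fst.eventually_mem (hU.mem_nhds hx)
  induction n with
  | zero =>
    intro x hx
    refine (taylor_mu (hF x hx) 1).congr' ?_ EventuallyEq.rfl
    filter_upwards [hUn x hx] with z hz
    simp [LP, LI, dmu, hF0 z.1 hz]
  | succ n ih =>
    set F' : E × ℝ → E := fun z => F z - LP (Hs F n) (n+1) z with hF'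
    have hHa := Hs_analytic hF n
    have hHa' := Hs_analytic hF (n+1)
    have hFa : ∀ x ∈ U, AnalyticAt ℝ F' (x, 0) := fun x hx =>
      (hF x hx).sub (LP_analyticAt (hHa _ ⟨hx, trivial⟩) _)
    have hO : ∀ x ∈ U, F' =O[𝓝 (x, 0)] fun z => z.2 ^ (n+1) := by
      intro x hx
      have h1 := pow_smul_isBigO (LI_analyticAt (hHa (x, 0) ⟨hx, trivial⟩) (n+1)).continuousAt
        (le_refl (n+1)) (((n+1).factorial : ℝ)⁻¹)
      refine ((ih x hx).sub h1).congr_left fun z => ?_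
      simp only [hF', LP]
      rw [Finset.sum_range_succ _ (n+1), sub_sub, div_eq_inv_mul]
    have hz : ∀ x ∈ U, ∀ i < n+1, dmu F' i (x, 0) = 0 := by
      intro x hx i hi
      have h1 := ((hO x hx).sub (taylor_mu (hFa x hx) (n+1))).comp_tendsto (tendsto_pair x)
      have h2 := poly_zero (n+1) (fun i => ((i.factorial : ℝ)⁻¹) • dmu F' i (x, 0)) (by
        refine (h1.mono nhdsWithin_le_nhds).congr_left fun μ => ?_
        simp only [Function.comp, sub_sub_cancel, smul_smul, div_eq_mul_inv]) i hi
      have : ((i.factorial : ℝ)⁻¹) ≠ 0 := by positivity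
      exact (smul_eq_zero.1 h2).resolve_left this
    intro x hx
    have h1 := taylor_mu (hFa x hx) (n+2)
    have h2 := LP_compare (hU.prod isOpen_univ) n hHa hHa'
      (w := fun z => gco F (Hs F n) n z.1)
      (fun z hz => (gco_analyticAt (hF z.1 hz.1) (hHa (z.1, 0) ⟨hz.1, trivial⟩) n).fun_comp
        analyticAt_fst) (fun z _ => rfl) n (x₀ := x) ⟨hx, trivial⟩
    refine (h1.sub h2).congr' ?_ EventuallyEq.rfl
    filter_upwards [hUn x hx] with z hzU
    rw [Finset.sum_range_succ, Finset.sum_eq_zero (s := Finset.range (n+1)) (fun i hi => by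
      rw [hz z.1 hzU i (Finset.mem_range.1 hi), smul_zero])]
    have e : (z.2 ^ (n+1) / ((n+1).factorial : ℝ)) • dmu F' (n+1) (z.1, 0) =
        z.2 ^ (n+1) • gco F (Hs F n) n z.1 := by
      rw [gco, smul_smul, div_eq_mul_inv]
    rw [e]
    simp only [hF']
    abel

lemma ev_exists {P : ℝ → Prop} (h : ∀ᶠ μ in 𝓝 (0:ℝ), P μ) : ∃ r > 0, ∀ μ : ℝ, |μ| ≤ r → P μ := by
  obtain ⟨r, hr, hb⟩ := Metric.eventually_nhds_iff.1 h
  refine ⟨r/2, by positivity, fun μ hμ => hb ?_⟩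
  rw [dist_zero_right, Real.norm_eq_abs]; linarith

lemma flow_err {F H : E × ℝ → E} {x : E} (hH : AnalyticAt ℝ H (x, 0)) {m : ℕ}
    (hE : (fun z : E × ℝ => F z - LP H m z) =O[𝓝 (x, 0)] fun z => z.2 ^ (m+1)) :
    ∃ C, 0 < C ∧ ∀ᶠ z in 𝓝 (x, (0:ℝ)), ∀ γ : ℝ → E, γ 0 = z.1 → Sol H 1 z.2 γ →
      ‖F z - γ 1‖ ≤ C * |z.2| ^ (m+1) := by
  obtain ⟨C₁, h1⟩ := flow_taylor hH 1 zero_le_one (m+1)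
  obtain ⟨C₂, hC₂, h2⟩ := hE.exists_pos
  refine ⟨|C₁| + C₂, by positivity, ?_⟩
  filter_upwards [h1, h2.bound] with z h1 h2 γ h0 hγ
  have h1 := h1 γ h0 hγ 1 (by simp)
  rw [norm_pow, Real.norm_eq_abs] at h2
  simp only [one_mul] at h1
  rw [← neg_sub, norm_neg] at h1
  have : F z - γ 1 = (F z - LP H m z) + (LP H m z - γ 1) := by abel
  rw [this]
  refine (norm_add_le _ _).trans ?_
  have h3 : C₁ * |z.2| ^ (m+1) ≤ |C₁| * |z.2| ^ (m+1) := by gcongr; exact le_abs_self _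
  have h4 : ‖LP H m z - γ 1‖ ≤ C₁ * |z.2| ^ (m+1) := h1
  linarith

lemma iter_tendsto {f : ℝ → E → E} {x : E} (hc : ContinuousAt (fun z : E × ℝ => f z.2 z.1) (x, 0))
    (h0 : f 0 x = x) (j : ℕ) : Tendsto (fun μ => (f μ)^[j] x) (𝓝 0) (𝓝 x) := by
  induction j with
  | zero => exact tendsto_const_nhds
  | succ j ih =>
    simp only [Function.iterate_succ_apply']
    have := hc.tendsto.comp (ih.prodMk_nhds tendsto_id)
    simpa [h0, Function.comp_def] using this

lemma iter_err {f : ℝ → E → E} {x : E} {H : E × ℝ → E}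
    (hF : AnalyticAt ℝ (fun z : E × ℝ => f z.2 z.1) (x, 0))
    (h0 : f 0 x = x) (hH : AnalyticAt ℝ H (x, 0)) {m : ℕ}
    (hE : (fun z : E × ℝ => f z.2 z.1 - LP H m z) =O[𝓝 (x, 0)] fun z => z.2 ^ (m+1))
    (T : ℕ) (j : ℕ) (hj : j ≤ T) :
    ∃ D, 0 ≤ D ∧ ∀ᶠ μ in 𝓝 (0:ℝ), ∀ γ : ℝ → E, γ 0 = x → Sol H T μ γ →
      ‖(f μ)^[j] x - γ j‖ ≤ D * |μ| ^ (m+1) := by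
  induction j with
  | zero =>
    refine ⟨0, le_rfl, Eventually.of_forall fun μ γ hγ _ => by simp [hγ]⟩
  | succ j ih =>
    obtain ⟨D, hD, h⟩ := ih (by omega)
    obtain ⟨C, hC, hCe⟩ := flow_err hH hE
    obtain ⟨K, s, hs, hK⟩ := (hF.contDiffAt (n := 1)).exists_lipschitzOnWith
    refine ⟨K * D + C, by positivity, ?_⟩
    have hconf := (tendsto_pair x).eventually
      (conf hH.continuousAt T (Nat.cast_nonneg T) (hCe.and hs))
    have hit : ∀ᶠ μ in 𝓝 (0:ℝ), ((f μ)^[j] x, μ) ∈ s :=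
      ((iter_tendsto hF.continuousAt h0 j).prodMk_nhds tendsto_id).eventually_mem hs
    filter_upwards [h, hconf, hit] with μ h1 h2 h3 γ hγ0 hγ
    have hjT : (j:ℝ) + 1 ≤ T := by exact_mod_cast hj
    have hjm : (j:ℝ) ∈ Set.Icc (0:ℝ) T := ⟨Nat.cast_nonneg j, by linarith⟩
    obtain ⟨h4, h5⟩ := h2 γ hγ0 hγ j hjm
    have h6 := h4 (fun t => γ (j + t)) (by simp) (fun t ht => by
      have : HasDerivAt γ (μ • H (γ (j + t), μ)) (j + t) :=
        hγ (j + t) ⟨by linarith [ht.1, hjm.1], by linarith [ht.2]⟩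
      exact this.comp_const_add (j:ℝ) t)
    have h7 := hK.dist_le_mul _ h3 _ h5
    have h8 := h1 γ hγ0 hγ
    simp only [dist_eq_norm, Prod.norm_def, Prod.mk_sub_mk, sub_self, norm_zero,
      norm_nonneg, sup_of_le_left] at h7
    rw [Function.iterate_succ_apply']
    have e : f μ ((f μ)^[j] x) - γ ((j+1 : ℕ):ℝ) =
      (f μ ((f μ)^[j] x) - f μ (γ j)) + (f μ (γ j) - γ (j + 1)) := by push_cast; abel
    rw [e]
    refine (norm_add_le _ _).trans ?_
    have : (K:ℝ) * ‖(f μ)^[j] x - γ j‖ ≤ K * (D * |μ| ^ (m+1)) := by gcongr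
    linarith

lemma X_err {f : ℝ → E → E} {x : E} {H : E × ℝ → E}
    (hF : AnalyticAt ℝ (fun z : E × ℝ => f z.2 z.1) (x, 0))
    (h0 : f 0 x = x) (hH : AnalyticAt ℝ H (x, 0)) {m : ℕ}
    (hE : (fun z : E × ℝ => f z.2 z.1 - LP H m z) =O[𝓝 (x, 0)] fun z => z.2 ^ (m+1))
    (hm0 : m = 0 → ∀ z, H z = 0) :
    ∃ C > 0, ∀ᶠ μ in 𝓝 (0:ℝ),
      ‖∑ k ∈ Finset.Icc 1 m, ((-1 : ℝ) ^ (k - 1) / k) • finDiff (f μ) k x - μ • H (x, μ)‖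
        ≤ C * |μ| ^ (m+1) := by
  obtain ⟨w, hw1, hw2⟩ := exists_weights m
  choose! D hD hDe using iter_err hF h0 hH hE m
  obtain ⟨C, hC⟩ := flow_taylor hH m (Nat.cast_nonneg m) (m+1)
  have hC := (tendsto_pair x).eventually hC
  have hex := (tendsto_pair x).eventually (flow_exists_s8 hH m (Nat.cast_nonneg m))
  have hDe' : ∀ᶠ μ in 𝓝 (0:ℝ), ∀ j ∈ Finset.range (m+1), ∀ γ : ℝ → E, γ 0 = x → Sol H m μ γ →
      ‖(f μ)^[j] x - γ j‖ ≤ D j * |μ| ^ (m+1) :=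
    (Finset.eventually_all _).2 fun j hj => hDe j (by simpa [Nat.lt_succ_iff] using hj)
  refine ⟨∑ j ∈ Finset.range (m+1), |w j| * (D j + |C|) + 1, ?_, ?_⟩
  · have : 0 ≤ ∑ j ∈ Finset.range (m+1), |w j| * (D j + |C|) :=
      Finset.sum_nonneg fun j hj => by
        have := hD j (by simpa [Nat.lt_succ_iff] using hj)
        positivity
    linarith
  filter_upwards [hC, hex, hDe'] with μ hC hex hDe
  obtain ⟨γ, hγ0, hγ⟩ := hex
  rw [hw1]
  have e1 : ∑ j ∈ Finset.range (m+1), w j •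
      ∑ i ∈ Finset.range (m+1), (((j:ℝ) * μ) ^ i / i.factorial) • LI H i (x, μ) = μ • H (x, μ) := by
    simp only [Finset.smul_sum]
    rw [Finset.sum_comm]
    have : ∀ i ∈ Finset.range (m+1), ∑ j ∈ Finset.range (m+1), w j •
        ((((j:ℝ) * μ) ^ i / i.factorial) • LI H i (x, μ)) =
        (if i = 1 then (1:ℝ) else 0) • ((μ ^ i / i.factorial) • LI H i (x, μ)) := by
      intro i hi
      rw [← hw2 i (by simpa [Nat.lt_succ_iff] using hi), Finset.sum_smul]
      refine Finset.sum_congr rfl fun j _ => ?_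
      simp only [smul_smul]
      congr 1
      rw [mul_pow]; ring
    rw [Finset.sum_congr rfl this]
    rcases m with _ | m
    · simp [hm0 rfl]
    · rw [Finset.sum_eq_single 1]
      · simp [LI_one]
      · intro i _ hi; simp [hi]
      · intro h; exfalso; apply h; simp
  rw [← e1, ← Finset.sum_sub_distrib]
  calc _ ≤ ∑ j ∈ Finset.range (m+1), |w j| * (D j + |C|) * |μ| ^ (m+1) := by
        refine norm_sum_le_of_le _ fun j hj => ?_
        rw [← smul_sub, norm_smul, Real.norm_eq_abs, mul_assoc]
        gcongr
        have h1 := hDe j hj γ hγ0 hγ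
        have h2 := hC γ hγ0 hγ j ⟨Nat.cast_nonneg j, by
          exact_mod_cast Nat.lt_succ_iff.1 (Finset.mem_range.1 hj)⟩
        have h3 : C * |μ| ^ (m+1) ≤ |C| * |μ| ^ (m+1) := by gcongr; exact le_abs_self _
        have h4 := norm_sub_le_norm_sub_add_norm_sub ((f μ)^[j] x) (γ j)
          (∑ i ∈ Finset.range (m+1), (((j:ℝ) * μ) ^ i / i.factorial) • LI H i (x, μ))
        linarith
    _ = (∑ j ∈ Finset.range (m+1), |w j| * (D j + |C|)) * |μ| ^ (m+1) := by
        rw [Finset.sum_mul]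
    _ ≤ _ := by
        gcongr; linarith

end main

/-- **Formal interpolation lemma.**
Let `f_μ : U → ℝ^s` be a family of maps, jointly analytic in `(x,μ)`, with `f₀ = id`.
There is a unique sequence of analytic functions `g_k : U → ℝ^s` (`k ≥ 1`) such that for
every `m` and `x ∈ U` the time-one map of `G_m = Σ_{k=1}^m μ^k g_k` agrees with `f_μ(x)`
up to `O(μ^{m+1})`; moreover for every `x ∈ U` and `m` there is `μ_m(x) > 0` such that
for `|μ| ≤ μ_m(x)` the iterates `f_μ^k(x)` stay in `U` for `0 ≤ k ≤ m`, and the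
interpolating vector field `X_m(x) = Σ_{k=1}^m ((−1)^{k−1}/k) Δ_k(x)` of `f_μ` satisfies
`X_m(x) = G_m(x) + O(μ^{m+1})`. -/
theorem formal_interpolation_lemma (s : ℕ) (hs : 1 ≤ s)
    (U : Set (Fin s → ℝ)) (hU : IsOpen U)
    (μbar : ℝ) (hμbar : 0 < μbar)
    (f : ℝ → (Fin s → ℝ) → (Fin s → ℝ))
    (hfa : AnalyticOnNhd ℝ (fun z : (Fin s → ℝ) × ℝ => f z.2 z.1)
      (U ×ˢ Metric.closedBall (0 : ℝ) μbar))
    (hf0 : ∀ x ∈ U, f 0 x = x) :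
    ∃ g : ℕ → (Fin s → ℝ) → (Fin s → ℝ),
      (∀ k, 1 ≤ k → AnalyticOnNhd ℝ (g k) U) ∧
      FormalInterpolation s U f g ∧
      (∀ g' : ℕ → (Fin s → ℝ) → (Fin s → ℝ),
        (∀ k, 1 ≤ k → AnalyticOnNhd ℝ (g' k) U) →
        FormalInterpolation s U f g' →
        ∀ k, 1 ≤ k → ∀ x ∈ U, g' k x = g k x) ∧
      ∀ m : ℕ, ∀ x ∈ U, ∃ μm > (0 : ℝ),
        (∀ μ : ℝ, |μ| ≤ μm → ∀ j ≤ m, (f μ)^[j] x ∈ U) ∧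
        ∃ C > (0 : ℝ), ∀ μ : ℝ, |μ| ≤ μm →
          ‖(∑ k ∈ Finset.Icc 1 m, ((-1 : ℝ) ^ (k - 1) / k) • finDiff (f μ) k x) -
            ∑ k ∈ Finset.Icc 1 m, μ ^ k • g k x‖ ≤ C * |μ| ^ (m + 1) := by
  set F : (Fin s → ℝ) × ℝ → (Fin s → ℝ) := fun z => f z.2 z.1 with hFdef
  have hF : ∀ x ∈ U, AnalyticAt ℝ F (x, 0) := fun x hx =>
    hfa (x, 0) ⟨hx, by simpa using hμbar.le⟩
  have hF0 : ∀ x ∈ U, F (x, 0) = x := hf0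
  set g : ℕ → (Fin s → ℝ) → (Fin s → ℝ) := fun k => gco F (Hs F (k-1)) (k-1) with hg
  have hHs : ∀ n, Hs F n = Hg g n := by
    intro n
    induction n with
    | zero => funext z; simp [Hs, Hg]
    | succ n ih =>
      funext z
      have e : Hg g (n+1) z = Hg g n z + z.2 ^ n • g (n+1) z.1 := by
        simp only [Hg]
        rw [Finset.sum_Icc_succ_top (by omega)]
        rfl
      rw [e, ← ih]
      rfl
  have hHa := fun n => Hs_analytic hF n
  have hE := fun n => Hs_err hU hF hF0 n
  simp only [hHs] at hHa hE
  have hga : ∀ k, 1 ≤ k → AnalyticOnNhd ℝ (g k) U := fun k _ x hx =>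
    gco_analyticAt (hF x hx) (Hs_analytic hF _ _ ⟨hx, trivial⟩) _
  have hA : ∀ n, ∀ x ∈ U, AnalyticAt ℝ (Hg g n) (x, 0) := fun n x hx => hHa n _ ⟨hx, trivial⟩
  have hUn : ∀ x ∈ U, U ×ˢ (Set.univ : Set ℝ) ∈ 𝓝 (x, (0:ℝ)) := fun x hx =>
    (hU.prod isOpen_univ).mem_nhds ⟨hx, trivial⟩
  refine ⟨g, hga, ?_, ?_, ?_⟩
  · intro m x hx
    obtain ⟨C, hC, hCe⟩ := flow_err (hA m x hx) (hE m x hx)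
    have h := (tendsto_pair x).eventually ((hCe.and (flow_exists_s8 (hA m x hx) 1 zero_le_one)).and
      (conf (hA m x hx).continuousAt 1 zero_le_one (hUn x hx)))
    obtain ⟨r, hr, hb⟩ := ev_exists h
    refine ⟨C, hC, r, hr, fun μ hμ => ?_⟩
    obtain ⟨⟨h1, γ, h2, h3⟩, h4⟩ := hb μ hμ
    refine ⟨γ, h2, fun t ht => ⟨(h4 γ h2 h3 t ht).1, ?_⟩, h1 γ h2 h3⟩
    rw [← smul_Hg]
    exact h3 t ht
  · intro g' hga' hI k
    induction k using Nat.strong_induction_on with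
    | _ k ih =>
    intro hk x hx
    obtain ⟨p, rfl⟩ : ∃ p, k = p + 1 := ⟨k - 1, by omega⟩
    have hA' := Hg_analytic hga' (p+1)
    have hcmp := LP_compare (hU.prod isOpen_univ) p (hHa (p+1)) hA'
      (w := fun z => g' (p+1) z.1 - g (p+1) z.1)
      (fun z hz => ((hga' _ hk z.1 hz.1).fun_comp analyticAt_fst).sub
        ((hga _ hk z.1 hz.1).fun_comp analyticAt_fst))
      (fun z hz => by
        simp only [Hg]
        rw [Finset.sum_Icc_succ_top (by omega), Finset.sum_Icc_succ_top (by omega),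
          Finset.sum_congr rfl (fun k hk => by
            rw [ih k (by have := (Finset.mem_Icc.1 hk).2; omega) (Finset.mem_Icc.1 hk).1
              z.1 hz.1])]
        simp only [Nat.add_sub_cancel, smul_sub]
        abel) p (x₀ := x) ⟨hx, trivial⟩
    have h1 := hcmp.comp_tendsto (tendsto_pair x)
    have h2 := (hE (p+1) x hx).comp_tendsto (tendsto_pair x)
    have h3 : (fun μ : ℝ => F (x, μ) - LP (Hg g' (p+1)) (p+1) (x, μ)) =O[𝓝 0]
        fun μ => μ ^ (p+2) := by
      obtain ⟨C, hC, r, hr, hb⟩ := hI (p+1) x hx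
      obtain ⟨C', hC'⟩ := flow_taylor (hA' (x, 0) ⟨hx, trivial⟩) 1 zero_le_one (p+2)
      refine IsBigO.of_bound (C + C') ?_
      filter_upwards [(tendsto_pair x).eventually hC', Metric.closedBall_mem_nhds (0:ℝ) hr]
        with μ h1 h2
      obtain ⟨γ, h4, h5, h6⟩ := hb μ (by simpa using h2)
      have h7 := h1 γ h4 (fun t ht => by
        simp only [smul_Hg]
        exact (h5 t ht).2) 1 (by simp)
      simp only [one_mul] at h7
      rw [norm_pow, Real.norm_eq_abs, add_mul]
      exact (norm_sub_le_norm_sub_add_norm_sub _ (γ 1) _).trans (add_le_add h6 h7)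
    have h4 := poly_zero (p+2) (fun i => if i = p+1 then g' (p+1) x - g (p+1) x else 0) (by
      refine (((h2.sub h3).sub h1).mono nhdsWithin_le_nhds).congr_left fun μ => ?_
      rw [Finset.sum_range_succ, Finset.sum_eq_zero (s := Finset.range (p+1)) (fun i hi => by
        rw [if_neg (Finset.mem_range.1 hi).ne, smul_zero])]
      simp only [Function.comp, if_true]
      abel) (p+1) (by omega)
    rw [if_pos rfl] at h4
    exact sub_eq_zero.1 h4
  · intro m x hx
    obtain ⟨C, hC, hCe⟩ := X_err (hF x hx) (hf0 x hx) (hA m x hx) (hE m x hx)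
      (by rintro rfl z; simp [Hg])
    have hit : ∀ᶠ μ in 𝓝 (0:ℝ), ∀ j ∈ Finset.range (m+1), (f μ)^[j] x ∈ U :=
      (Finset.eventually_all _).2 fun j _ =>
        (iter_tendsto (hF x hx).continuousAt (hf0 x hx) j).eventually_mem (hU.mem_nhds hx)
    obtain ⟨r, hr, hb⟩ := ev_exists (hit.and hCe)
    refine ⟨r, hr, fun μ hμ j hj => (hb μ hμ).1 j (by simpa [Nat.lt_succ_iff] using hj),
      C, hC, fun μ hμ => ?_⟩
    have := (hb μ hμ).2
    rwa [smul_Hg] at this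
end
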